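/- Mean-value property, sphere version: assume m > 4. Let a ∈ ℝ^m, r > 0, and let f ∈ C²(B(a,r)×𝔹^m, ℋ_k) extend continuously to (closed ball B̄(a,r)) × (closed unit ball), with 𝒟_k f = 0 in B(a,r) × 𝔹^m. Then for every ν ∈ 𝔹^m, f(a,ν) = (c_{m,k}/2) ∫_{𝕊^{m-1}} f(a + rζ, ζνζ) dS(ζ), where for |ζ| = 1 one has ζνζ = R_ζ(ν) = ν − 2⟨ζ,ν⟩ζ, and c_{m,k} = 2(m+2k−2)/((m−2)ω_m). -/

import Mathlib

noncomputable section

open MeasureTheory Metric Filter Topology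
open scoped RealInnerProductSpace

/-- `ℝ^m` as a Euclidean space. -/
abbrev Evec (m : ℕ) : Type := EuclideanSpace ℝ (Fin m)

/-- Partial derivative in the `i`-th coordinate direction. -/
def pdv {m : ℕ} (i : Fin m) (f : Evec m → ℝ) (x : Evec m) : ℝ :=
  fderiv ℝ f x (EuclideanSpace.single i 1)

/-- Euclidean Laplacian on `ℝ^m`. -/
def lapl {m : ℕ} (f : Evec m → ℝ) (x : Evec m) : ℝ :=
  ∑ i : Fin m, pdv i (pdv i f) x

/-- `p` is a real-valued polynomial function on `ℝ^m`, homogeneous of degree `k` and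
harmonic; i.e. `p ∈ ℋ_k`. -/
def IsHk (m k : ℕ) (p : Evec m → ℝ) : Prop :=
  (∃ P : MvPolynomial (Fin m) ℝ, ∀ x : Evec m, p x = MvPolynomial.eval (fun i => x i) P) ∧
  (∀ (c : ℝ) (x : Evec m), p (c • x) = c ^ k * p x) ∧
  (∀ x : Evec m, lapl p x = 0)

/-- The surface measure `dS` on the unit sphere `𝕊^{m-1}`, as a measure on `ℝ^m`. -/
def sphereM (m : ℕ) : Measure (Evec m) :=
  Measure.map Subtype.val ((volume : Measure (Evec m)).toSphere)

/-- `ω_m`, the surface area of the unit sphere `𝕊^{m-1}`. -/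
def omegaS (m : ℕ) : ℝ := (sphereM m Set.univ).toReal

/-- The constant `c_{m,k} = 2(m+2k-2)/((m-2)ω_m)`. -/
def cmk (m k : ℕ) : ℝ := 2 * ((m : ℝ) + 2 * k - 2) / (((m : ℝ) - 2) * omegaS m)

/-- The reflection `R_a(u) = u - 2⟨a,u⟩a/|a|²` (in Clifford notation `a u a/|a|²`). -/
def reflv {m : ℕ} (a u : Evec m) : Evec m :=
  u - (2 * ⟪a, u⟫ / ‖a‖ ^ 2) • a

/-- `dim ℋ_k`. -/
def hdim (m k : ℕ) : ℕ :=
  Nat.choose (m + k - 1) (m - 1) - Nat.choose (m + k - 3) (m - 1)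

/-- `Z` is the reproducing kernel `Z_k` of `ℋ_k` on the unit sphere: a symmetric,
rotation invariant kernel, bounded by `dim ℋ_k` on the unit ball, belonging to `ℋ_k`
in the first variable and reproducing elements of `ℋ_k` from their spherical values. -/
def IsZk (m k : ℕ) (Z : Evec m → Evec m → ℝ) : Prop :=
  (∀ v : Evec m, IsHk m k (fun u => Z u v)) ∧
  (∀ p : Evec m → ℝ, IsHk m k p → ∀ v : Evec m, (∫ u, Z u v * p u ∂(sphereM m)) = p v) ∧
  (∀ u v : Evec m, Z u v = Z v u) ∧
  (∀ u v : Evec m, ‖u‖ ≤ 1 → ‖v‖ ≤ 1 → |Z u v| ≤ (hdim m k : ℝ)) ∧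
  (∀ (A : Evec m ≃ₗᵢ[ℝ] Evec m) (u v : Evec m), Z (A u) (A v) = Z u v)

/-- The point `(x', y) ∈ ℝ^{d+1}` with first `d` coordinates `x'` and last coordinate `y`. -/
def upP (d : ℕ) (x' : Evec d) (y : ℝ) : Evec (d + 1) :=
  (EuclideanSpace.equiv (Fin (d + 1)) ℝ).symm
    (Fin.snoc (⇑(EuclideanSpace.equiv (Fin d) ℝ) x') y)

/-- The first `d` coordinates of a point of `ℝ^{d+1}`. -/
def downP (d : ℕ) (x : Evec (d + 1)) : Evec d :=
  (EuclideanSpace.equiv (Fin d) ℝ).symm (fun i => x (Fin.castSucc i))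

/-- The last coordinate of a point of `ℝ^{d+1}`. -/
def lastP (d : ℕ) (x : Evec (d + 1)) : ℝ := x (Fin.last d)

/-- The Poisson kernel `P_H` for bosonic Laplacians in the upper half-space `ℝ^{d+1}_+`,
`P_H(x,t,u,v) = c_{m,k} (y/|x-t|^m) Z_k(R_{x-t}(u), v)` with `m = d+1`, `x = (x',y)`,
`t = (t',0)`. -/
def PH (d k : ℕ) (Z : Evec (d + 1) → Evec (d + 1) → ℝ) (x' : Evec d) (y : ℝ)
    (t' : Evec d) (u v : Evec (d + 1)) : ℝ :=
  cmk (d + 1) k * (y / ‖upP d x' y - upP d t' 0‖ ^ (d + 1)) *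
    Z (reflv (upP d x' y - upP d t' 0) u) v

/-- The Poisson integral `P_H[f]` in the upper half-space. -/
def PHint (d k : ℕ) (Z : Evec (d + 1) → Evec (d + 1) → ℝ)
    (f : Evec d → Evec (d + 1) → ℝ) (x' : Evec d) (y : ℝ) (v : Evec (d + 1)) : ℝ :=
  ∫ t' : Evec d, (∫ u, PH d k Z x' y t' u v * f t' u ∂(sphereM (d + 1)))

/-- The Poisson kernel `P_B` for bosonic Laplacians in the unit ball. -/
def PB (m k : ℕ) (Z : Evec m → Evec m → ℝ) (x ζ ω ν : Evec m) : ℝ :=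
  (cmk m k / 2) * ((1 - ‖x‖ ^ 2) / ‖x - ζ‖ ^ m) * Z (reflv (x - ζ) ω) ν

/-- The Poisson integral `P_B[h]` in the unit ball. -/
def PBint (m k : ℕ) (Z : Evec m → Evec m → ℝ) (h : Evec m → Evec m → ℝ)
    (x ν : Evec m) : ℝ :=
  ∫ ζ, (∫ ω, PB m k Z x ζ ω ν * h ζ ω ∂(sphereM m)) ∂(sphereM m)

/-- Partial derivative in the first (`x`) variable. -/
def pd1 {m : ℕ} (i : Fin m) (f : Evec m → Evec m → ℝ) : Evec m → Evec m → ℝ :=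
  fun x u => fderiv ℝ (fun x₁ => f x₁ u) x (EuclideanSpace.single i 1)

/-- Partial derivative in the second (`u`) variable. -/
def pd2 {m : ℕ} (i : Fin m) (f : Evec m → Evec m → ℝ) : Evec m → Evec m → ℝ :=
  fun x u => fderiv ℝ (fun u₁ => f x u₁) u (EuclideanSpace.single i 1)

/-- The bosonic Laplacian `𝒟_k`. -/
def Dk (m k : ℕ) (f : Evec m → Evec m → ℝ) : Evec m → Evec m → ℝ := fun x u =>
  (∑ i : Fin m, pd1 i (pd1 i f) x u)
    - (4 / ((m : ℝ) + 2 * k - 2)) *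
        ∑ i : Fin m, ∑ j : Fin m, u i * pd1 i (pd2 j (pd1 j f)) x u
    + (4 * ‖u‖ ^ 2 / (((m : ℝ) + 2 * k - 2) * ((m : ℝ) + 2 * k - 4))) *
        ∑ i : Fin m, ∑ j : Fin m, pd2 i (pd1 i (pd2 j (pd1 j f))) x u

/-- `f ∈ C²(Ω×𝔹^m, ℋ_k)`: twice continuously differentiable on `Ω × 𝔹^m` and, for each
fixed `x ∈ Ω`, coinciding in the second variable with an element of `ℋ_k`. -/
def C2Hk (m k : ℕ) (Ω : Set (Evec m)) (f : Evec m → Evec m → ℝ) : Prop :=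
  ContDiffOn ℝ 2 (fun q : Evec m × Evec m => f q.1 q.2) (Ω ×ˢ ball (0 : Evec m) 1) ∧
  ∀ x ∈ Ω, ∃ q, IsHk m k q ∧ ∀ u ∈ closedBall (0 : Evec m) 1, f x u = q u

/-- The `L^p` norm `(∫_{ℝ^{m-1}} ∫_{𝕊^{m-1}} |f(x',u)|^p dS(u) dx')^{1/p}` (`m = d+1`),
valued in `ℝ≥0∞`. -/
def lpH (d : ℕ) (p : ℝ) (f : Evec d → Evec (d + 1) → ℝ) : ENNReal :=
  (∫⁻ x' : Evec d, ∫⁻ u, ENNReal.ofReal (|f x' u| ^ p) ∂(sphereM (d + 1))) ^ (1 / p)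

/-- `f ∈ L^p(ℝ^{m-1}×𝔹^m, ℋ_k)` (`m = d+1`). -/
def MemLpH (d k : ℕ) (p : ℝ) (f : Evec d → Evec (d + 1) → ℝ) : Prop :=
  Measurable (fun q : Evec d × Evec (d + 1) => f q.1 q.2) ∧
  (∀ x' : Evec d, ∃ q, IsHk (d + 1) k q ∧
    ∀ u ∈ closedBall (0 : Evec (d + 1)) 1, f x' u = q u) ∧
  lpH d p f < ⊤

/-- The `L^p` norm `(∫_{𝕊^{m-1}} ∫_{𝕊^{m-1}} |h(ζ,ω)|^p dS(ω) dS(ζ))^{1/p}`,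
valued in `ℝ≥0∞`. -/
def lpS (m : ℕ) (p : ℝ) (h : Evec m → Evec m → ℝ) : ENNReal :=
  (∫⁻ ζ, ∫⁻ ω, ENNReal.ofReal (|h ζ ω| ^ p) ∂(sphereM m) ∂(sphereM m)) ^ (1 / p)

/-- `h ∈ L^p(𝕊^{m-1}×𝔹^m, ℋ_k)`. -/
def MemLpS (m k : ℕ) (p : ℝ) (h : Evec m → Evec m → ℝ) : Prop :=
  Measurable (fun q : Evec m × Evec m => h q.1 q.2) ∧
  (∀ ζ : Evec m, ‖ζ‖ = 1 → ∃ q, IsHk m k q ∧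
    ∀ ω ∈ closedBall (0 : Evec m) 1, h ζ ω = q ω) ∧
  lpS m p h < ⊤

/-- Iterated partial derivative `D_x^α` in the first variable, for a multi-index `α ∈ ℕ^m`. -/
def Dx {m : ℕ} (α : Fin m → ℕ) (f : Evec m → Evec m → ℝ) : Evec m → Evec m → ℝ :=
  (List.finRange m).foldr (fun i g => (pd1 i)^[α i] g) f

/-- Iterated partial derivative `D_ν^β` in the second variable, for a multi-index `β ∈ ℕ^m`. -/
def Dv {m : ℕ} (β : Fin m → ℕ) (f : Evec m → Evec m → ℝ) : Evec m → Evec m → ℝ :=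
  (List.finRange m).foldr (fun i g => (pd2 i)^[β i] g) f

namespace BosonicMV

section CoeffDer

open MvPolynomial

variable {σ R : Type*} [CommRing R]

/-- The map on polynomials acting by an additive map on all coefficients. -/
def coeffMap (d : R →+ R) : MvPolynomial σ R →+ MvPolynomial σ R where
  toFun := AddMonoidAlgebra.map d
  map_zero' := by ext; simp
  map_add' p q := by ext; simp

lemma coeff_coeffMap (d : R →+ R) (p : MvPolynomial σ R) (s : σ →₀ ℕ) :
    coeff s (coeffMap d p) = d (coeff s p) := rfl

lemma coeffMap_monomial (d : R →+ R) (s : σ →₀ ℕ) (a : R) :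
    coeffMap d (monomial s a) = monomial s (d a) := by
  classical
  ext t
  rw [coeff_coeffMap, coeff_monomial, coeff_monomial]
  split_ifs <;> simp

lemma coeffMap_X_mul (d : R →+ R) (i : σ) (p : MvPolynomial σ R) :
    coeffMap d (X i * p) = X i * coeffMap d p := by
  classical
  ext t
  rw [coeff_coeffMap, coeff_X_mul', coeff_X_mul']
  split_ifs <;> simp [coeff_coeffMap]

lemma coeffMap_pderiv (d : R →+ R) (i : σ) (p : MvPolynomial σ R) :
    coeffMap d (pderiv i p) = pderiv i (coeffMap d p) := by
  induction p using MvPolynomial.induction_on' with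
  | monomial s a =>
    rw [coeffMap_monomial, pderiv_monomial, pderiv_monomial, coeffMap_monomial]
    congr 1
    rw [mul_comm a, mul_comm (d a), ← nsmul_eq_mul, map_nsmul, nsmul_eq_mul]
  | add p q hp hq => simp only [map_add, hp, hq]

lemma pderiv_comm (i j : σ) (p : MvPolynomial σ R) :
    pderiv i (pderiv j p) = pderiv j (pderiv i p) := by
  classical
  ext t
  simp only [coeff_pderiv]
  rcases eq_or_ne i j with rfl | h
  · rfl
  · rw [add_right_comm]
    simp [h, h.symm]
    ring

lemma coeffMap_comm (d d' : R →+ R) (h : ∀ a, d (d' a) = d' (d a)) (p : MvPolynomial σ R) :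
    coeffMap d (coeffMap d' p) = coeffMap d' (coeffMap d p) := by
  ext t
  simp only [coeff_coeffMap, h]

/-- Chain rule for evaluating a polynomial with variable coefficients at a variable point. -/
lemma derivation_eval [Fintype σ] (d : Derivation ℤ R R) (y : σ → R) (p : MvPolynomial σ R) :
    d (eval y p) = eval y (coeffMap (d : R →+ R) p) + ∑ j, d (y j) * eval y (pderiv j p) := by
  classical
  induction p using MvPolynomial.induction_on with
  | C a =>
    simp only [eval_C, pderiv_C, map_zero, mul_zero, Finset.sum_const_zero, add_zero]
    rw [C_apply, coeffMap_monomial, ← C_apply, eval_C]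
    rfl
  | add p q hp hq =>
    simp only [map_add, hp, hq, mul_add, Finset.sum_add_distrib]
    ring
  | mul_X p i hp =>
    rw [mul_comm p, coeffMap_X_mul]
    simp only [map_mul, eval_X, Derivation.leibniz, smul_eq_mul, hp, map_add, pderiv_X, mul_add,
      Finset.sum_add_distrib]
    have : ∑ j, d (y j) * (eval y p * eval y (Pi.single (M := fun _ => MvPolynomial σ R) j 1 i))
        = eval y p * d (y i) := by
      rw [Finset.sum_eq_single i]
      · simp; ring
      · intro b _ hb; simp [hb.symm]
      · simp
    rw [this, Finset.mul_sum]
    have h2 : ∑ j, y i * (d (y j) * eval y (pderiv j p))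
      = ∑ j, d (y j) * (y i * eval y (pderiv j p)) :=
        Finset.sum_congr rfl fun j _ => by ring
    rw [h2]; ring

end CoeffDer

section Algebra

open MvPolynomial

/-- A commutative ring with commuting partial derivatives, coordinates, and a constant
null vector. -/
structure NullFrame (m : ℕ) (R : Type*) [CommRing R] where
  d : Fin m → Derivation ℤ R R
  x : Fin m → R
  ν : Fin m → R
  d_x : ∀ i j, d i (x j) = if i = j then 1 else 0
  d_ν : ∀ i j, d i (ν j) = 0
  d_comm : ∀ i j a, d i (d j a) = d j (d i a)
  null : ∑ i, ν i * ν i = 0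

namespace NullFrame

variable {m : ℕ} {R : Type*} [CommRing R] (T : NullFrame m R)

/-- The squared radius. -/
def rsq : R := ∑ i, T.x i * T.x i
/-- The pairing of the null vector with the position. -/
def ell : R := ∑ i, T.ν i * T.x i
/-- The (scaled) reflection of the null vector in the position vector. -/
def y (j : Fin m) : R := T.rsq * T.ν j - 2 * T.ell * T.x j
/-- The Euler derivation. -/
def eul : Derivation ℤ R R := ∑ i, T.x i • T.d i
/-- The derivative in the direction of the null vector. -/
def dn : Derivation ℤ R R := ∑ i, T.ν i • T.d i
/-- Evaluation at the reflected null vector. -/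
def ev : MvPolynomial (Fin m) R →+* R := eval T.y
/-- Coefficientwise partial derivative. -/
def pd (i : Fin m) : MvPolynomial (Fin m) R →+ MvPolynomial (Fin m) R :=
  coeffMap (T.d i : R →+ R)
/-- Evaluated derivative in the direction of the null vector. -/
def brn (h : MvPolynomial (Fin m) R) : R := ∑ j, T.ν j * T.ev (pderiv j h)
/-- Evaluated derivative in the direction of the position. -/
def brr (h : MvPolynomial (Fin m) R) : R := ∑ j, T.x j * T.ev (pderiv j h)
/-- The mixed divergence. -/
def dvg (h : MvPolynomial (Fin m) R) : MvPolynomial (Fin m) R := ∑ i, T.pd i (pderiv i h)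
/-- The mixed gradient. -/
def grd (h : MvPolynomial (Fin m) R) : MvPolynomial (Fin m) R := ∑ i, X i * T.pd i h
/-- The coefficientwise Laplacian. -/
def lap (h : MvPolynomial (Fin m) R) : MvPolynomial (Fin m) R := ∑ i, T.pd i (T.pd i h)

lemma eul_apply (w : R) : T.eul w = ∑ i, T.x i * T.d i w := by
  rw [eul, ← Derivation.coeFnAddMonoidHom_apply, map_sum, Finset.sum_apply]
  rfl

lemma dn_apply (w : R) : T.dn w = ∑ i, T.ν i * T.d i w := by
  rw [dn, ← Derivation.coeFnAddMonoidHom_apply, map_sum, Finset.sum_apply]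
  rfl

lemma d_ell (i : Fin m) : T.d i T.ell = T.ν i := by
  simp [ell, Derivation.leibniz, T.d_x, T.d_ν]

lemma d_rsq (i : Fin m) : T.d i T.rsq = 2 * T.x i := by
  simp [rsq, Derivation.leibniz, T.d_x, Finset.sum_add_distrib]
  ring

lemma d_two (i : Fin m) : T.d i 2 = 0 := by
  have := (T.d i).map_natCast 2
  simpa using this

lemma d_y (i j : Fin m) : T.d i (T.y j)
    = 2 * T.x i * T.ν j - 2 * T.ν i * T.x j - 2 * T.ell * (if i = j then 1 else 0) := by
  simp only [y, map_sub, Derivation.leibniz, smul_eq_mul, d_rsq, d_ell, d_x, d_ν, d_two]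
  ring

lemma sum_d_y_mul (i : Fin m) (G : Fin m → R) : ∑ j, T.d i (T.y j) * G j
    = 2 * T.x i * (∑ j, T.ν j * G j) - 2 * T.ν i * (∑ j, T.x j * G j) - 2 * T.ell * G i := by
  simp only [d_y, sub_mul, Finset.sum_sub_distrib, Finset.mul_sum]
  congr 1
  · congr 1 <;> exact Finset.sum_congr rfl fun _ _ => by ring
  · simp [mul_assoc]

lemma d_ev (i : Fin m) (h : MvPolynomial (Fin m) R) : T.d i (T.ev h)
    = T.ev (T.pd i h) + 2 * T.x i * T.brn h - 2 * T.ν i * T.brr h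
      - 2 * T.ell * T.ev (pderiv i h) := by
  rw [ev, derivation_eval, sum_d_y_mul, pd, brn, brr, ev]
  ring

lemma dn_ev (h : MvPolynomial (Fin m) R) :
    T.dn (T.ev h) = ∑ i, T.ν i * T.ev (T.pd i h) := by
  have h1 : T.dn (T.ev h) = ∑ i, T.ν i * T.ev (T.pd i h) + 2 * T.brn h * (∑ i, T.ν i * T.x i)
      - 2 * T.brr h * (∑ i, T.ν i * T.ν i)
      - 2 * T.ell * (∑ j, T.ν j * T.ev (pderiv j h)) := by
    rw [dn_apply]
    simp only [d_ev, Finset.mul_sum, ← Finset.sum_add_distrib, ← Finset.sum_sub_distrib]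
    refine Finset.sum_congr rfl fun i _ => ?_
    ring
  rw [h1, T.null, ← ell, ← brn]; ring

/-- `h` has degree `K` in the polynomial variables. -/
def HasDeg (K : ℤ) (h : MvPolynomial (Fin m) R) : Prop :=
  ∑ i, X i * pderiv i h = (K : MvPolynomial (Fin m) R) * h

lemma rsq_brn {K : ℤ} {h : MvPolynomial (Fin m) R} (hK : HasDeg K h) :
    T.rsq * T.brn h = K * T.ev h + 2 * T.ell * T.brr h := by
  have h1 := congrArg T.ev hK
  simp only [map_sum, map_mul, map_intCast] at h1
  rw [← h1, brn, brr, Finset.mul_sum, Finset.mul_sum, ← Finset.sum_add_distrib]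
  refine Finset.sum_congr rfl fun i _ => ?_
  have : T.ev (X i) = T.y i := by simp [ev]
  rw [this, y]; ring

lemma eul_ev {K : ℤ} {h : MvPolynomial (Fin m) R} (hK : HasDeg K h) :
    T.eul (T.ev h) = ∑ i, T.x i * T.ev (T.pd i h) + 2 * K * T.ev h := by
  have h1 : T.eul (T.ev h) = ∑ i, T.x i * T.ev (T.pd i h) + 2 * T.brn h * (∑ i, T.x i * T.x i)
      - 2 * T.brr h * (∑ i, T.ν i * T.x i)
      - 2 * T.ell * (∑ j, T.x j * T.ev (pderiv j h)) := by
    rw [eul_apply]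
    simp only [d_ev, Finset.mul_sum, ← Finset.sum_add_distrib, ← Finset.sum_sub_distrib]
    refine Finset.sum_congr rfl fun i _ => ?_
    ring
  rw [h1, ← ell, ← brr, ← rsq]
  linear_combination 2 * T.rsq_brn hK

lemma hasDeg_pderiv {K : ℤ} {h : MvPolynomial (Fin m) R} (hK : HasDeg K h) (j : Fin m) :
    HasDeg (K - 1) (pderiv j h) := by
  classical
  have h1 := congrArg (pderiv j) hK
  have hc : (K : MvPolynomial (Fin m) R) = C (K : R) := by simp
  rw [hc, pderiv_C_mul, ← hc] at h1
  simp only [map_sum, Derivation.leibniz, smul_eq_mul, pderiv_X, Finset.sum_add_distrib] at h1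
  have h2 : ∑ i, pderiv i h * (Pi.single (M := fun _ => MvPolynomial (Fin m) R) j 1 i)
      = pderiv j h := by
    rw [Finset.sum_eq_single j]
    · simp
    · intro b _ hb; simp [hb]
    · simp
  rw [h2] at h1
  unfold HasDeg
  simp only [pderiv_comm _ j]
  push_cast
  linear_combination h1

lemma sum_d_ev_pderiv {h : MvPolynomial (Fin m) R} (hh : ∑ i, pderiv i (pderiv i h) = 0) :
    ∑ i, T.d i (T.ev (pderiv i h)) = T.ev (T.dvg h) := by
  have h1 : ∑ i, T.d i (T.ev (pderiv i h)) = T.ev (T.dvg h)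
      + 2 * (∑ i, T.x i * T.brn (pderiv i h)) - 2 * (∑ i, T.ν i * T.brr (pderiv i h))
      - 2 * T.ell * T.ev (∑ i, pderiv i (pderiv i h)) := by
    simp only [d_ev, dvg, map_sum, Finset.mul_sum, ← Finset.sum_add_distrib,
      ← Finset.sum_sub_distrib]
    exact Finset.sum_congr rfl fun i _ => by ring
  have h2 : ∑ i, T.x i * T.brn (pderiv i h) = ∑ i, T.ν i * T.brr (pderiv i h) := by
    simp only [brn, brr, Finset.mul_sum]
    rw [Finset.sum_comm]
    refine Finset.sum_congr rfl fun i _ => Finset.sum_congr rfl fun j _ => ?_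
    rw [pderiv_comm i j]; ring
  rw [h1, h2, hh, map_zero]; ring

lemma pd_pderiv (i j : Fin m) (h : MvPolynomial (Fin m) R) :
    T.pd i (pderiv j h) = pderiv j (T.pd i h) := coeffMap_pderiv _ _ _

lemma dn_ell : T.dn T.ell = 0 := by
  rw [dn_apply]; simp only [d_ell]; exact T.null

lemma eul_ell : T.eul T.ell = T.ell := by
  rw [eul_apply]; simp only [d_ell]; exact Finset.sum_congr rfl fun i _ => by ring

lemma eul_rsq : T.eul T.rsq = 2 * T.rsq := by
  rw [eul_apply, rsq, Finset.mul_sum, ← rsq]; simp only [d_rsq]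
  exact Finset.sum_congr rfl fun i _ => by ring

lemma dn_rsq : T.dn T.rsq = 2 * T.ell := by
  rw [dn_apply, ell, Finset.mul_sum]; simp only [d_rsq]
  exact Finset.sum_congr rfl fun i _ => by ring

lemma dn_x (j : Fin m) : T.dn (T.x j) = T.ν j := by
  rw [dn_apply]; simp [T.d_x]

lemma eul_ν (j : Fin m) : T.eul (T.ν j) = 0 := by
  rw [eul_apply]; simp [T.d_ν]

lemma sum_x_brn_pd {K : ℤ} {h : MvPolynomial (Fin m) R} (hK : HasDeg K h) :
    ∑ i, T.x i * T.brn (T.pd i h) = T.eul (T.brn h) - 2 * (K - 1) * T.brn h := by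
  have h1 : ∀ j, T.eul (T.ev (pderiv j h)) = ∑ i, T.x i * T.ev (T.pd i (pderiv j h))
      + 2 * (K - 1) * T.ev (pderiv j h) := fun j => by
    have := T.eul_ev (hasDeg_pderiv hK j)
    push_cast at this; exact this
  have h2 : T.eul (T.brn h) = ∑ j, T.ν j * T.eul (T.ev (pderiv j h)) := by
    simp [brn, Derivation.leibniz, eul_ν]
  rw [h2]
  simp only [h1, brn, Finset.mul_sum, mul_add, Finset.sum_add_distrib]
  rw [Finset.sum_comm]
  simp only [pd_pderiv]
  rw [add_sub_assoc, ← Finset.sum_sub_distrib]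
  rw [Finset.sum_eq_zero (s := Finset.univ) (f := fun x => _ - _) (fun i _ => by ring), add_zero]
  exact Finset.sum_congr rfl fun i _ => Finset.sum_congr rfl fun j _ => by ring

lemma sum_ν_brr_pd (h : MvPolynomial (Fin m) R) :
    ∑ i, T.ν i * T.brr (T.pd i h) = T.dn (T.brr h) - T.brn h := by
  have h2 : T.dn (T.brr h) = ∑ j, T.x j * T.dn (T.ev (pderiv j h)) + T.brn h := by
    simp only [brr, brn, map_sum, Derivation.leibniz, smul_eq_mul, dn_x, Finset.sum_add_distrib]
    congr 1
    exact Finset.sum_congr rfl fun i _ => by ring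
  rw [h2, add_sub_cancel_right]
  simp only [dn_ev, brr, Finset.mul_sum]
  rw [Finset.sum_comm]
  simp only [pd_pderiv]
  exact Finset.sum_congr rfl fun i _ => Finset.sum_congr rfl fun j _ => by ring

/-- Laplacian of an evaluated polynomial. -/
lemma lap_ev {K : ℤ} {h : MvPolynomial (Fin m) R} (hK : HasDeg K h)
    (hh : ∑ i, pderiv i (pderiv i h) = 0) :
    ∑ i, T.d i (T.d i (T.ev h)) = T.ev (T.lap h) + 4 * T.eul (T.brn h) - 4 * T.dn (T.brr h)
      - 4 * T.ell * T.ev (T.dvg h) + (2 * m - 4 * K + 4) * T.brn h := by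
  have h1 : ∑ i, T.d i (T.d i (T.ev h)) = T.ev (T.lap h)
      + 2 * (∑ i, T.x i * T.brn (T.pd i h)) - 2 * (∑ i, T.ν i * T.brr (T.pd i h))
      - 2 * T.ell * T.ev (T.dvg h) + (∑ _i : Fin m, 2 * T.brn h) + 2 * T.eul (T.brn h)
      - 2 * T.dn (T.brr h) - 2 * T.brn h
      - 2 * T.ell * (∑ i, T.d i (T.ev (pderiv i h))) := by
    rw [eul_apply, dn_apply]
    conv_rhs => enter [1, 2]; rw [brn]
    simp only [lap, dvg, map_sum, Finset.mul_sum, ← Finset.sum_add_distrib,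
      ← Finset.sum_sub_distrib]
    refine Finset.sum_congr rfl fun i _ => ?_
    rw [d_ev, map_sub, map_sub, map_add, d_ev, pd_pderiv]
    simp only [Derivation.leibniz, smul_eq_mul, d_x, d_ν, d_ell, d_two, if_true]
    ring
  rw [h1, sum_x_brn_pd T hK, sum_ν_brr_pd, sum_d_ev_pderiv T hh]
  simp only [Finset.sum_const, Finset.card_univ, Fintype.card_fin, nsmul_eq_mul]
  ring

lemma ev_grd {K : ℤ} {h : MvPolynomial (Fin m) R} (hK : HasDeg K h) :
    T.ev (T.grd h) = T.rsq * T.dn (T.ev h)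
      - 2 * T.ell * (T.eul (T.ev h) - 2 * K * T.ev h) := by
  rw [T.eul_ev hK, dn_ev, add_sub_cancel_right, grd, map_sum, Finset.mul_sum, Finset.mul_sum,
    ← Finset.sum_sub_distrib]
  refine Finset.sum_congr rfl fun i _ => ?_
  have : T.ev (X i) = T.y i := by simp [ev]
  rw [map_mul, this, y]; ring

section Functional

/-- The additive subgroup `N` contains the elements of integral zero over spheres. -/
def SphereNull (N : AddSubgroup R) : Prop :=
  ∀ i w, T.rsq * T.d i w - T.eul (T.x i * w) - ((m : R) - 2) * (T.x i * w) ∈ N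

variable {N : AddSubgroup R}

lemma div_mem (hN : T.SphereNull N) (F : Fin m → R) : T.rsq * ∑ i, T.d i (F i) - T.eul (∑ i, T.x i * F i)
    - ((m : R) - 2) * (∑ i, T.x i * F i) ∈ N := by
  rw [map_sum, Finset.mul_sum, Finset.mul_sum, ← Finset.sum_sub_distrib, ← Finset.sum_sub_distrib]
  exact sum_mem fun i _ => hN i (F i)

lemma dn_mem (hN : T.SphereNull N) (w : R) : T.rsq * T.dn w - T.eul (T.ell * w) - ((m : R) - 2) * (T.ell * w) ∈ N := by
  have := T.div_mem hN fun i => T.ν i * w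
  have h1 : ∑ i, T.d i (T.ν i * w) = T.dn w := by
    simp [dn_apply, Derivation.leibniz, T.d_ν]
  have h2 : ∑ i, T.x i * (T.ν i * w) = T.ell * w := by
    rw [ell, Finset.sum_mul]; exact Finset.sum_congr rfl fun i _ => by ring
  rwa [h1, h2] at this

lemma lap_mem (hN : T.SphereNull N) (w : R) : T.rsq * (∑ i, T.d i (T.d i w)) - T.eul (T.eul w)
    - ((m : R) - 2) * T.eul w ∈ N := by
  have := T.div_mem hN fun i => T.d i w
  rwa [← eul_apply] at this

lemma eqB_mem (hN : T.SphereNull N) {K : ℤ} {h : MvPolynomial (Fin m) R} (hK : HasDeg K h)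
    (hh : ∑ i, pderiv i (pderiv i h) = 0) (e : ℕ) :
    T.eul (T.ell ^ (e + 1) * T.brr h) + ((m : R) - 4 - 2 * e) * (T.ell ^ (e + 1) * T.brr h)
      - (e + 1) * K * (T.ell ^ e * T.ev h) - T.rsq * (T.ell ^ (e + 1) * T.ev (T.dvg h)) ∈ N := by
  have h0 := T.div_mem hN fun i => T.ell ^ (e + 1) * T.ev (pderiv i h)
  have h1 : ∑ i, T.d i (T.ell ^ (e + 1) * T.ev (pderiv i h))
      = (e + 1) * T.ell ^ e * T.brn h + T.ell ^ (e + 1) * T.ev (T.dvg h) := by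
    rw [← sum_d_ev_pderiv T hh, brn, Finset.mul_sum, Finset.mul_sum, ← Finset.sum_add_distrib]
    refine Finset.sum_congr rfl fun i _ => ?_
    rw [Derivation.leibniz, Derivation.leibniz_pow, d_ell]
    simp only [smul_eq_mul, nsmul_eq_mul, Nat.add_sub_cancel]
    push_cast; ring
  have h2 : ∑ i, T.x i * (T.ell ^ (e + 1) * T.ev (pderiv i h)) = T.ell ^ (e + 1) * T.brr h := by
    rw [brr, Finset.mul_sum]; exact Finset.sum_congr rfl fun i _ => by ring
  rw [h1, h2] at h0
  have h3 := neg_mem h0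
  convert h3 using 1
  linear_combination ((e : R) + 1) * T.ell ^ e * T.rsq_brn hK

lemma intCast_mul_mem {a : R} (n : ℤ) (ha : a ∈ N) : (n : R) * a ∈ N := by
  rw [← zsmul_eq_mul]; exact zsmul_mem ha n

lemma eqA_mem (hN : T.SphereNull N) {K : ℤ} {h : MvPolynomial (Fin m) R} (hK : HasDeg K h)
    (hh : ∑ i, pderiv i (pderiv i h) = 0) (hK' : HasDeg (K - 1) (T.dvg h)) (e : ℕ)
    (hQ : ((m : R) + 2 * K - 2) * (T.rsq * (T.ell ^ e * T.ev (T.lap h)))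
      - 4 * (T.rsq * (T.ell ^ e * T.ev (T.grd (T.dvg h)))) ∈ N) (w v w' Y : R)
    (hw : w = T.ell ^ e * T.ev h) (hv : v = T.ell ^ (e + 1) * T.brr h)
    (hw' : w' = T.ell ^ (e + 1) * T.ev (T.dvg h))
    (hY : Y = ((m : R) + 2 * K - 2) * (T.eul w + ((m : R) - 2 - 2 * K) * w - 4 * v)
      + 4 * (T.rsq * w')) :
    T.eul Y - (2 * K + 2 * e) * Y ∈ N := by
  have hell : ∀ n : ℕ, T.eul (T.ell ^ n) = n * T.ell ^ n := by
    intro n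
    induction n with
    | zero => simp
    | succ n ih =>
      rw [pow_succ, Derivation.leibniz, ih, eul_ell]; push_cast; simp only [smul_eq_mul]; ring
  have hdell : ∀ n : ℕ, T.dn (T.ell ^ n) = 0 := by
    intro n; rw [Derivation.leibniz_pow, dn_ell]; simp
  have hcast : ∀ (n : ℤ) (a : R), T.eul ((n : R) * a) = n * T.eul a := by
    intro n a; rw [← zsmul_eq_mul, map_zsmul, zsmul_eq_mul]
  -- the four elements of the kernel
  have a1 := T.lap_mem hN w
  have a2 := T.dn_mem hN (T.ell ^ e * T.brr h)
  have a4 := T.dn_mem hN (T.rsq * (T.ell ^ e * T.ev (T.dvg h)))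
  have a3 : 2 * (e : R) * (T.ell ^ (e - 1) * (T.rsq * T.dn (T.ev h)))
      - 2 * e * (T.eul w + ((m : R) - 2) * w) ∈ N := by
    rcases e with _ | e
    · simp
    · have := intCast_mul_mem (2 * (e + 1 : ℤ)) (T.dn_mem hN (T.ell ^ e * T.ev h))
      have e1 : T.ell * (T.ell ^ e * T.ev h) = w := by rw [hw]; ring
      rw [e1, Derivation.leibniz, hdell] at this
      convert this using 1
      simp only [smul_eq_mul]; push_cast; ring
  have hlapw : ∑ i, T.d i (T.d i w) = T.ell ^ e * (∑ i, T.d i (T.d i (T.ev h)))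
      + 2 * e * (T.ell ^ (e - 1) * T.dn (T.ev h)) := by
    have : ∀ i, T.d i (T.d i w) = T.ell ^ e * (T.d i (T.d i (T.ev h)))
      + 2 * e * (T.ell ^ (e - 1) * (T.ν i * T.d i (T.ev h)))
      + e * ((e - 1 : ℕ) * T.ell ^ (e - 1 - 1) * T.ev h) * (T.ν i * T.ν i) := by
      intro i
      rw [hw]
      simp only [Derivation.leibniz, Derivation.leibniz_pow, smul_eq_mul, nsmul_eq_mul, d_ell,
        d_ν, map_add, Derivation.map_natCast]
      ring
    simp only [this, Finset.sum_add_distrib, ← Finset.mul_sum]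
    rw [T.null, dn_apply]; ring
  have k1 : ((m : R) + 2 * K - 2) = (((m : ℤ) + 2 * K - 2 : ℤ) : R) := by push_cast; ring
  have b1 := intCast_mul_mem (-((m : ℤ) + 2 * K - 2)) a1
  have b2 := intCast_mul_mem (-4 * ((m : ℤ) + 2 * K - 2)) a2
  have b3 := intCast_mul_mem ((m : ℤ) + 2 * K - 2) a3
  have b4 := intCast_mul_mem 4 a4
  have key := add_mem (add_mem (add_mem (add_mem b1 b2) b3) b4) hQ
  have hB := T.rsq_brn hK
  have hEB := congrArg T.eul hB
  have hc2 : ∀ a : R, T.eul (2 * a) = 2 * T.eul a := fun a => by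
    have := hcast 2 a; push_cast at this; exact this
  have hc4 : ∀ a : R, T.eul (4 * a) = 4 * T.eul a := fun a => by
    have := hcast 4 a; push_cast at this; exact this
  have hcm : ∀ a : R, T.eul (((m : R) - 2 - 2 * K) * a) = ((m : R) - 2 - 2 * K) * T.eul a :=
    fun a => by
    have := hcast ((m : ℤ) - 2 - 2 * K) a; push_cast at this; exact this
  have hcp : ∀ a : R, T.eul (((m : R) + 2 * K - 2) * a) = ((m : R) + 2 * K - 2) * T.eul a :=
    fun a => by rw [k1, hcast]
  rw [map_add, mul_assoc 2, hc2, hcast] at hEB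
  simp only [Derivation.leibniz, smul_eq_mul, eul_rsq, eul_ell] at hEB
  have hEw : T.eul w = T.ell ^ e * T.eul (T.ev h) + e * T.ell ^ e * T.ev h := by
    rw [hw, Derivation.leibniz, hell]; simp only [smul_eq_mul]; ring
  have hEY : T.eul Y = ((m : R) + 2 * K - 2) * (T.eul (T.eul w) + ((m : R) - 2 - 2 * K) * T.eul w
      - 4 * T.eul v) + 4 * (T.rsq * T.eul w' + 2 * T.rsq * w') := by
    rw [hY, map_add, hcp, map_sub, map_add, hcm, hc4, hc4, Derivation.leibniz, eul_rsq]
    simp only [smul_eq_mul]; ring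
  have hEw' : T.eul w' = T.ell ^ (e + 1) * T.eul (T.ev (T.dvg h))
      + (e + 1) * T.ell ^ (e + 1) * T.ev (T.dvg h) := by
    rw [hw', Derivation.leibniz, hell]; push_cast; simp only [smul_eq_mul]; ring
  have hEv : T.eul v = T.ell ^ (e + 1) * T.eul (T.brr h)
      + (e + 1) * T.ell ^ (e + 1) * T.brr h := by
    rw [hv, Derivation.leibniz, hell]; push_cast; simp only [smul_eq_mul]; ring
  convert key using 1
  rw [hlapw, T.lap_ev hK hh, T.ev_grd hK', hEY, hY]
  generalize T.eul (T.eul w) = EEw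
  rw [hEw, hEv, hEw', hw, hv, hw']
  simp only [Derivation.leibniz, hdell, hell, eul_rsq, eul_ell, dn_rsq, smul_eq_mul]
  push_cast
  linear_combination ((m : R) + 2 * K - 2) * T.ell ^ e * (4 * hEB + (2 * m - 4 * K - 4) * hB)

end Functional

end NullFrame
end Algebra

section Algebra2

open MvPolynomial

namespace NullFrame

variable {m : ℕ} {R : Type*} [CommRing R] (T : NullFrame m R)

/-- The squared length of the polynomial variable. -/
def usq : MvPolynomial (Fin m) R := ∑ i, X i * X i

lemma dvg_add (p q : MvPolynomial (Fin m) R) : T.dvg (p + q) = T.dvg p + T.dvg q := by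
  simp [dvg, Finset.sum_add_distrib]

lemma dvg_sub (p q : MvPolynomial (Fin m) R) : T.dvg (p - q) = T.dvg p - T.dvg q := by
  simp [dvg, Finset.sum_sub_distrib]

lemma dvg_intCast_mul (n : ℤ) (p : MvPolynomial (Fin m) R) :
    T.dvg ((n : MvPolynomial (Fin m) R) * p) = n * T.dvg p := by
  simp only [dvg, ← zsmul_eq_mul, map_zsmul, Finset.smul_sum]

lemma pd_comm (i j : Fin m) (p : MvPolynomial (Fin m) R) :
    T.pd i (T.pd j p) = T.pd j (T.pd i p) := coeffMap_comm _ _ (T.d_comm i j) p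

lemma pd_X_mul (i j : Fin m) (p : MvPolynomial (Fin m) R) :
    T.pd i (X j * p) = X j * T.pd i p := coeffMap_X_mul _ _ _

lemma dvg_pd (i : Fin m) (p : MvPolynomial (Fin m) R) : T.dvg (T.pd i p) = T.pd i (T.dvg p) := by
  simp only [dvg, map_sum, ← pd_pderiv]
  exact Finset.sum_congr rfl fun j _ => T.pd_comm _ _ _

lemma dvg_lap (p : MvPolynomial (Fin m) R) : T.dvg (T.lap p) = T.lap (T.dvg p) := by
  have : ∀ s : Finset (Fin m), T.dvg (∑ i ∈ s, T.pd i (T.pd i p))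
      = ∑ i ∈ s, T.pd i (T.pd i (T.dvg p)) := by
    classical
    intro s
    induction s using Finset.induction_on with
    | empty => simp [dvg]
    | insert a s ha ih => rw [Finset.sum_insert ha, Finset.sum_insert ha, dvg_add, ih, dvg_pd, dvg_pd]
  exact this _

lemma dvg_X_mul (i : Fin m) (p : MvPolynomial (Fin m) R) :
    T.dvg (X i * p) = T.pd i p + X i * T.dvg p := by
  classical
  simp only [dvg, Derivation.leibniz, smul_eq_mul, pderiv_X, map_add, Finset.sum_add_distrib,
    pd_X_mul, ← Finset.mul_sum]
  rw [add_comm, Finset.sum_eq_single i]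
  · simp
  · intro b _ hb; simp [hb.symm]
  · simp

lemma dvg_sum (s : Finset (Fin m)) (F : Fin m → MvPolynomial (Fin m) R) :
    T.dvg (∑ i ∈ s, F i) = ∑ i ∈ s, T.dvg (F i) := by
  simp only [dvg, map_sum]
  rw [Finset.sum_comm]

lemma dvg_grd (p : MvPolynomial (Fin m) R) : T.dvg (T.grd p) = T.lap p + T.grd (T.dvg p) := by
  rw [grd, dvg_sum]
  simp only [dvg_X_mul, Finset.sum_add_distrib, dvg_pd]
  rfl

lemma dvg_usq_mul (p : MvPolynomial (Fin m) R) :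
    T.dvg (usq * p) = 2 * T.grd p + usq * T.dvg p := by
  rw [usq, Finset.sum_mul, dvg_sum]
  simp only [mul_assoc, dvg_X_mul, pd_X_mul, Finset.sum_add_distrib, mul_add, grd, Finset.sum_mul]
  ring

/-- The bosonic Laplacian with denominators cleared. -/
def bos (P : ℤ) (p : MvPolynomial (Fin m) R) : MvPolynomial (Fin m) R :=
  ((P * (P - 2) : ℤ) : MvPolynomial (Fin m) R) * T.lap p
    - ((4 * (P - 2) : ℤ) : MvPolynomial (Fin m) R) * T.grd (T.dvg p)
    + ((4 : ℤ) : MvPolynomial (Fin m) R) * (usq * T.dvg (T.dvg p))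

lemma dvg_bos (P : ℤ) (p : MvPolynomial (Fin m) R) :
    T.dvg (T.bos P p) = T.bos (P - 2) (T.dvg p) := by
  rw [bos, dvg_add, dvg_sub, dvg_intCast_mul, dvg_intCast_mul, dvg_intCast_mul, dvg_lap, dvg_grd,
    dvg_usq_mul, bos]
  push_cast
  ring

lemma dvg_iterate_bos (P : ℤ) (p : MvPolynomial (Fin m) R) (e : ℕ) :
    T.dvg^[e] (T.bos P p) = T.bos (P - 2 * e) (T.dvg^[e] p) := by
  induction e with
  | zero => simp
  | succ e ih =>
    rw [Function.iterate_succ_apply', ih, dvg_bos, Function.iterate_succ_apply']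
    congr 1; push_cast; ring

lemma y_null : ∑ i, T.y i * T.y i = 0 := by
  have : ∑ i, T.y i * T.y i = T.rsq * T.rsq * (∑ i, T.ν i * T.ν i)
      - 4 * T.rsq * T.ell * (∑ i, T.ν i * T.x i) + 4 * T.ell * T.ell * (∑ i, T.x i * T.x i) := by
    simp only [Finset.mul_sum, ← Finset.sum_sub_distrib, ← Finset.sum_add_distrib]
    exact Finset.sum_congr rfl fun i _ => by rw [y]; ring
  rw [this, T.null, ← rsq, ← ell]; ring

lemma ev_usq : T.ev usq = 0 := by
  have : ∀ i, T.ev (X i) = T.y i := fun i => by simp [ev]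
  simp only [usq, map_sum, map_mul, this, y_null]

lemma ev_bos (P : ℤ) (p : MvPolynomial (Fin m) R) : T.ev (T.bos P p)
    = ((P - 2 : ℤ) : R) * (P * T.ev (T.lap p) - 4 * T.ev (T.grd (T.dvg p))) := by
  simp only [bos, map_add, map_sub, map_mul, ev_usq, map_intCast]
  push_cast
  ring

lemma isHomogeneous_pd {p : MvPolynomial (Fin m) R} {n : ℕ} (hp : p.IsHomogeneous n)
    (i : Fin m) : (T.pd i p).IsHomogeneous n := by
  intro s hs
  refine hp (d := s) fun h => hs ?_
  rw [pd, coeff_coeffMap, h, map_zero]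

lemma isHomogeneous_dvg {p : MvPolynomial (Fin m) R} {n : ℕ} (hp : p.IsHomogeneous n) :
    (T.dvg p).IsHomogeneous (n - 1) :=
  IsHomogeneous.sum _ _ _ fun i _ => T.isHomogeneous_pd hp.pderiv i

lemma dvg_eq_zero {p : MvPolynomial (Fin m) R} (hp : p.IsHomogeneous 0) : T.dvg p = 0 := by
  rw [← totalDegree_zero_iff_isHomogeneous, totalDegree_eq_zero_iff_eq_C] at hp
  rw [hp, dvg]; simp

lemma harmonic_dvg {p : MvPolynomial (Fin m) R} (hp : ∑ i, pderiv i (pderiv i p) = 0) :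
    ∑ i, pderiv i (pderiv i (T.dvg p)) = 0 := by
  have : ∑ i, pderiv i (pderiv i (T.dvg p)) = T.dvg (∑ i, pderiv i (pderiv i p)) := by
    simp only [dvg, map_sum]
    rw [Finset.sum_comm]
    refine Finset.sum_congr rfl fun i _ => Finset.sum_congr rfl fun j _ => ?_
    rw [← pd_pderiv, ← pd_pderiv, pderiv_comm j i, pderiv_comm j i]
  rw [this, hp]; simp [dvg]

lemma hasDeg_of_isHomogeneous {p : MvPolynomial (Fin m) R} {n : ℕ} (hp : p.IsHomogeneous n) :
    HasDeg (n : ℤ) p := by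
  rw [HasDeg, hp.sum_X_mul_pderiv]; simp

section Equations

variable {k : ℕ} {p : MvPolynomial (Fin m) R}

lemma isHomogeneous_dvg_iterate (hp : p.IsHomogeneous k) (e : ℕ) :
    (T.dvg^[e] p).IsHomogeneous (k - e) := by
  induction e with
  | zero => simpa
  | succ e ih =>
    rw [Function.iterate_succ_apply', ← Nat.sub_sub]; exact T.isHomogeneous_dvg ih

lemma harmonic_dvg_iterate (hp : ∑ i, pderiv i (pderiv i p) = 0) (e : ℕ) :
    ∑ i, pderiv i (pderiv i (T.dvg^[e] p)) = 0 := by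
  induction e with
  | zero => simpa
  | succ e ih => rw [Function.iterate_succ_apply']; exact T.harmonic_dvg ih

lemma dvg_iterate_succ_eq_zero (hp : p.IsHomogeneous k) : T.dvg^[k + 1] p = 0 := by
  rw [Function.iterate_succ_apply']
  refine T.dvg_eq_zero ?_
  simpa using T.isHomogeneous_dvg_iterate hp k

lemma hasDeg_dvg_iterate (hp : p.IsHomogeneous k) {e : ℕ} (he : e ≤ k + 1) :
    HasDeg ((k : ℤ) - e) (T.dvg^[e] p) := by
  rcases Nat.lt_or_ge k e with h | h
  · obtain rfl : e = k + 1 := by omega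
    rw [dvg_iterate_succ_eq_zero T hp]; simp [HasDeg]
  · have := hasDeg_of_isHomogeneous (T.isHomogeneous_dvg_iterate hp e)
    rwa [Nat.cast_sub h] at this

lemma ev_mem_ideal {J : Ideal R} {q : MvPolynomial (Fin m) R} (hq : ∀ s, coeff s q ∈ J) :
    T.ev q ∈ J := by
  rw [ev, eval_eq]
  exact Ideal.sum_mem _ fun s _ => J.mul_mem_right _ (hq s)

lemma coeff_dvg_mem {J : Ideal R} (hJ : ∀ i, ∀ a ∈ J, T.d i a ∈ J)
    {q : MvPolynomial (Fin m) R} (hq : ∀ s, coeff s q ∈ J) (s : Fin m →₀ ℕ) :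
    coeff s (T.dvg q) ∈ J := by
  rw [dvg, coeff_sum]
  refine Ideal.sum_mem _ fun i _ => ?_
  rw [pd, coeff_coeffMap, coeff_pderiv]
  refine hJ i _ ?_
  exact J.mul_mem_right _ (hq _)

/-- The weighted moments of the iterated divergences. -/
def wt (p : MvPolynomial (Fin m) R) (e : ℕ) : R := T.ell ^ e * T.ev (T.dvg^[e] p)

/-- The weighted radial moments of the iterated divergences. -/
def vt (p : MvPolynomial (Fin m) R) (e : ℕ) : R := T.ell ^ (e + 1) * T.brr (T.dvg^[e] p)

variable {N : AddSubgroup R}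

lemma eqB (hN : T.SphereNull N) (hp : p.IsHomogeneous k)
    (hh : ∑ i, pderiv i (pderiv i p) = 0) {e : ℕ} (he : e ≤ k) :
    T.eul (T.vt p e) + ((m : R) - 4 - 2 * e) * T.vt p e - (e + 1) * (k - e) * T.wt p e
      - T.rsq * T.wt p (e + 1) ∈ N := by
  have := T.eqB_mem hN (T.hasDeg_dvg_iterate hp (he.trans k.le_succ))
    (T.harmonic_dvg_iterate hh e) e
  rw [← Function.iterate_succ_apply' T.dvg] at this
  push_cast at this
  exact this

lemma eqA (hN : T.SphereNull N) (hp : p.IsHomogeneous k)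
    (hh : ∑ i, pderiv i (pderiv i p) = 0) {J : Ideal R} (hJN : ∀ a ∈ J, a ∈ N)
    (hJ : ∀ i, ∀ a ∈ J, T.d i a ∈ J) (hJs : ∀ (n : ℤ) (a : R), n ≠ 0 → n * a ∈ J → a ∈ J)
    (hm : 4 < m) (hb : ∀ s, coeff s (T.bos ((m : ℤ) + 2 * k - 2) p) ∈ J)
    {e : ℕ} (he : e ≤ k) (Y : R)
    (hY : Y = ((m : R) + 2 * (k - e) - 2) * (T.eul (T.wt p e)
      + ((m : R) - 2 - 2 * (k - e)) * T.wt p e - 4 * T.vt p e) + 4 * (T.rsq * T.wt p (e + 1))) :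
    T.eul Y - 2 * k * Y ∈ N := by
  have h1 : ∀ s, coeff s (T.dvg^[e] (T.bos ((m : ℤ) + 2 * k - 2) p)) ∈ J := by
    clear hY he
    induction e with
    | zero => simpa using hb
    | succ e ih =>
      rw [Function.iterate_succ_apply']; exact T.coeff_dvg_mem hJ ih
  have h2 := T.ev_mem_ideal h1
  rw [dvg_iterate_bos, ev_bos] at h2
  have h3 := hJs _ _ (by omega) h2
  have h4 := T.eqA_mem hN (T.hasDeg_dvg_iterate hp (he.trans k.le_succ))
    (T.harmonic_dvg_iterate hh e) (by
      have := T.hasDeg_dvg_iterate hp (Nat.succ_le_succ he)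
      rw [Function.iterate_succ_apply'] at this
      convert this using 1; push_cast; ring) e ?_ (T.wt p e) (T.vt p e) (T.wt p (e + 1)) Y rfl rfl
      (by rw [wt, Function.iterate_succ_apply']) (by rw [hY]; push_cast; ring)
  · convert h4 using 1; push_cast; ring
  · refine hJN _ ?_
    convert J.mul_mem_left (T.rsq * T.ell ^ e) h3 using 1
    push_cast; ring

end Equations

end NullFrame
end Algebra2

section ODE

open scoped ContDiff
open Set

lemma contDiff_deriv {g : ℝ → ℂ} (hg : ContDiff ℝ ∞ g) : ContDiff ℝ ∞ (deriv g) :=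
  (contDiff_infty_iff_deriv.1 hg).2

lemma contDiff_iteratedDeriv {g : ℝ → ℂ} (hg : ContDiff ℝ ∞ g) (n : ℕ) :
    ContDiff ℝ ∞ (iteratedDeriv n g) := by
  induction n with
  | zero => simpa
  | succ n ih => rw [iteratedDeriv_succ]; exact contDiff_deriv ih

lemma contDiff_ofReal : ContDiff ℝ ∞ (fun t : ℝ => (t : ℂ)) := Complex.ofRealCLM.contDiff

/-- The Euler operator on functions of one real variable. -/
def theta (g : ℝ → ℂ) : ℝ → ℂ := fun t => (t : ℂ) * deriv g t

lemma contDiff_theta {g : ℝ → ℂ} (hg : ContDiff ℝ ∞ g) : ContDiff ℝ ∞ (theta g) :=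
  contDiff_ofReal.mul (contDiff_deriv hg)

lemma differentiable_of_smooth {g : ℝ → ℂ} (hg : ContDiff ℝ ∞ g) : Differentiable ℝ g :=
  hg.differentiable (by simp)

lemma hasDerivAt_ofReal (t : ℝ) : HasDerivAt (fun t : ℝ => (t : ℂ)) 1 t :=
  Complex.ofRealCLM.hasDerivAt

lemma iteratedDeriv_ofReal_mul {g : ℝ → ℂ} (hg : ContDiff ℝ ∞ g) (n : ℕ) (t : ℝ) :
    iteratedDeriv (n + 1) (fun t : ℝ => (t : ℂ) * g t) t
      = t * iteratedDeriv (n + 1) g t + (n + 1) * iteratedDeriv n g t := by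
  induction n generalizing t with
  | zero =>
    rw [iteratedDeriv_one, iteratedDeriv_one, iteratedDeriv_zero]
    rw [((hasDerivAt_ofReal t).fun_mul (differentiable_of_smooth hg t).hasDerivAt).deriv]
    push_cast; ring
  | succ n ih =>
    rw [iteratedDeriv_succ, funext ih]
    have h1 := (differentiable_of_smooth (contDiff_iteratedDeriv hg (n + 1)) t).hasDerivAt
    have h2 := (differentiable_of_smooth (contDiff_iteratedDeriv hg n) t).hasDerivAt
    have h3 := ((hasDerivAt_ofReal t).fun_mul h1).fun_add (h2.const_mul ((n : ℂ) + 1))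
    rw [h3.deriv, ← iteratedDeriv_succ, ← iteratedDeriv_succ]
    push_cast; ring

lemma iteratedDeriv_theta {g : ℝ → ℂ} (hg : ContDiff ℝ ∞ g) (n : ℕ) (t : ℝ) :
    iteratedDeriv n (theta g) t
      = theta (iteratedDeriv n g) t + n * iteratedDeriv n g t := by
  rcases n with _ | n
  · simp
  · have := iteratedDeriv_ofReal_mul (contDiff_deriv hg) n t
    rw [← iteratedDeriv_succ', ← iteratedDeriv_succ'] at this
    rw [show theta g = fun t : ℝ => (t : ℂ) * deriv g t from rfl, this, theta,
      ← iteratedDeriv_succ]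
    push_cast; ring

lemma contDiffAt_nat {g : ℝ → ℂ} (hg : ContDiff ℝ ∞ g) (n : ℕ) (t : ℝ) : ContDiffAt ℝ n g t :=
  (contDiff_infty.1 hg n).contDiffAt

lemma iteratedDeriv_smooth_add {f g : ℝ → ℂ} (hf : ContDiff ℝ ∞ f) (hg : ContDiff ℝ ∞ g) (n : ℕ)
    (t : ℝ) : iteratedDeriv n (fun t => f t + g t) t = iteratedDeriv n f t + iteratedDeriv n g t :=
  iteratedDeriv_add (contDiffAt_nat hf n t) (contDiffAt_nat hg n t)

lemma iteratedDeriv_smooth_sub {f g : ℝ → ℂ} (hf : ContDiff ℝ ∞ f) (hg : ContDiff ℝ ∞ g) (n : ℕ)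
    (t : ℝ) : iteratedDeriv n (fun t => f t - g t) t = iteratedDeriv n f t - iteratedDeriv n g t :=
  iteratedDeriv_sub (contDiffAt_nat hf n t) (contDiffAt_nat hg n t)

lemma iteratedDeriv_mul_left (c : ℂ) (f : ℝ → ℂ) (n : ℕ) (t : ℝ) :
    iteratedDeriv n (fun t => c * f t) t = c * iteratedDeriv n f t :=
  iteratedDeriv_const_mul_field c f

lemma eq_of_deriv_eq_zero {ρ : ℝ} {g : ℝ → ℂ} (hg : Differentiable ℝ g)
    (h : ∀ t ∈ Ioo (-ρ) ρ, deriv g t = 0) {t : ℝ} (ht : t ∈ Ioo (-ρ) ρ) : g t = g 0 := by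
  have h0 : (0 : ℝ) ∈ Ioo (-ρ) ρ := by
    have := ht.1; have := ht.2; constructor <;> linarith
  refine (convex_Ioo (-ρ) ρ).is_const_of_fderivWithin_eq_zero (𝕜 := ℝ) (f := g)
    hg.differentiableOn (fun x hx => ?_) ht h0
  rw [fderivWithin_of_isOpen isOpen_Ioo hx]
  ext
  simpa using h x hx

/-- Homogeneous Euler equations of positive order have only the zero solution. -/
lemma euler_eq_zero {ρ : ℝ} {g : ℝ → ℂ} (hg : Differentiable ℝ g) (c : ℕ)
    (h : ∀ t ∈ Ioo (-ρ) ρ, theta g t + (c + 1) * g t = 0) {t : ℝ} (ht : t ∈ Ioo (-ρ) ρ) :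
    g t = 0 := by
  have hd : ∀ t : ℝ, HasDerivAt (fun t : ℝ => (t : ℂ) ^ (c + 1) * g t)
      ((t : ℂ) ^ c * (theta g t + (c + 1) * g t)) t := by
    intro t
    refine (((hasDerivAt_ofReal t).fun_pow (c + 1)).fun_mul (hg t).hasDerivAt).congr_deriv ?_
    simp only [theta, Nat.add_sub_cancel]; push_cast; ring
  have h1 := eq_of_deriv_eq_zero (ρ := ρ) (fun t => (hd t).differentiableAt)
    (fun t ht => by rw [(hd t).deriv, h t ht, mul_zero]) ht
  simp only [Complex.ofReal_zero, ne_eq, Nat.succ_ne_zero, not_false_eq_true, zero_pow,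
    zero_mul, mul_eq_zero, pow_eq_zero_iff, Complex.ofReal_eq_zero] at h1
  rcases h1 with h1 | h1
  · have := h t ht
    subst h1
    simp only [theta, Complex.ofReal_zero, zero_mul, zero_add, mul_eq_zero] at this
    rcases this with h2 | h2
    · exact absurd h2 (by exact_mod_cast Nat.succ_ne_zero c)
    · exact h2
  · exact h1

lemma iteratedDeriv_eq_of_eqOn {ρ : ℝ} {f g : ℝ → ℂ} (h : ∀ t ∈ Ioo (-ρ) ρ, f t = g t) (n : ℕ)
    {t : ℝ} (ht : t ∈ Ioo (-ρ) ρ) : iteratedDeriv n f t = iteratedDeriv n g t :=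
  Filter.EventuallyEq.iteratedDeriv_eq n
    (Filter.eventuallyEq_of_mem (isOpen_Ioo.mem_nhds ht) fun t ht => h t ht)

lemma eq_zero_of_iteratedDeriv_pow_mul {ρ : ℝ} (n : ℕ) : ∀ {h : ℝ → ℂ}, ContDiff ℝ ∞ h →
    (∀ t ∈ Ioo (-ρ) ρ, iteratedDeriv n (fun t : ℝ => (t : ℂ) ^ n * h t) t = 0) →
    ∀ t ∈ Ioo (-ρ) ρ, h t = 0 := by
  induction n with
  | zero => intro h _ h0 t ht; simpa using h0 t ht
  | succ n ih =>
    intro h hs h0 t ht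
    refine euler_eq_zero (differentiable_of_smooth hs) n (fun t ht => ?_) ht
    refine ih (h := fun t => theta h t + (n + 1) * h t)
      ((contDiff_theta hs).add (contDiff_const.mul hs)) (fun t ht => ?_) t ht
    rw [← h0 t ht, iteratedDeriv_succ']
    congr 1
    ext t
    have := ((hasDerivAt_ofReal t).fun_pow (n + 1)).fun_mul
      (differentiable_of_smooth hs t).hasDerivAt
    rw [this.deriv]
    simp only [theta, Nat.add_sub_cancel]; push_cast; ring

lemma deriv_eq_zero_of_iteratedDeriv {ρ : ℝ} (k : ℕ) {A s : ℝ → ℂ} (hA : ContDiff ℝ ∞ A)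
    (hs : ∀ t, s t = (t : ℂ) ^ (2 * k) * A t)
    (h : ∀ t ∈ Ioo (-ρ) ρ, iteratedDeriv (2 * k + 1) s t = 0) :
    ∀ t ∈ Ioo (-ρ) ρ, deriv A t = 0 := by
  have hss : ContDiff ℝ ∞ s := by
    rw [funext hs]; exact (contDiff_ofReal.pow _).mul hA
  refine eq_zero_of_iteratedDeriv_pow_mul (2 * k + 1) (contDiff_deriv hA) fun t ht => ?_
  have e1 : (fun t : ℝ => (t : ℂ) ^ (2 * k + 1) * deriv A t)
      = fun t => theta s t - (2 * k) * s t := by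
    ext t
    have := ((hasDerivAt_ofReal t).fun_pow (2 * k)).fun_mul
      (differentiable_of_smooth hA t).hasDerivAt
    rw [theta, funext hs, this.deriv]
    rcases k with _ | k
    · simp
    · rw [show 2 * (k + 1) - 1 = 2 * k + 1 by omega]; push_cast; ring
  have e2 : ∀ᶠ u in 𝓝 t, iteratedDeriv (2 * k + 1) s u = 0 :=
    Filter.eventually_of_mem (isOpen_Ioo.mem_nhds ht) h
  have e3 : deriv (iteratedDeriv (2 * k + 1) s) t = 0 := by
    rw [Filter.EventuallyEq.deriv_eq (f := fun _ => (0 : ℂ)) e2]; simp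
  rw [e1, iteratedDeriv_smooth_sub (contDiff_theta hss) (contDiff_const.mul hss),
    iteratedDeriv_mul_left, iteratedDeriv_theta hss, theta, e3, h t ht]
  simp

lemma iteratedDeriv_sq_mul_odd {ρ : ℝ} (k : ℕ) {σ : ℝ → ℂ} (hσ : ContDiff ℝ ∞ σ)
    (heven : ∀ t, σ (-t) = σ t)
    (h : ∀ t ∈ Ioo (-ρ) ρ, iteratedDeriv (2 * k + 1) σ t = 0) {τ : ℝ → ℂ}
    (hτ : τ = iteratedDeriv (2 * k + 1) (fun t : ℝ => (t : ℂ) ^ 2 * σ t)) :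
    ∀ t ∈ Ioo (-ρ) ρ, theta τ t = τ t := by
  have hq : ContDiff ℝ ∞ (fun t : ℝ => (t : ℂ) ^ 2 * σ t) := (contDiff_ofReal.pow 2).mul hσ
  have hτs : ContDiff ℝ ∞ τ := by rw [hτ]; exact contDiff_iteratedDeriv hq _
  have hτ0 : τ 0 = 0 := by
    have h1 := iteratedDeriv_comp_neg (2 * k + 1) (fun t : ℝ => (t : ℂ) ^ 2 * σ t) 0
    have h2 : (fun x : ℝ => ((-x : ℝ) : ℂ) ^ 2 * σ (-x)) = fun t : ℝ => (t : ℂ) ^ 2 * σ t := by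
      ext t; rw [heven]; push_cast; ring
    rw [h2, neg_zero, ← hτ, pow_succ, pow_mul] at h1
    simp only [even_two, Even.neg_pow, one_pow, mul_neg, mul_one, neg_smul, one_smul] at h1
    exact self_eq_neg.1 h1
  -- the derivatives of `σ` of order at least `2 * k + 1` vanish
  have hz : ∀ j : ℕ, ∀ t ∈ Ioo (-ρ) ρ, iteratedDeriv (2 * k + 1 + j) σ t = 0 := by
    intro j
    induction j with
    | zero => exact h
    | succ j ih =>
      intro t ht
      rw [← add_assoc, iteratedDeriv_succ, Filter.EventuallyEq.deriv_eq (f := fun _ => (0 : ℂ))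
        (Filter.eventually_of_mem (isOpen_Ioo.mem_nhds ht) ih)]
      simp
  have hτ2 : ∀ t ∈ Ioo (-ρ) ρ, deriv (deriv τ) t = 0 := by
    intro t ht
    rw [hτ, ← iteratedDeriv_succ, ← iteratedDeriv_succ]
    have e1 : (fun t : ℝ => (t : ℂ) ^ 2 * σ t) = fun t : ℝ => (t : ℂ) * ((t : ℂ) * σ t) := by
      ext t; ring
    rw [e1, iteratedDeriv_ofReal_mul (contDiff_ofReal.mul hσ), iteratedDeriv_ofReal_mul hσ,
      iteratedDeriv_ofReal_mul hσ]
    have z0 := hz 0 t ht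
    have z1 := hz 1 t ht
    have z2 := hz 2 t ht
    rw [add_zero] at z0
    rw [z0, show 2 * k + 1 + 1 + 1 = 2 * k + 1 + 2 from rfl, z2, z1]; simp
  have hd : ∀ t : ℝ, HasDerivAt (fun t => theta τ t - τ t) ((t : ℂ) * deriv (deriv τ) t) t := by
    intro t
    have h1 := (differentiable_of_smooth hτs t).hasDerivAt
    have h2 := (differentiable_of_smooth (contDiff_deriv hτs) t).hasDerivAt
    refine (((hasDerivAt_ofReal t).fun_mul h2).fun_sub h1).congr_deriv ?_
    ring
  intro t ht
  have := eq_of_deriv_eq_zero (ρ := ρ) (fun t => (hd t).differentiableAt)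
    (fun t ht => by rw [(hd t).deriv, hτ2 t ht, mul_zero]) ht
  simp only [theta, Complex.ofReal_zero, zero_mul, hτ0, sub_zero] at this
  exact sub_eq_zero.1 this

/-- The radial system satisfied by the moments forces the moments to be polynomial. -/
lemma radial_system {ρ : ℝ} {m k e : ℕ} (hm : 4 < m) (he : e ≤ k) {s v σ : ℝ → ℂ}
    (hs : ContDiff ℝ ∞ s) (hv : ContDiff ℝ ∞ v) (hσ : ContDiff ℝ ∞ σ)
    (heven : ∀ t, σ (-t) = σ t)
    (hσ0 : ∀ t ∈ Ioo (-ρ) ρ, iteratedDeriv (2 * k + 1) σ t = 0)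
    {Y : ℝ → ℂ} (hY : Y = fun t : ℝ => ((m : ℂ) + 2 * (k - e) - 2) * (theta s t
      + ((m : ℂ) - 2 - 2 * (k - e)) * s t - 4 * v t) + 4 * ((t : ℂ) ^ 2 * σ t))
    (hA : ∀ t ∈ Ioo (-ρ) ρ, theta Y t - 2 * k * Y t = 0)
    (hB : ∀ t ∈ Ioo (-ρ) ρ, theta v t + ((m : ℂ) - 4 - 2 * e) * v t
      - (e + 1) * (k - e) * s t - (t : ℂ) ^ 2 * σ t = 0) :
    ∀ t ∈ Ioo (-ρ) ρ, iteratedDeriv (2 * k + 1) s t = 0 := by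
  have hq : ContDiff ℝ ∞ (fun t : ℝ => (t : ℂ) ^ 2 * σ t) := (contDiff_ofReal.pow 2).mul hσ
  have hθs := contDiff_theta hs
  have hθv := contDiff_theta hv
  have c1 : ContDiff ℝ ∞ fun t => ((m : ℂ) - 2 - 2 * (k - e)) * s t := contDiff_const.mul hs
  have c2 : ContDiff ℝ ∞ fun t => theta s t + ((m : ℂ) - 2 - 2 * (k - e)) * s t := hθs.add c1
  have c3 : ContDiff ℝ ∞ fun t => (4 : ℂ) * v t := contDiff_const.mul hv
  have c4 := c2.sub c3
  have c5 : ContDiff ℝ ∞ fun t => ((m : ℂ) + 2 * (k - e) - 2) * (theta s t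
      + ((m : ℂ) - 2 - 2 * (k - e)) * s t - 4 * v t) := contDiff_const.mul c4
  have c6 : ContDiff ℝ ∞ fun t : ℝ => 4 * ((t : ℂ) ^ 2 * σ t) := contDiff_const.mul hq
  have hYs : ContDiff ℝ ∞ Y := by rw [hY]; exact c5.add c6
  obtain ⟨s', hs'⟩ : ∃ s', s' = iteratedDeriv (2 * k + 1) s := ⟨_, rfl⟩
  obtain ⟨v', hv'⟩ : ∃ v', v' = iteratedDeriv (2 * k + 1) v := ⟨_, rfl⟩
  obtain ⟨τ, hτ⟩ : ∃ τ, τ = iteratedDeriv (2 * k + 1) (fun t : ℝ => (t : ℂ) ^ 2 * σ t) := ⟨_, rfl⟩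
  have hs's : ContDiff ℝ ∞ s' := by rw [hs']; exact contDiff_iteratedDeriv hs _
  have hv's : ContDiff ℝ ∞ v' := by rw [hv']; exact contDiff_iteratedDeriv hv _
  have hτs : ContDiff ℝ ∞ τ := by rw [hτ]; exact contDiff_iteratedDeriv hq _
  have hθτ := iteratedDeriv_sq_mul_odd k hσ heven hσ0 hτ
  have hYd : ∀ t, iteratedDeriv (2 * k + 1) Y t = ((m : ℂ) + 2 * (k - e) - 2) * (theta s' t
      + (2 * k + 1) * s' t + ((m : ℂ) - 2 - 2 * (k - e)) * s' t - 4 * v' t) + 4 * τ t := by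
    intro t
    rw [hY, iteratedDeriv_smooth_add c5 c6, iteratedDeriv_mul_left, iteratedDeriv_mul_left,
      iteratedDeriv_smooth_sub c2 c3, iteratedDeriv_smooth_add hθs c1, iteratedDeriv_mul_left,
      iteratedDeriv_mul_left, iteratedDeriv_theta hs, ← hs', ← hv', ← hτ]
    push_cast; ring
  have hY0 : ∀ t ∈ Ioo (-ρ) ρ, iteratedDeriv (2 * k + 1) Y t = 0 := by
    intro t ht
    refine euler_eq_zero (differentiable_of_smooth (contDiff_iteratedDeriv hYs _)) 0
      (fun t ht => ?_) ht
    have := iteratedDeriv_eq_of_eqOn (g := fun _ => 0) hA (2 * k + 1) ht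
    rw [iteratedDeriv_smooth_sub (contDiff_theta hYs) (contDiff_const.mul hYs),
      iteratedDeriv_mul_left, iteratedDeriv_theta hYs, iteratedDeriv_fun_const_zero] at this
    push_cast at this ⊢
    linear_combination this
  have hB' : ∀ t ∈ Ioo (-ρ) ρ, theta v' t + (2 * k + 1) * v' t + ((m : ℂ) - 4 - 2 * e) * v' t
      - (e + 1) * (k - e) * s' t - τ t = 0 := by
    intro t ht
    have := iteratedDeriv_eq_of_eqOn (g := fun _ => 0) hB (2 * k + 1) ht
    have b1 : ContDiff ℝ ∞ fun t => ((m : ℂ) - 4 - 2 * e) * v t := contDiff_const.mul hv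
    have b2 : ContDiff ℝ ∞ fun t => ((e : ℂ) + 1) * (k - e) * s t := contDiff_const.mul hs
    rw [iteratedDeriv_smooth_sub ((hθv.add b1).sub b2) hq,
      iteratedDeriv_smooth_sub (hθv.add b1) b2, iteratedDeriv_smooth_add hθv b1,
      iteratedDeriv_mul_left, iteratedDeriv_mul_left, iteratedDeriv_theta hv,
      iteratedDeriv_fun_const_zero, ← hs', ← hv', ← hτ] at this
    push_cast at this
    exact this
  have hP : ((m : ℂ) + 2 * (k - e) - 2) ≠ 0 := by
    obtain ⟨j, rfl⟩ := Nat.exists_eq_add_of_le he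
    obtain ⟨n, rfl⟩ := Nat.exists_eq_add_of_lt hm
    push_cast
    have : ((4 : ℂ) + n + 1 + 2 * (e + j - e) - 2) = ((n + 3 + 2 * j : ℕ) : ℂ) := by
      push_cast; ring
    rw [this]; exact_mod_cast (by omega)
  -- the first order operator of order `m + 2 k - 1` applied to the iterated derivative of `s`
  obtain ⟨g, hg⟩ : ∃ g : ℝ → ℂ, g = fun t => theta s' t + ((m : ℂ) - 3 + (2 * k + 2)) * s' t :=
    ⟨_, rfl⟩
  have hgd : ∀ t, HasDerivAt g (deriv (theta s') t + ((m : ℂ) - 3 + (2 * k + 2)) * deriv s' t) t := by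
    intro t
    rw [hg]
    exact (differentiable_of_smooth (contDiff_theta hs's) t).hasDerivAt.fun_add
      ((differentiable_of_smooth hs's t).hasDerivAt.const_mul _)
  have hvV : ∀ t ∈ Ioo (-ρ) ρ, v' t = 4⁻¹ * (theta s' t + (2 * e + m - 1) * s' t)
      + ((m : ℂ) + 2 * (k - e) - 2)⁻¹ * τ t := by
    intro t ht
    have := hY0 t ht
    rw [hYd] at this
    field_simp
    linear_combination (-1 : ℂ) * this
  have hdv : ∀ t ∈ Ioo (-ρ) ρ, deriv v' t = 4⁻¹ * (deriv (theta s') t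
      + (2 * e + m - 1) * deriv s' t) + ((m : ℂ) + 2 * (k - e) - 2)⁻¹ * deriv τ t := by
    intro t ht
    have e1 : v' =ᶠ[𝓝 t] fun t => 4⁻¹ * (theta s' t + (2 * e + m - 1) * s' t)
      + ((m : ℂ) + 2 * (k - e) - 2)⁻¹ * τ t :=
      Filter.eventually_of_mem (isOpen_Ioo.mem_nhds ht) hvV
    rw [e1.deriv_eq]
    exact ((((differentiable_of_smooth (contDiff_theta hs's) t).hasDerivAt.fun_add
      ((differentiable_of_smooth hs's t).hasDerivAt.const_mul _)).const_mul _).fun_add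
      ((differentiable_of_smooth hτs t).hasDerivAt.const_mul _)).deriv
  have hg0 : ∀ t ∈ Ioo (-ρ) ρ, g t = 0 := by
    intro t ht
    refine euler_eq_zero (fun t => (hgd t).differentiableAt) (m - 4) (fun t ht => ?_) ht
    have hb := hB' t ht
    have hτt := hθτ t ht
    rw [theta] at hb hτt
    rw [hdv t ht, hvV t ht] at hb
    rw [theta, (hgd t).deriv, hg, Nat.cast_sub hm.le]
    have hPi : ((m : ℂ) + 2 * (k - e) - 2)⁻¹ * ((m : ℂ) + 2 * (k - e) - 2) = 1 :=
      inv_mul_cancel₀ hP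
    simp only [theta] at hb ⊢
    push_cast
    linear_combination 4 * hb - 4 * ((m : ℂ) + 2 * (k - e) - 2)⁻¹ * hτt - 4 * τ t * hPi
  intro t ht
  rw [← hs']
  refine euler_eq_zero (differentiable_of_smooth hs's) (m - 4 + (2 * k + 2)) (fun t ht => ?_) ht
  have := hg0 t ht
  rw [hg] at this
  push_cast [Nat.cast_sub hm.le]
  linear_combination this

end ODE

section SphereMeasure

open scoped Pointwise

instance isFiniteMeasure_sphereM (m : ℕ) : IsFiniteMeasure (sphereM m) := by
  unfold sphereM; infer_instance

lemma ae_norm_eq_one (m : ℕ) : ∀ᵐ ζ ∂(sphereM m), ‖ζ‖ = 1 := by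
  unfold sphereM
  rw [ae_map_iff measurable_subtype_coe.aemeasurable
    (measurableSet_eq_fun measurable_norm measurable_const)]
  exact Filter.Eventually.of_forall fun ζ => by simp

lemma sphereM_apply (m : ℕ) {s : Set (Evec m)} (hs : MeasurableSet s) :
    sphereM m s = m * volume (Set.Ioo (0 : ℝ) 1 • (s ∩ sphere (0 : Evec m) 1)) := by
  unfold sphereM
  rw [Measure.map_apply measurable_subtype_coe hs,
    Measure.toSphere_apply' _ (measurable_subtype_coe hs)]
  simp [Subtype.image_preimage_coe, Set.inter_comm]

lemma measurePreserving_sphereM {m : ℕ} (A : Evec m ≃ₗᵢ[ℝ] Evec m) :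
    MeasurePreserving A (sphereM m) (sphereM m) := by
  refine ⟨A.continuous.measurable, ?_⟩
  ext s hs
  have hA := A.continuous.measurable
  rw [Measure.map_apply hA hs, sphereM_apply m hs, sphereM_apply m (hA hs)]
  congr 1
  have hpre : Set.Ioo (0 : ℝ) 1 • (A ⁻¹' s ∩ sphere (0 : Evec m) 1)
      = A.toMeasurableEquiv ⁻¹' (Set.Ioo (0 : ℝ) 1 • (s ∩ sphere (0 : Evec m) 1)) := by
    ext x
    simp only [Set.mem_smul, Set.mem_preimage, Set.mem_inter_iff, mem_sphere_zero_iff_norm]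
    constructor
    · rintro ⟨c, hc, y, ⟨hy, hy1⟩, rfl⟩
      exact ⟨c, hc, A y, ⟨hy, by simpa using hy1⟩, by simp⟩
    · rintro ⟨c, hc, y, ⟨hy, hy1⟩, h⟩
      refine ⟨c, hc, A.symm y, ⟨by simpa using hy, by simpa using hy1⟩, ?_⟩
      rw [← map_smul, h]; simp
  rw [hpre]
  exact A.measurePreserving.measure_preimage_equiv _

lemma integral_sphereM_comp {m : ℕ} {F : Type*} [NormedAddCommGroup F] [NormedSpace ℝ F]
    (A : Evec m ≃ₗᵢ[ℝ] Evec m) (g : Evec m → F) :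
    ∫ ζ, g (A ζ) ∂(sphereM m) = ∫ ζ, g ζ ∂(sphereM m) :=
  (measurePreserving_sphereM A).integral_comp A.toMeasurableEquiv.measurableEmbedding g

lemma integrable_sphereM {m : ℕ} {F : Type*} [NormedAddCommGroup F]
    {g : Evec m → F} (hg : Continuous g) : Integrable g (sphereM m) := by
  obtain ⟨C, hC⟩ := (isCompact_sphere (0 : Evec m) 1).exists_bound_of_continuousOn
    hg.continuousOn
  refine Integrable.of_bound hg.aestronglyMeasurable C ?_
  filter_upwards [ae_norm_eq_one m] with ζ hζ
  exact hC ζ (by simpa using hζ)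

lemma integral_sphereM_congr {m : ℕ} {F : Type*} [NormedAddCommGroup F] [NormedSpace ℝ F]
    {g h : Evec m → F} (hgh : ∀ ζ : Evec m, ‖ζ‖ = 1 → g ζ = h ζ) :
    ∫ ζ, g ζ ∂(sphereM m) = ∫ ζ, h ζ ∂(sphereM m) :=
  integral_congr_ae ((ae_norm_eq_one m).mono fun ζ hζ => hgh ζ hζ)

lemma omegaS_pos {m : ℕ} (hm : 0 < m) : 0 < omegaS m := by
  have : Nontrivial (Evec m) := by
    have : Nonempty (Fin m) := ⟨⟨0, hm⟩⟩
    infer_instance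
  unfold omegaS
  refine ENNReal.toReal_pos ?_ (measure_ne_top _ _)
  unfold sphereM
  rw [Measure.map_apply measurable_subtype_coe MeasurableSet.univ, Set.preimage_univ]
  exact fun h => Measure.toSphere_ne_zero (volume : Measure (Evec m))
    (Measure.measure_univ_eq_zero.mp h)

end SphereMeasure

section SmoothFunctions

open scoped ContDiff

/-- The algebra of smooth complex valued functions on `ℝ^m`. -/
def smoothAlg (m : ℕ) : Subalgebra ℂ (Evec m → ℂ) where
  carrier := {f | ContDiff ℝ ∞ f}
  mul_mem' := fun {f g} hf hg => by
    rw [Set.mem_ofPred_eq] at hf hg ⊢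
    exact hf.mul hg
  add_mem' := fun {f g} hf hg => by
    rw [Set.mem_ofPred_eq] at hf hg ⊢
    exact hf.add hg
  algebraMap_mem' := fun c => by
    rw [Set.mem_ofPred_eq]
    exact (contDiff_const : ContDiff ℝ ∞ fun _ : Evec m => c)

lemma smoothAlg_contDiff {m : ℕ} (w : smoothAlg m) : ContDiff ℝ ∞ w.1 := w.2

lemma smoothAlg_differentiable {m : ℕ} (w : smoothAlg m) : Differentiable ℝ w.1 :=
  (smoothAlg_contDiff w).differentiable (by simp)

lemma smoothAlg_continuous {m : ℕ} (w : smoothAlg m) : Continuous w.1 := (smoothAlg_contDiff w).continuous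

lemma smoothAlg_continuous_fderiv {m : ℕ} (w : smoothAlg m) : Continuous (fderiv ℝ w.1) :=
  (smoothAlg_contDiff w).continuous_fderiv (by simp)

lemma contDiff_fderiv_single {m : ℕ} (i : Fin m) (w : smoothAlg m) :
    ContDiff ℝ ∞ (fun x => fderiv ℝ w.1 x (EuclideanSpace.single i 1)) :=
  ((smoothAlg_contDiff w).fderiv_right (m := ∞) (by simp)).clm_apply contDiff_const

/-- Additive derivations of a commutative ring. -/
abbrev RingDerivation (R : Type*) [CommRing R] : Type _ := Derivation ℤ R R

/-- The partial derivative as a derivation of the algebra of smooth functions. -/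
def smoothD {m : ℕ} (i : Fin m) : RingDerivation (smoothAlg m) :=
  Derivation.mk'
    (AddMonoidHom.toIntLinearMap
      { toFun := fun w => ⟨fun x => fderiv ℝ w.1 x (EuclideanSpace.single i 1),
          contDiff_fderiv_single i w⟩
        map_zero' := by
          ext x
          change fderiv ℝ (0 : Evec m → ℂ) x _ = 0
          simp
        map_add' := fun v w => by
          ext x
          change fderiv ℝ (v.1 + w.1) x _ = fderiv ℝ v.1 x _ + fderiv ℝ w.1 x _
          rw [fderiv_add (smoothAlg_differentiable v x) (smoothAlg_differentiable w x)]
          rfl })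
    (fun v w => by
      ext x
      change fderiv ℝ (v.1 * w.1) x _ = v.1 x * fderiv ℝ w.1 x _ + w.1 x * fderiv ℝ v.1 x _
      rw [fderiv_mul (smoothAlg_differentiable v x) (smoothAlg_differentiable w x)]
      rfl)

lemma smoothD_apply {m : ℕ} (i : Fin m) (w : smoothAlg m) (x : Evec m) :
    (smoothD i w).1 x = fderiv ℝ w.1 x (EuclideanSpace.single i 1) := rfl

lemma smoothD_comm {m : ℕ} (i j : Fin m) (w : smoothAlg m) :
    smoothD i (smoothD j w) = smoothD j (smoothD i w) := by
  ext x
  have h2 : Differentiable ℝ (fderiv ℝ w.1) :=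
    ((smoothAlg_contDiff w).fderiv_right (m := ∞) (by simp)).differentiable (by simp)
  have key : ∀ a b : Evec m,
      fderiv ℝ (fun y => fderiv ℝ w.1 y a) x b = fderiv ℝ (fderiv ℝ w.1) x b a := by
    intro a b
    rw [fderiv_clm_apply (h2 x) (differentiableAt_const a)]
    simp
  have hs : IsSymmSndFDerivAt ℝ w.1 x :=
    ((smoothAlg_contDiff w).contDiffAt (x := x)).isSymmSndFDerivAt (by
      rw [minSmoothness_of_isRCLikeNormedField]
      exact WithTop.coe_le_coe.mpr le_top)
  change fderiv ℝ (fun y => fderiv ℝ w.1 y _) x _ = fderiv ℝ (fun y => fderiv ℝ w.1 y _) x _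
  rw [key, key]
  exact hs _ _

/-- The coordinate functions. -/
def smoothX {m : ℕ} (i : Fin m) : smoothAlg m :=
  ⟨fun x => ((x i : ℝ) : ℂ),
    (Complex.ofRealCLM.comp (EuclideanSpace.proj (𝕜 := ℝ) i)).contDiff (n := ∞)⟩

lemma smoothD_const {m : ℕ} (i : Fin m) (c : ℂ) :
    smoothD i (algebraMap ℂ (smoothAlg m) c) = 0 := by
  ext x
  change fderiv ℝ (fun _ : Evec m => c) x _ = 0
  simp

lemma smoothD_smoothX {m : ℕ} (i j : Fin m) :
    smoothD i (smoothX j) = if i = j then 1 else 0 := by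
  ext x
  have h : HasFDerivAt (smoothX j : smoothAlg m).1 (Complex.ofRealCLM.comp
      (EuclideanSpace.proj (𝕜 := ℝ) j)) x :=
    (Complex.ofRealCLM.comp
      (EuclideanSpace.proj (𝕜 := ℝ) j)).hasFDerivAt
  rw [smoothD_apply, h.fderiv]
  by_cases hij : i = j
  · subst hij; simp
  · simp [hij, Ne.symm hij]

/-- The frame of smooth functions attached to a complex null vector. -/
def smoothFrame {m : ℕ} (ν : Fin m → ℂ) (hν : ∑ i, ν i * ν i = 0) :
    NullFrame m (smoothAlg m) where
  d := smoothD
  x := smoothX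
  ν := fun i => algebraMap ℂ (smoothAlg m) (ν i)
  d_x := smoothD_smoothX
  d_ν := fun i j => smoothD_const i (ν j)
  d_comm := smoothD_comm
  null := by
    simp only [← map_mul, ← map_sum]
    rw [hν, map_zero]

end SmoothFunctions

section SphereFunctional

open scoped ContDiff

lemma hasDerivAt_integral_sphereM {m : ℕ} {G G' : ℝ → Evec m → ℂ}
    (hG : ∀ s, Continuous (G s)) (hG' : Continuous (fun z : ℝ × Evec m => G' z.1 z.2))
    (h : ∀ s ζ, HasDerivAt (fun s => G s ζ) (G' s ζ) s) (s₀ : ℝ) :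
    HasDerivAt (fun s => ∫ ζ, G s ζ ∂(sphereM m)) (∫ ζ, G' s₀ ζ ∂(sphereM m)) s₀ := by
  obtain ⟨C, hC⟩ := ((isCompact_closedBall s₀ 1).prod
    (isCompact_sphere (0 : Evec m) 1)).exists_bound_of_continuousOn hG'.continuousOn
  refine (hasDerivAt_integral_of_dominated_loc_of_deriv_le (bound := fun _ => C)
    (closedBall_mem_nhds s₀ one_pos)
    (Eventually.of_forall fun s => (hG s).aestronglyMeasurable) (integrable_sphereM (hG s₀))
    ?_ ?_ (integrable_const C) ?_).2
  · exact (hG'.comp (by fun_prop : Continuous fun ζ : Evec m => (s₀, ζ))).aestronglyMeasurable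
  · filter_upwards [ae_norm_eq_one m] with ζ hζ s hs
    exact hC (s, ζ) ⟨hs, by simpa using hζ⟩
  · exact Eventually.of_forall fun ζ s _ => h s ζ

/-- Weighted spherical means. -/
def wsph {m : ℕ} (c : Evec m → ℂ) (w : smoothAlg m) (t : ℝ) : ℂ :=
  ∫ ζ, c ζ * w.1 (t • ζ) ∂(sphereM m)

lemma eq_sum_single {m : ℕ} (v : Evec m) : v = ∑ i, v i • EuclideanSpace.single i (1 : ℝ) := by
  ext j
  simp [Finset.sum_apply, Pi.single_apply]

lemma fderiv_eq_sum {m : ℕ} (w : smoothAlg m) (x v : Evec m) :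
    fderiv ℝ w.1 x v = ∑ i, ((v i : ℝ) : ℂ) * (smoothD i w).1 x := by
  conv_lhs => rw [eq_sum_single v]
  simp [smoothD_apply]

lemma hasDerivAt_comp_path {m : ℕ} (w : smoothAlg m) {γ : ℝ → Evec m} {γ' : Evec m} {s : ℝ}
    (h : HasDerivAt γ γ' s) : HasDerivAt (fun s => w.1 (γ s)) (fderiv ℝ w.1 (γ s) γ') s :=
  (smoothAlg_differentiable w (γ s)).hasFDerivAt.comp_hasDerivAt s h

lemma hasDerivAt_wsph {m : ℕ} {c : Evec m → ℂ} (hc : Continuous c) (w : smoothAlg m) (t : ℝ) :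
    HasDerivAt (wsph c w) (∑ i, wsph (fun ζ => c ζ * ((ζ i : ℝ) : ℂ)) (smoothD i w) t) t := by
  have hcw : ∀ v : smoothAlg m, Continuous v.1 := smoothAlg_continuous
  have h := hasDerivAt_integral_sphereM (m := m) (G := fun t ζ => c ζ * w.1 (t • ζ))
    (G' := fun t ζ => ∑ i, c ζ * ((ζ i : ℝ) : ℂ) * (smoothD i w).1 (t • ζ))
    (fun s => hc.mul ((hcw w).comp (by fun_prop)))
    (continuous_finsetSum _ fun i _ => (((hc.comp continuous_snd).mul
      (Complex.continuous_ofReal.comp (by fun_prop))).mul ((hcw _).comp (by fun_prop))))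
    (fun s ζ => by
      have h1 : HasDerivAt (fun s : ℝ => s • ζ) ζ s := by
        simpa using (hasDerivAt_id s).smul_const ζ
      have h2 := (hasDerivAt_comp_path w h1).const_mul (c ζ)
      rw [fderiv_eq_sum, Finset.mul_sum] at h2
      simpa [mul_assoc] using h2) t
  rw [integral_finsetSum] at h
  · exact h
  · intro i _
    exact integrable_sphereM ((hc.mul (Complex.continuous_ofReal.comp (by fun_prop))).mul
      ((hcw _).comp (by fun_prop)))

lemma contDiff_wsph_nat {m : ℕ} (n : ℕ) : ∀ {c : Evec m → ℂ} (_ : Continuous c)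
    (w : smoothAlg m), ContDiff ℝ n (wsph c w) := by
  induction n with
  | zero =>
    intro c hc w
    exact contDiff_zero.mpr (continuous_iff_continuousAt.mpr fun t =>
      (hasDerivAt_wsph hc w t).continuousAt)
  | succ n ih =>
    intro c hc w
    have hd : deriv (wsph c w)
        = fun t => ∑ i, wsph (fun ζ => c ζ * ((ζ i : ℝ) : ℂ)) (smoothD i w) t :=
      funext fun t => (hasDerivAt_wsph hc w t).deriv
    push_cast
    rw [contDiff_succ_iff_deriv]
    refine ⟨fun t => (hasDerivAt_wsph hc w t).differentiableAt, by simp, ?_⟩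
    rw [hd]
    exact ContDiff.sum fun i _ =>
      ih (hc.mul (Complex.continuous_ofReal.comp (by fun_prop))) _

lemma contDiff_wsph {m : ℕ} {c : Evec m → ℂ} (hc : Continuous c) (w : smoothAlg m) :
    ContDiff ℝ ∞ (wsph c w) :=
  contDiff_infty.mpr fun n => contDiff_wsph_nat n hc w

/-- The spherical mean functional at radius `t`. -/
def sph {m : ℕ} (t : ℝ) : smoothAlg m →ₗ[ℂ] ℂ where
  toFun w := ∫ ζ, w.1 (t • ζ) ∂(sphereM m)
  map_add' v w := integral_add
    (integrable_sphereM ((smoothAlg_continuous v).comp (by fun_prop)))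
    (integrable_sphereM ((smoothAlg_continuous w).comp (by fun_prop)))
  map_smul' c w := integral_const_mul c _

lemma sph_apply {m : ℕ} (t : ℝ) (w : smoothAlg m) :
    sph t w = ∫ ζ, w.1 (t • ζ) ∂(sphereM m) := rfl

lemma sph_eq_wsph {m : ℕ} (w : smoothAlg m) : (fun t => sph t w) = wsph (fun _ => 1) w := by
  funext t; simp [sph_apply, wsph]

lemma contDiff_sph {m : ℕ} (w : smoothAlg m) : ContDiff ℝ ∞ (fun t => sph t w) := by
  rw [sph_eq_wsph]; exact contDiff_wsph continuous_const w

lemma sph_neg {m : ℕ} (w : smoothAlg m) (t : ℝ) : sph (-t) w = sph t w := by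
  rw [sph_apply, sph_apply,
    ← integral_sphereM_comp (LinearIsometryEquiv.neg ℝ) (fun ζ => w.1 (t • ζ))]
  simp

lemma sph_congr {m : ℕ} {t : ℝ} {v w : smoothAlg m}
    (h : ∀ ζ : Evec m, ‖ζ‖ = 1 → v.1 (t • ζ) = w.1 (t • ζ)) : sph t v = sph t w :=
  integral_sphereM_congr h

/-- Squared radius as a smooth function evaluated on a sphere. -/
lemma sum_sq_smul {m : ℕ} (t : ℝ) {ζ : Evec m} (hζ : ‖ζ‖ = 1) :
    ∑ i, (((t • ζ) i : ℝ) : ℂ) * (((t • ζ) i : ℝ) : ℂ) = (t : ℂ) ^ 2 := by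
  have h1 : ∑ i, (ζ i) ^ 2 = 1 := by
    have := EuclideanSpace.real_norm_sq_eq ζ
    rw [hζ] at this; linarith [this]
  have h2 : ∑ i, ((t • ζ) i) * ((t • ζ) i) = t ^ 2 := by
    have : ∀ i, ((t • ζ) i) * ((t • ζ) i) = t ^ 2 * (ζ i) ^ 2 := fun i => by
      simp; ring
    rw [Finset.sum_congr rfl fun i _ => this i, ← Finset.mul_sum, h1, mul_one]
  exact_mod_cast congrArg (fun r : ℝ => (r : ℂ)) h2

end SphereFunctional

section SphereFunctional

open scoped ContDiff

lemma smoothAlg_sum_apply {m : ℕ} {ι : Type*} (s : Finset ι) (F : ι → smoothAlg m) (x : Evec m) :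
    (∑ i ∈ s, F i).1 x = ∑ i ∈ s, (F i).1 x := by
  rw [AddSubmonoidClass.coe_finsetSum, Finset.sum_apply]

lemma theta_sph {m : ℕ} (w : smoothAlg m) (t : ℝ) :
    theta (fun t => sph t w) t = sph t (∑ i, smoothX i * smoothD i w) := by
  have hcw : ∀ v : smoothAlg m, Continuous v.1 := smoothAlg_continuous
  rw [theta, sph_eq_wsph, (hasDerivAt_wsph continuous_const w t).deriv, map_sum, Finset.mul_sum]
  refine Finset.sum_congr rfl fun i _ => ?_
  rw [sph_apply, wsph, ← integral_const_mul]
  refine integral_sphereM_congr fun ζ _ => ?_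
  change _ = (((t • ζ) i : ℝ) : ℂ) * _
  simp [mul_assoc]

lemma sph_rotation {m : ℕ} (i j : Fin m) (u : smoothAlg m) (t : ℝ) :
    sph t (smoothX i * smoothD j u - smoothX j * smoothD i u) = 0 := by
  by_cases hij : i = j
  · subst hij; simp
  set ei : Evec m := EuclideanSpace.single i (1 : ℝ) with hei
  set ej : Evec m := EuclideanSpace.single j (1 : ℝ) with hej
  -- the reflection in the line spanned by `cos s e_i + sin s e_j`
  let v : ℝ → Evec m := fun s => Real.cos s • ei + Real.sin s • ej
  let γ : ℝ → Evec m → Evec m := fun s ζ =>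
    (2 * (Real.cos s * ζ i + Real.sin s * ζ j)) • v s - ζ
  let γ' : ℝ → Evec m → Evec m := fun s ζ =>
    (2 * (Real.cos s * ζ i + Real.sin s * ζ j)) • (-Real.sin s • ei + Real.cos s • ej)
      + (2 * (-Real.sin s * ζ i + Real.cos s * ζ j)) • v s
  have hγ : ∀ s ζ, HasDerivAt (fun s => γ s ζ) (γ' s ζ) s := by
    intro s ζ
    have hv : HasDerivAt v (-Real.sin s • ei + Real.cos s • ej) s :=
      ((Real.hasDerivAt_cos s).smul_const ei).add ((Real.hasDerivAt_sin s).smul_const ej)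
    have hc : HasDerivAt (fun s => 2 * (Real.cos s * ζ i + Real.sin s * ζ j))
        (2 * (-Real.sin s * ζ i + Real.cos s * ζ j)) s :=
      (((Real.hasDerivAt_cos s).mul_const _).add ((Real.hasDerivAt_sin s).mul_const _)).const_mul 2
    exact (hc.smul hv).sub_const ζ
  have hγc : Continuous (fun z : ℝ × Evec m => γ z.1 z.2) := by
    simp only [γ, v]; fun_prop
  have hγc' : Continuous (fun z : ℝ × Evec m => γ' z.1 z.2) := by
    simp only [γ', v]; fun_prop
  have hvn : ∀ s, ‖v s‖ ^ 2 = 1 := by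
    intro s
    rw [EuclideanSpace.real_norm_sq_eq]
    have : ∀ l, (v s l) ^ 2 = Real.cos s ^ 2 * (if l = i then 1 else 0)
        + Real.sin s ^ 2 * (if l = j then 1 else 0) := by
      intro l
      by_cases h1 : l = i
      · subst h1; simp [v, hei, hej, hij]
      · by_cases h2 : l = j
        · subst h2; simp [v, hei, hej, h1]
        · simp [v, hei, hej, h1, h2]
    simp [this, Finset.sum_add_distrib]
  have hvi : ∀ s ζ, ⟪v s, ζ⟫ = Real.cos s * ζ i + Real.sin s * ζ j := by
    intro s ζ
    have hs : ∀ l, ⟪EuclideanSpace.single l (1 : ℝ), ζ⟫ = ζ l := fun l => by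
      rw [EuclideanSpace.inner_single_left]; simp
    simp only [v, inner_add_left, inner_smul_left, hei, hej, hs]
    simp
  have hrefl : ∀ s ζ, (ℝ ∙ v s).reflection ζ = γ s ζ := by
    intro s ζ
    rw [Submodule.reflection_singleton_apply, hvi]
    simp only [γ, mul_smul]
    simp [ofNat_smul_eq_nsmul, hvn]
  have hconst : ∀ s, ∫ ζ, u.1 (t • γ s ζ) ∂(sphereM m) = ∫ ζ, u.1 (t • ζ) ∂(sphereM m) := by
    intro s
    rw [← integral_sphereM_comp ((ℝ ∙ v s).reflection) (fun ζ => u.1 (t • ζ))]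
    simp only [hrefl]
  have hder := hasDerivAt_integral_sphereM (m := m) (G := fun s ζ => u.1 (t • γ s ζ))
    (G' := fun s ζ => fderiv ℝ u.1 (t • γ s ζ) (t • γ' s ζ))
    (fun s => (smoothAlg_continuous u).comp
      ((hγc.comp (by fun_prop : Continuous fun ζ : Evec m => (s, ζ))).const_smul t))
    (((smoothAlg_continuous_fderiv u).comp (hγc.const_smul t)).clm_apply (hγc'.const_smul t))
    (fun s ζ => hasDerivAt_comp_path u ((hγ s ζ).const_smul t)) 0
  simp only [hconst] at hder
  have h0 := hder.unique (hasDerivAt_const (0 : ℝ) _)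
  set w := smoothX i * smoothD j u - smoothX j * smoothD i u with hw
  have hpt : ∀ ζ, fderiv ℝ u.1 (t • γ 0 ζ) (t • γ' 0 ζ) = 2 * w.1 (t • (ℝ ∙ v 0).reflection ζ) := by
    intro ζ
    rw [hrefl]
    have e1 : γ' 0 ζ = (2 * γ 0 ζ i) • ej - (2 * γ 0 ζ j) • ei := by
      have hi : γ 0 ζ i = ζ i := by simp [γ, v, hei]; ring
      have hj : γ 0 ζ j = - ζ j := by simp [γ, v, hei, Ne.symm hij]
      rw [hi, hj]
      simp [γ', v]
    rw [e1]
    change _ = 2 * ((((t • γ 0 ζ) i : ℝ) : ℂ) * fderiv ℝ u.1 (t • γ 0 ζ) ej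
      - (((t • γ 0 ζ) j : ℝ) : ℂ) * fderiv ℝ u.1 (t • γ 0 ζ) ei)
    simp only [map_smul, map_sub, PiLp.smul_apply, smul_eq_mul, Complex.real_smul]
    push_cast
    ring
  rw [integral_congr_ae (Eventually.of_forall hpt), integral_const_mul,
    integral_sphereM_comp ((ℝ ∙ v 0).reflection) (fun ζ => w.1 (t • ζ))] at h0
  rw [sph_apply]
  simpa using h0

lemma sphereNull_sph {m : ℕ} (ν : Fin m → ℂ) (hν : ∑ i, ν i * ν i = 0) (t : ℝ) :
    (smoothFrame ν hν).SphereNull (LinearMap.ker (sph (m := m) t)).toAddSubgroup := by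
  intro i w
  have h : ∑ j, sph t (smoothX j * smoothD i (smoothX j * w) - smoothX i * smoothD j (smoothX j * w))
      = 0 := Finset.sum_eq_zero fun j _ => sph_rotation j i _ t
  rw [← map_sum] at h
  change sph t _ = 0
  rw [← h]
  congr 1
  rw [NullFrame.eul_apply, NullFrame.rsq]
  simp only [smoothFrame, Derivation.leibniz, smul_eq_mul, smoothD_smoothX, mul_ite, mul_one,
    mul_zero, Finset.sum_sub_distrib, Finset.sum_add_distrib, mul_add, Finset.sum_mul,
    Finset.sum_ite_eq, Finset.sum_ite_eq', Finset.mem_univ, if_true, Finset.sum_const,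
    Finset.card_univ, Fintype.card_fin, nsmul_eq_mul]
  have e1 : ∑ j, smoothX j * (smoothX i * smoothD j w) = ∑ j, smoothX i * (smoothX j * smoothD j w) :=
    Finset.sum_congr rfl fun j _ => by ring
  have e2 : ∑ j, smoothX j * smoothX j * smoothD i w = ∑ j, smoothX j * (smoothX j * smoothD i w) :=
    Finset.sum_congr rfl fun j _ => by ring
  rw [e1, e2]
  ring

/-- The ideal of smooth functions vanishing on the ball of radius `ρ`. -/
def vanishIdeal (m : ℕ) (ρ : ℝ) : Ideal (smoothAlg m) where
  carrier := {w | ∀ x ∈ ball (0 : Evec m) ρ, w.1 x = 0}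
  add_mem' := fun {v w} hv hw => by
    rw [Set.mem_ofPred_eq] at hv hw ⊢
    intro x hx
    change v.1 x + w.1 x = 0
    rw [hv x hx, hw x hx, add_zero]
  zero_mem' := by
    rw [Set.mem_ofPred_eq]
    exact fun _ _ => rfl
  smul_mem' := fun v w hw => by
    rw [Set.mem_ofPred_eq] at hw ⊢
    intro x hx
    change v.1 x * w.1 x = 0
    rw [hw x hx, mul_zero]

lemma mem_vanishIdeal {m : ℕ} {ρ : ℝ} {w : smoothAlg m} :
    w ∈ vanishIdeal m ρ ↔ ∀ x ∈ ball (0 : Evec m) ρ, w.1 x = 0 := Iff.rfl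

lemma smoothD_mem_vanishIdeal {m : ℕ} {ρ : ℝ} (i : Fin m) {w : smoothAlg m}
    (hw : w ∈ vanishIdeal m ρ) : smoothD i w ∈ vanishIdeal m ρ := by
  rw [mem_vanishIdeal] at hw ⊢
  intro x hx
  have : w.1 =ᶠ[𝓝 x] fun _ => 0 := by
    filter_upwards [isOpen_ball.mem_nhds hx] with y hy using hw y hy
  rw [smoothD_apply, this.fderiv_eq]
  simp

lemma intCast_mul_mem_vanishIdeal {m : ℕ} {ρ : ℝ} (n : ℤ) (w : smoothAlg m) (hn : n ≠ 0)
    (hw : (n : smoothAlg m) * w ∈ vanishIdeal m ρ) : w ∈ vanishIdeal m ρ := by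
  rw [mem_vanishIdeal] at hw ⊢
  intro x hx
  have h := hw x hx
  have h2 : ((n : smoothAlg m) * w).1 x = (n : ℂ) * w.1 x := by
    change ((n : smoothAlg m)).1 x * _ = _
    simp
  rw [h2] at h
  simpa [hn] using h

lemma sph_eq_zero_of_mem {m : ℕ} {ρ t : ℝ} (ht : t ∈ Set.Ioo (-ρ) ρ) {w : smoothAlg m}
    (hw : w ∈ vanishIdeal m ρ) : sph t w = 0 := by
  rw [sph_apply]
  rw [integral_sphereM_congr (h := fun _ => 0) fun ζ hζ => hw _ ?_]
  · simp
  · rw [mem_ball_zero_iff, norm_smul, hζ, mul_one]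
    exact abs_lt.mpr ht

end SphereFunctional

section Moments

open scoped ContDiff
open MvPolynomial

lemma theta_sph_eul {m : ℕ} (ν : Fin m → ℂ) (hν : ∑ i, ν i * ν i = 0) (w : smoothAlg m) (t : ℝ) :
    theta (fun t => sph t w) t = sph t ((smoothFrame ν hν).eul w) := by
  rw [theta_sph, NullFrame.eul_apply]; rfl

lemma sph_const_mul {m : ℕ} (t : ℝ) (c : ℂ) (w : smoothAlg m) :
    sph t (algebraMap ℂ (smoothAlg m) c * w) = c * sph t w := by
  rw [← Algebra.smul_def, map_smul, smul_eq_mul]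

lemma smoothAlg_mul_apply {m : ℕ} (v w : smoothAlg m) (x : Evec m) :
    (v * w).1 x = v.1 x * w.1 x := rfl

lemma rsq_apply {m : ℕ} (ν : Fin m → ℂ) (hν : ∑ i, ν i * ν i = 0) (t : ℝ) {ζ : Evec m}
    (hζ : ‖ζ‖ = 1) : (smoothFrame ν hν).rsq.1 (t • ζ) = (t : ℂ) ^ 2 := by
  rw [NullFrame.rsq, smoothAlg_sum_apply, ← sum_sq_smul t hζ]
  rfl

lemma sph_rsq_mul {m : ℕ} (ν : Fin m → ℂ) (hν : ∑ i, ν i * ν i = 0) (w : smoothAlg m) (t : ℝ) :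
    sph t ((smoothFrame ν hν).rsq * w) = (t : ℂ) ^ 2 * sph t w := by
  rw [← sph_const_mul]
  refine sph_congr fun ζ hζ => ?_
  rw [smoothAlg_mul_apply, smoothAlg_mul_apply, rsq_apply ν hν t hζ]
  rfl

lemma iteratedDeriv_sph_wt {m k : ℕ} (hm : 4 < m) (ν : Fin m → ℂ) (hν : ∑ i, ν i * ν i = 0)
    {ρ : ℝ} {p : MvPolynomial (Fin m) (smoothAlg m)} (hp : p.IsHomogeneous k)
    (hh : ∑ i, pderiv i (pderiv i p) = 0)
    (hb : ∀ s, coeff s ((smoothFrame ν hν).bos ((m : ℤ) + 2 * k - 2) p) ∈ vanishIdeal m ρ)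
    (j : ℕ) : ∀ e, e + j = k + 1 → ∀ t ∈ Set.Ioo (-ρ) ρ,
      iteratedDeriv (2 * k + 1) (fun t => sph t ((smoothFrame ν hν).wt p e)) t = 0 := by
  induction j with
  | zero =>
    intro e he t _
    obtain rfl : e = k + 1 := by omega
    have : (smoothFrame ν hν).wt p (k + 1) = 0 := by
      rw [NullFrame.wt, NullFrame.dvg_iterate_succ_eq_zero _ hp, map_zero, mul_zero]
    simp [this]
  | succ j ih =>
    intro e he
    have hek : e ≤ k := by omega
    set F := smoothFrame ν hν with hF
    have hσ0 := ih (e + 1) (by omega)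
    set Y : smoothAlg m := ((m : smoothAlg m) + 2 * (k - e) - 2) *
      (F.eul (F.wt p e) + ((m : smoothAlg m) - 2 - 2 * (k - e)) * F.wt p e - 4 * F.vt p e)
      + 4 * (F.rsq * F.wt p (e + 1)) with hY
    have a2 : algebraMap ℂ (smoothAlg m) 2 = 2 := rfl
    have a4 : algebraMap ℂ (smoothAlg m) 4 = 4 := rfl
    have c1 : ((m : smoothAlg m) + 2 * (k - e) - 2)
        = algebraMap ℂ _ ((m : ℂ) + 2 * (k - e) - 2) := by simp [a2]
    have c2 : ((m : smoothAlg m) - 2 - 2 * (k - e))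
        = algebraMap ℂ _ ((m : ℂ) - 2 - 2 * (k - e)) := by simp [a2]
    have c3 : (4 : smoothAlg m) = algebraMap ℂ _ (4 : ℂ) := a4.symm
    have c4 : (2 * k : smoothAlg m) = algebraMap ℂ _ (2 * k : ℂ) := by simp [a2]
    have c5 : ((m : smoothAlg m) - 4 - 2 * e) = algebraMap ℂ _ ((m : ℂ) - 4 - 2 * e) := by
      simp [a2, a4]
    have c6 : ((e : smoothAlg m) + 1) * (k - e) = algebraMap ℂ _ (((e : ℂ) + 1) * (k - e)) := by
      simp
    refine radial_system hm hek (contDiff_sph (F.wt p e)) (contDiff_sph (F.vt p e))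
      (contDiff_sph (F.wt p (e + 1))) (fun t => sph_neg _ t) hσ0
      (Y := fun t => sph t Y) ?_ ?_ ?_
    · funext t
      rw [hY, c1, c2, c3, map_add, sph_const_mul, sph_const_mul, map_sub, map_add, sph_const_mul,
        sph_const_mul, sph_rsq_mul, theta_sph_eul ν hν]
    · intro t ht
      have h := F.eqA (sphereNull_sph ν hν t) hp hh (J := vanishIdeal m ρ)
        (fun a ha => sph_eq_zero_of_mem ht ha) (fun i a ha => smoothD_mem_vanishIdeal i ha)
        (fun n a hn ha => intCast_mul_mem_vanishIdeal n a hn ha) hm hb hek Y hY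
      have h' := LinearMap.mem_ker.mp ((Submodule.mem_toAddSubgroup _).mp h)
      rw [map_sub, c4, sph_const_mul] at h'
      rw [theta_sph_eul ν hν]
      exact h'
    · intro t ht
      have h := F.eqB (sphereNull_sph ν hν t) hp hh hek
      have h' := LinearMap.mem_ker.mp ((Submodule.mem_toAddSubgroup _).mp h)
      rw [map_sub, map_sub, map_add, c5, c6, sph_const_mul, sph_const_mul, sph_rsq_mul] at h'
      rw [theta_sph_eul ν hν]
      exact h'

/-- Point evaluation on the algebra of smooth functions. -/
def evalPt {m : ℕ} (x : Evec m) : smoothAlg m →+* ℂ :=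
  (Pi.evalRingHom (fun _ : Evec m => ℂ) x).comp (smoothAlg m).subtype

lemma evalPt_apply {m : ℕ} (x : Evec m) (w : smoothAlg m) : evalPt x w = w.1 x := rfl

/-- The complexified reflection in a real unit vector. -/
def creflv {m : ℕ} (ζ : Evec m) (ν : Fin m → ℂ) (j : Fin m) : ℂ :=
  ν j - 2 * (∑ i, ν i * ((ζ i : ℝ) : ℂ)) * ((ζ j : ℝ) : ℂ)

lemma continuous_creflv {m : ℕ} (ν : Fin m → ℂ) (j : Fin m) :
    Continuous (fun ζ : Evec m => creflv ζ ν j) := by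
  unfold creflv
  have h : ∀ i, Continuous (fun ζ : Evec m => ((ζ i : ℝ) : ℂ)) := fun i =>
    Complex.continuous_ofReal.comp (by fun_prop)
  fun_prop

lemma eval₂_const_mul {σ R S : Type*} [CommSemiring R] [CommSemiring S] [Fintype σ] {k : ℕ}
    (f : R →+* S) (g : σ → S) (c : S) {p : MvPolynomial σ R} (hp : p.IsHomogeneous k) :
    eval₂ f (fun j => c * g j) p = c ^ k * eval₂ f g p := by
  rw [eval₂_eq', eval₂_eq', Finset.mul_sum]
  refine Finset.sum_congr rfl fun s hs => ?_
  have hd : ∑ i, s i = k := by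
    have := hp (mem_support_iff.mp hs)
    rw [← this, Finsupp.weight_apply, Finsupp.sum_fintype] <;> simp
  simp only [mul_pow, Finset.prod_mul_distrib, Finset.prod_pow_eq_pow_sum, hd]
  ring

/-- The reflected spherical moment. -/
def moment {m : ℕ} (ν : Fin m → ℂ) (p : MvPolynomial (Fin m) (smoothAlg m)) (t : ℝ) : ℂ :=
  ∫ ζ, eval₂ (evalPt (t • ζ)) (creflv ζ ν) p ∂(sphereM m)

lemma contDiff_moment {m : ℕ} (ν : Fin m → ℂ) (p : MvPolynomial (Fin m) (smoothAlg m)) :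
    ContDiff ℝ ∞ (moment ν p) := by
  have hc : ∀ s : Fin m →₀ ℕ, Continuous (fun ζ : Evec m => ∏ i, creflv ζ ν i ^ s i) :=
    fun s => continuous_finsetProd _ fun i _ => (continuous_creflv ν i).pow _
  have h : moment ν p = fun t => ∑ s ∈ p.support,
      wsph (fun ζ => ∏ i, creflv ζ ν i ^ s i) (coeff s p) t := by
    funext t
    unfold moment wsph
    rw [← integral_finsetSum]
    · refine integral_congr_ae (Eventually.of_forall fun ζ => ?_)
      change eval₂ _ _ _ = _
      rw [eval₂_eq']
      exact Finset.sum_congr rfl fun s _ => mul_comm _ _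
    · intro s _
      exact integrable_sphereM ((hc s).mul ((smoothAlg_continuous _).comp (by fun_prop)))
  rw [h]
  exact ContDiff.sum fun s _ => contDiff_wsph (hc s) _

lemma sph_ev {m k : ℕ} (ν : Fin m → ℂ) (hν : ∑ i, ν i * ν i = 0)
    {p : MvPolynomial (Fin m) (smoothAlg m)} (hp : p.IsHomogeneous k) (t : ℝ) :
    sph t ((smoothFrame ν hν).wt p 0) = (t : ℂ) ^ (2 * k) * moment ν p t := by
  rw [sph_apply, moment, ← integral_const_mul]
  refine integral_sphereM_congr fun ζ hζ => ?_
  rw [pow_mul, ← eval₂_const_mul _ _ _ hp, NullFrame.wt, pow_zero, one_mul, Function.iterate_zero,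
    id, ← evalPt_apply, NullFrame.ev, MvPolynomial.eval, coe_eval₂Hom, eval₂_comp_left]
  rw [RingHom.comp_id]
  congr 1
  funext j
  have h1 : (smoothFrame ν hν).ell.1 (t • ζ) = t * ∑ i, ν i * ((ζ i : ℝ) : ℂ) := by
    rw [NullFrame.ell, smoothAlg_sum_apply, Finset.mul_sum]
    refine Finset.sum_congr rfl fun i _ => ?_
    change ν i * (((t • ζ) i : ℝ) : ℂ) = _
    simp; ring
  change (smoothFrame ν hν).rsq.1 (t • ζ) * ν j
    - 2 * (smoothFrame ν hν).ell.1 (t • ζ) * (((t • ζ) j : ℝ) : ℂ) = _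
  rw [rsq_apply ν hν t hζ, h1, creflv]
  simp; ring

theorem moment_eq {m k : ℕ} (hm : 4 < m) (ν : Fin m → ℂ) (hν : ∑ i, ν i * ν i = 0)
    {ρ : ℝ} {p : MvPolynomial (Fin m) (smoothAlg m)} (hp : p.IsHomogeneous k)
    (hh : ∑ i, pderiv i (pderiv i p) = 0)
    (hb : ∀ s, coeff s ((smoothFrame ν hν).bos ((m : ℤ) + 2 * k - 2) p) ∈ vanishIdeal m ρ)
    {t : ℝ} (ht : t ∈ Set.Ioo (-ρ) ρ) : moment ν p t = moment ν p 0 := by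
  have h := iteratedDeriv_sph_wt hm ν hν hp hh hb (k + 1) 0 (by omega)
  have hd := deriv_eq_zero_of_iteratedDeriv k (contDiff_moment ν p)
    (fun t => sph_ev ν hν hp t) h
  exact eq_of_deriv_eq_zero (differentiable_of_smooth (contDiff_moment ν p)) hd ht

end Moments

section NullCone

open MvPolynomial

lemma usq_ne_zero {m : ℕ} (hm : 0 < m) :
    (NullFrame.usq : MvPolynomial (Fin m) ℂ) ≠ 0 := by
  intro h
  have := congrArg (eval fun i => if i = ⟨0, hm⟩ then (1 : ℂ) else 0) h
  simp [NullFrame.usq] at this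

lemma isHomogeneous_usq {m : ℕ} : (NullFrame.usq : MvPolynomial (Fin m) ℂ).IsHomogeneous 2 :=
  IsHomogeneous.sum _ _ _ fun i _ => (isHomogeneous_X ℂ i).mul (isHomogeneous_X ℂ i)

lemma usq_dvd {m : ℕ} (hm : 2 ≤ m) {q : MvPolynomial (Fin m) ℂ}
    (hq : ∀ ν : Fin m → ℂ, ∑ i, ν i * ν i = 0 → eval ν q = 0) : NullFrame.usq ∣ q := by
  obtain ⟨n, rfl⟩ : ∃ n, m = n + 1 := ⟨m - 1, by omega⟩
  have hn : 0 < n := by omega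
  set s : MvPolynomial (Fin n) ℂ := NullFrame.usq with hs
  have hU : finSuccEquiv ℂ n NullFrame.usq = Polynomial.X ^ 2 + Polynomial.C s := by
    rw [NullFrame.usq, map_sum, Fin.sum_univ_succ, hs, NullFrame.usq, map_sum]
    simp only [map_mul, finSuccEquiv_X_zero, finSuccEquiv_X_succ]
    rw [sq]
  set D : Polynomial (MvPolynomial (Fin n) ℂ) := Polynomial.X ^ 2 + Polynomial.C s with hD
  have hmon : D.Monic := Polynomial.monic_X_pow_add_C s two_ne_zero
  have hdeg : D.natDegree = 2 := Polynomial.natDegree_X_pow_add_C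
  set Q := finSuccEquiv ℂ n q with hQ
  have hdiv := Polynomial.modByMonic_add_div Q D
  set M := Q %ₘ D with hM
  have hMd : M.natDegree < 2 := by
    have := Polynomial.natDegree_modByMonic_lt Q hmon (by
      intro h; rw [h] at hdeg; simp at hdeg)
    rwa [hdeg] at this
  have hMe : M = Polynomial.C (M.coeff 1) * Polynomial.X + Polynomial.C (M.coeff 0) :=
    Polynomial.eq_X_add_C_of_natDegree_le_one (by omega)
  -- evaluation of the division identity at null vectors
  have hev : ∀ (c : Fin n → ℂ) (z : ℂ), z ^ 2 + eval c s = 0 →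
      eval c (M.coeff 1) * z + eval c (M.coeff 0) = 0 := by
    intro c z hz
    have h1 : Polynomial.eval z (Polynomial.map (eval c) Q) = 0 := by
      have h2 := hq (Fin.cons z c) (by
        rw [Fin.sum_univ_succ]
        simp only [Fin.cons_zero, Fin.cons_succ]
        rw [← hz, hs, NullFrame.usq, map_sum, sq]
        simp)
      rwa [eval_eq_eval_mv_eval'] at h2
    rw [← hdiv, hMe] at h1
    simp only [Polynomial.map_add, Polynomial.map_mul, Polynomial.map_C, Polynomial.map_X,
      Polynomial.eval_add, Polynomial.eval_mul, Polynomial.eval_C, Polynomial.eval_X, hD,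
      Polynomial.map_pow, Polynomial.eval_pow, hz, zero_mul, add_zero] at h1
    simpa using h1
  have hboth : ∀ c : Fin n → ℂ, eval c (M.coeff 0) = 0 ∧ eval c (M.coeff 1 * M.coeff 1 * s) = 0 := by
    intro c
    obtain ⟨z, hz⟩ := IsAlgClosed.exists_pow_nat_eq (-(eval c s)) (n := 2) (by norm_num)
    have h1 := hev c z (by rw [hz]; ring)
    have h2 := hev c (-z) (by rw [neg_sq, hz]; ring)
    have h3 : eval c (M.coeff 1) * z = 0 := by linear_combination (h1 - h2) / 2
    refine ⟨by linear_combination (h1 + h2) / 2, ?_⟩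
    rw [map_mul, map_mul]
    have : eval c s = -z ^ 2 := by rw [hz]; ring
    rw [this]
    linear_combination (-(eval c (M.coeff 1)) * z) * h3
  have h0 : M.coeff 0 = 0 := MvPolynomial.funext fun c => by rw [(hboth c).1, map_zero]
  have h1 : M.coeff 1 = 0 := by
    have : M.coeff 1 * M.coeff 1 * s = 0 :=
      MvPolynomial.funext fun c => by rw [(hboth c).2, map_zero]
    rcases mul_eq_zero.mp this with h | h
    · exact mul_self_eq_zero.mp h
    · exact absurd h (usq_ne_zero hn)
  have hM0 : M = 0 := by rw [hMe, h0, h1]; simp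
  rw [hM0, zero_add] at hdiv
  have : finSuccEquiv ℂ n NullFrame.usq ∣ finSuccEquiv ℂ n q := by
    rw [hU]; exact ⟨_, hdiv.symm⟩
  exact (map_dvd_iff (finSuccEquiv ℂ n)).mp this

/-- The Laplacian of polynomials. -/
def plap {m : ℕ} (p : MvPolynomial (Fin m) ℂ) : MvPolynomial (Fin m) ℂ :=
  ∑ i, pderiv i (pderiv i p)

lemma plap_usq_mul {m d : ℕ} {h : MvPolynomial (Fin m) ℂ} (hh : h.IsHomogeneous d) :
    plap (NullFrame.usq * h) = NullFrame.usq * plap h + ((4 * d + 2 * m : ℕ) : MvPolynomial (Fin m) ℂ) * h := by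
  have hd : ∀ i, pderiv i (NullFrame.usq : MvPolynomial (Fin m) ℂ) = 2 * X i := by
    intro i
    simp [NullFrame.usq, pderiv_X, Pi.single_apply, Finset.sum_add_distrib]
    ring
  have h2 : ∀ i, pderiv i (2 * X i : MvPolynomial (Fin m) ℂ) = 2 := by
    intro i
    have : (2 : MvPolynomial (Fin m) ℂ) = C 2 := rfl
    rw [this, pderiv_C_mul, pderiv_X_self, mul_one]
  have he := hh.sum_X_mul_pderiv
  have hi : ∀ i, pderiv i (pderiv i (NullFrame.usq * h))
      = NullFrame.usq * pderiv i (pderiv i h) + 4 * (X i * pderiv i h) + 2 * h := by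
    intro i
    simp only [pderiv_mul, map_add, hd, h2]
    ring
  simp only [plap, hi, Finset.sum_add_distrib, ← Finset.mul_sum, he, Finset.sum_const,
    Finset.card_univ, Fintype.card_fin, nsmul_eq_mul]
  push_cast
  ring

lemma isHomogeneous_plap {m d : ℕ} {h : MvPolynomial (Fin m) ℂ} (hh : h.IsHomogeneous (d + 2)) :
    (plap h).IsHomogeneous d :=
  IsHomogeneous.sum _ _ _ fun i _ => by simpa using hh.pderiv.pderiv

lemma plap_eq_zero {m d : ℕ} {h : MvPolynomial (Fin m) ℂ} (hh : h.IsHomogeneous d) (hd : d < 2) :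
    plap h = 0 := by
  refine Finset.sum_eq_zero fun i _ => ?_
  have h0 : (pderiv i h).IsHomogeneous 0 := by
    have := hh.pderiv (i := i)
    rwa [show d - 1 = 0 by omega] at this
  rw [← totalDegree_zero_iff_isHomogeneous, totalDegree_eq_zero_iff_eq_C] at h0
  rw [h0, pderiv_C]

lemma eq_zero_of_usq_mul_plap {m : ℕ} (d : ℕ) : ∀ {h : MvPolynomial (Fin m) ℂ} {c : ℕ},
    h.IsHomogeneous d → 0 < c →
    NullFrame.usq * plap h + (c : MvPolynomial (Fin m) ℂ) * h = 0 → h = 0 := by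
  induction d using Nat.strong_induction_on with
  | _ d ih =>
    intro h c hh hc he
    have hc0 : (c : MvPolynomial (Fin m) ℂ) ≠ 0 := by exact_mod_cast hc.ne'
    by_cases hd : d < 2
    · rw [plap_eq_zero hh hd, mul_zero, zero_add] at he
      exact (mul_eq_zero.mp he).resolve_left hc0
    · obtain ⟨d, rfl⟩ : ∃ e, d = e + 2 := ⟨d - 2, by omega⟩
      have hp := isHomogeneous_plap hh
      have hch : (c : MvPolynomial (Fin m) ℂ) * h = - (NullFrame.usq * plap h) := by
        linear_combination he
      have hl : ∀ g : MvPolynomial (Fin m) ℂ, plap ((c : MvPolynomial (Fin m) ℂ) * g)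
          = (c : MvPolynomial (Fin m) ℂ) * plap g := by
        intro g
        have : (c : MvPolynomial (Fin m) ℂ) = C (c : ℂ) := by simp
        simp only [plap, this, pderiv_C_mul, Finset.mul_sum]
      have hn : ∀ g : MvPolynomial (Fin m) ℂ, plap (-g) = - plap g := by
        intro g; simp [plap]
      have h1 := congrArg plap hch
      rw [hl, hn, plap_usq_mul hp] at h1
      have h2 := ih d (by omega) hp (c := c + (4 * d + 2 * m)) (by omega) (by
        push_cast at h1 ⊢
        linear_combination h1)
      rw [h2, mul_zero, zero_add] at he
      exact (mul_eq_zero.mp he).resolve_left hc0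

lemma homogeneousComponent_mul_of_le {m d n : ℕ} {g h : MvPolynomial (Fin m) ℂ}
    (hg : g.IsHomogeneous d) (hd : d ≤ n) :
    homogeneousComponent n (g * h) = g * homogeneousComponent (n - d) h := by
  let _ := gradedAlgebra (R := ℂ) (σ := Fin m)
  have := DirectSum.coe_decompose_mul_of_left_mem_of_le
    (homogeneousSubmodule (Fin m) ℂ) hg hd (b := h)
  simp only [← decomposition.decompose'_apply]
  exact this

lemma homogeneousComponent_mul_of_lt {m d n : ℕ} {g h : MvPolynomial (Fin m) ℂ}
    (hg : g.IsHomogeneous d) (hd : n < d) : homogeneousComponent n (g * h) = 0 := by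
  let _ := gradedAlgebra (R := ℂ) (σ := Fin m)
  have := DirectSum.coe_decompose_mul_of_left_mem_of_not_le
    (homogeneousSubmodule (Fin m) ℂ) hg (not_le.mpr hd) (b := h)
  simp only [← decomposition.decompose'_apply]
  exact this

theorem eq_zero_of_null_cone {m k : ℕ} (hm : 2 ≤ m) {q : MvPolynomial (Fin m) ℂ}
    (hk : q.IsHomogeneous k) (hh : plap q = 0)
    (hq : ∀ ν : Fin m → ℂ, ∑ i, ν i * ν i = 0 → eval ν q = 0) : q = 0 := by
  obtain ⟨h, rfl⟩ := usq_dvd hm hq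
  by_cases h2 : 2 ≤ k
  · have hg : NullFrame.usq * h = NullFrame.usq * homogeneousComponent (k - 2) h := by
      rw [← homogeneousComponent_mul_of_le isHomogeneous_usq h2,
        homogeneousComponent_of_mem hk, if_pos rfl]
    have hc := homogeneousComponent_isHomogeneous (k - 2) h
    rw [hg] at hh ⊢
    rw [plap_usq_mul hc] at hh
    rw [eq_zero_of_usq_mul_plap (k - 2) hc (by omega) hh, mul_zero]
  · have h0 := homogeneousComponent_mul_of_lt (h := h) (isHomogeneous_usq (m := m)) (not_le.mp h2)
    rwa [homogeneousComponent_of_mem hk, if_pos rfl] at h0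

end NullCone

section ReflectionConstant

open scoped ContDiff
open MvPolynomial

namespace NullFrame

variable {m : ℕ} {R : Type*} [CommRing R] (T : NullFrame m R)

/-- The partially reflected vector `n - ⟨n, x⟩ x`. -/
def shear (n : Fin m → R) (j : Fin m) : R := n j - (∑ i, n i * T.x i) * T.x j

variable {n : Fin m → R}

lemma d_sum_mul_x (hn : ∀ i j, T.d i (n j) = 0) (i : Fin m) :
    T.d i (∑ j, n j * T.x j) = n i := by
  simp [Derivation.leibniz, hn, T.d_x]

lemma d_shear (hn : ∀ i j, T.d i (n j) = 0) (i j : Fin m) : T.d i (T.shear n j)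
    = - n i * T.x j - (∑ i, n i * T.x i) * (if i = j then 1 else 0) := by
  rw [shear, map_sub, hn, Derivation.leibniz, d_sum_mul_x T hn, T.d_x, smul_eq_mul, smul_eq_mul]
  ring

lemma d_eval_shear (hn : ∀ i j, T.d i (n j) = 0) {h : MvPolynomial (Fin m) R}
    (hc : ∀ i, T.pd i h = 0) (i : Fin m) : T.d i (eval (T.shear n) h)
    = - n i * (∑ j, T.x j * eval (T.shear n) (pderiv j h))
      - (∑ i, n i * T.x i) * eval (T.shear n) (pderiv i h) := by
  have hc' : coeffMap (T.d i : R →+ R) h = 0 := hc i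
  rw [derivation_eval, hc', map_zero, zero_add]
  simp only [d_shear T hn, sub_mul, Finset.sum_sub_distrib, mul_ite, mul_one, mul_zero, ite_mul,
    zero_mul, Finset.sum_ite_eq, Finset.mem_univ, if_true, Finset.mul_sum, mul_assoc]

lemma pd_pderiv_eq_zero {h : MvPolynomial (Fin m) R} (hc : ∀ i, T.pd i h = 0) (j i : Fin m) :
    T.pd i (pderiv j h) = 0 := by
  rw [pd, coeffMap_pderiv]
  have : coeffMap (T.d i : R →+ R) h = 0 := hc i
  rw [this, map_zero]

lemma eul_eval_shear (hn : ∀ i j, T.d i (n j) = 0) {h : MvPolynomial (Fin m) R}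
    (hc : ∀ i, T.pd i h = 0) : T.eul (eval (T.shear n) h)
    = - 2 * ((∑ i, n i * T.x i) * ∑ j, T.x j * eval (T.shear n) (pderiv j h)) := by
  rw [eul_apply]
  simp only [d_eval_shear T hn hc, mul_sub, Finset.sum_sub_distrib]
  set l := ∑ i, n i * T.x i with hl
  set B := ∑ j, T.x j * eval (T.shear n) (pderiv j h) with hB
  have h1 : ∑ i, T.x i * (-n i * B) = - (l * B) := by
    rw [hl, Finset.sum_mul, ← Finset.sum_neg_distrib]
    exact Finset.sum_congr rfl fun i _ => by ring
  have h2 : ∑ i, T.x i * (l * eval (T.shear n) (pderiv i h)) = l * B := by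
    rw [hB, Finset.mul_sum]
    exact Finset.sum_congr rfl fun i _ => by ring
  rw [h1, h2]; ring

/-- Derivative of a polynomial in the direction of `n`. -/
def dir (n : Fin m → R) (h : MvPolynomial (Fin m) R) : MvPolynomial (Fin m) R :=
  ∑ j, C (n j) * pderiv j h

lemma pd_dir_eq_zero (hn : ∀ i j, T.d i (n j) = 0) {h : MvPolynomial (Fin m) R}
    (hc : ∀ i, T.pd i h = 0) (i : Fin m) : T.pd i (dir n h) = 0 := by
  rw [dir, map_sum]
  refine Finset.sum_eq_zero fun j _ => ?_
  ext s
  have h1 := congrArg (coeff s) (T.pd_pderiv_eq_zero hc j i)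
  rw [pd, coeff_coeffMap] at h1 ⊢
  change T.d i _ = _ at h1
  change T.d i _ = _
  rw [coeff_C_mul, Derivation.leibniz, hn, h1]
  simp

lemma eval_dir (h : MvPolynomial (Fin m) R) (y : Fin m → R) :
    eval y (dir n h) = ∑ j, n j * eval y (pderiv j h) := by
  simp [dir]

lemma eval_dir_shear {K : ℤ} {h : MvPolynomial (Fin m) R} (hK : HasDeg K h) :
    eval (T.shear n) (dir n h) = K * eval (T.shear n) h
      + (∑ i, n i * T.x i) * ∑ j, T.x j * eval (T.shear n) (pderiv j h) := by
  have h1 := congrArg (eval (T.shear n)) hK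
  rw [map_sum, map_mul, map_intCast] at h1
  rw [← h1, eval_dir, Finset.mul_sum, ← Finset.sum_add_distrib]
  refine Finset.sum_congr rfl fun j _ => ?_
  rw [map_mul, eval_X, shear]; ring

lemma sum_d_shear (hn : ∀ i j, T.d i (n j) = 0) {h : MvPolynomial (Fin m) R}
    (hc : ∀ i, T.pd i h = 0) (hh : ∑ i, pderiv i (pderiv i h) = 0) :
    2 * ∑ i, T.d i ((∑ i, n i * T.x i) * eval (T.shear n) (pderiv i h))
      = 2 * eval (T.shear n) (dir n h) + T.eul (eval (T.shear n) (dir n h)) := by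
  rw [eul_eval_shear T hn (T.pd_dir_eq_zero hn hc)]
  set l := ∑ i, n i * T.x i with hl
  have h1 : ∀ i, T.d i (l * eval (T.shear n) (pderiv i h))
      = n i * eval (T.shear n) (pderiv i h)
        - l * (n i * ∑ j, T.x j * eval (T.shear n) (pderiv j (pderiv i h)))
        - l * l * eval (T.shear n) (pderiv i (pderiv i h)) := by
    intro i
    rw [Derivation.leibniz, hl, T.d_sum_mul_x hn, d_eval_shear T hn (T.pd_pderiv_eq_zero hc i),
      smul_eq_mul, smul_eq_mul]
    ring
  have h2 : ∑ j, T.x j * eval (T.shear n) (pderiv j (dir n h))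
      = ∑ i, n i * ∑ j, T.x j * eval (T.shear n) (pderiv j (pderiv i h)) := by
    simp only [dir, map_sum, pderiv_C_mul, map_mul, eval_C, Finset.mul_sum]
    rw [Finset.sum_comm]
    exact Finset.sum_congr rfl fun i _ => Finset.sum_congr rfl fun j _ => by ring
  simp only [h1, Finset.sum_sub_distrib, ← Finset.mul_sum, ← map_sum, hh, map_zero, mul_zero,
    sub_zero]
  rw [h2, eval_dir]; ring

end NullFrame

end ReflectionConstant

section ReflectionIntegral

open scoped ContDiff
open MvPolynomial

/-- The smooth frame with vanishing null vector. -/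
def coordFrame (m : ℕ) : NullFrame m (smoothAlg m) := smoothFrame 0 (by simp)

lemma radial_conservation {s v : ℝ → ℂ} {c K : ℂ} (hs : ContDiff ℝ ∞ s) (hv : ContDiff ℝ ∞ v)
    (h1 : ∀ t, theta s t = -2 * v t)
    (h2 : ∀ t : ℝ, 2 * (theta v t + c * v t) = (t : ℂ) ^ 2 *
      (2 * (K * s t + v t) + (K * theta s t + theta v t))) (t : ℝ) :
    (c + K * (t : ℂ) ^ 2) * s t - (2 - (t : ℂ) ^ 2) * v t = c * s 0 - 2 * v 0 := by
  set H : ℝ → ℂ := fun t => (c + K * (t : ℂ) ^ 2) * s t - (2 - (t : ℂ) ^ 2) * v t with hH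
  have hsq : ∀ t : ℝ, HasDerivAt (fun t : ℝ => (t : ℂ) ^ 2) (2 * (t : ℂ)) t := fun t => by
    simpa using (hasDerivAt_ofReal t).fun_pow 2
  have hder : ∀ t : ℝ, HasDerivAt H (K * (2 * (t : ℂ)) * s t + (c + K * (t : ℂ) ^ 2) * deriv s t
      - (-(2 * (t : ℂ)) * v t + (2 - (t : ℂ) ^ 2) * deriv v t)) t := fun t =>
    ((((hsq t).const_mul K).const_add c).mul (differentiable_of_smooth hs t).hasDerivAt).sub
      (((hsq t).const_sub 2).mul (differentiable_of_smooth hv t).hasDerivAt)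
  have hc : ContDiff ℝ ∞ H :=
    ((contDiff_const.add (contDiff_const.mul (contDiff_ofReal.pow 2))).mul hs).sub
      ((contDiff_const.sub (contDiff_ofReal.pow 2)).mul hv)
  have hne : ∀ t : ℝ, t ≠ 0 → deriv H t = 0 := by
    intro t ht
    have ht' : (t : ℂ) ≠ 0 := by exact_mod_cast ht
    refine (mul_eq_zero.mp ?_).resolve_left ht'
    have e1 := h1 t
    have e2 := h2 t
    simp only [theta] at e1 e2
    rw [(hder t).deriv]
    linear_combination c * e1 - e2
  have hz : ∀ t, deriv H t = 0 := by
    have hcl : IsClosed {t : ℝ | deriv H t = 0} :=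
      isClosed_eq (contDiff_deriv hc).continuous continuous_const
    have hd : Dense {t : ℝ | deriv H t = 0} :=
      (dense_compl_singleton (0 : ℝ)).mono fun t ht => by
        rw [Set.mem_ofPred_eq]; exact hne t ht
    intro t
    have := hcl.closure_eq ▸ hd t
    rwa [Set.mem_ofPred_eq] at this
  have := is_const_of_deriv_eq_zero (differentiable_of_smooth hc) hz t 0
  simpa [hH] using this

theorem integral_eval_creflv {m k : ℕ} (ν : Fin m → ℂ) {p : MvPolynomial (Fin m) ℂ}
    (hp : p.IsHomogeneous k) (hh : ∑ i, pderiv i (pderiv i p) = 0) :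
    ((m : ℂ) + 2 * k - 2) * ∫ ζ, eval (creflv ζ ν) p ∂(sphereM m)
      = ((m : ℂ) - 2) * (omegaS m * eval ν p) := by
  set T := coordFrame m with hT
  set n : Fin m → smoothAlg m := fun i => algebraMap ℂ (smoothAlg m) (ν i) with hn
  have hdn : ∀ i j, T.d i (n j) = 0 := fun i j => smoothD_const i (ν j)
  set h : MvPolynomial (Fin m) (smoothAlg m) := MvPolynomial.map (algebraMap ℂ (smoothAlg m)) p with hh'
  have hc : ∀ i, T.pd i h = 0 := by
    intro i
    ext1 σ
    rw [NullFrame.pd, coeff_coeffMap, hh', coeff_map]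
    exact smoothD_const i _
  have hharm : ∑ i, pderiv i (pderiv i h) = 0 := by
    have := congrArg (MvPolynomial.map (algebraMap ℂ (smoothAlg m))) hh
    simpa only [map_sum, ← pderiv_map, map_zero] using this
  have hK : NullFrame.HasDeg (k : ℤ) h := NullFrame.hasDeg_of_isHomogeneous (hp.map _)
  set l : smoothAlg m := ∑ i, n i * T.x i with hl
  set S : smoothAlg m := eval (T.shear n) h with hS
  set V : smoothAlg m := l * ∑ j, T.x j * eval (T.shear n) (pderiv j h) with hV
  have hSE : T.eul S = -2 * V := T.eul_eval_shear hdn hc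
  have hdir : eval (T.shear n) (NullFrame.dir n h) = (k : smoothAlg m) * S + V := by
    have := T.eval_dir_shear (n := n) hK
    rw [Int.cast_natCast] at this
    exact this
  have a2 : algebraMap ℂ (smoothAlg m) 2 = 2 := rfl
  have am2 : algebraMap ℂ (smoothAlg m) (-2) = -2 := by rw [map_neg, a2]
  have ak : algebraMap ℂ (smoothAlg m) (k : ℂ) = (k : smoothAlg m) := by simp
  have am : algebraMap ℂ (smoothAlg m) ((m : ℂ) - 2) = (m : smoothAlg m) - 2 := by simp [a2]
  have hdiv : ∀ t, sph t (2 * (T.eul V + ((m : smoothAlg m) - 2) * V))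
      = sph t (T.rsq * (2 * ((k : smoothAlg m) * S + V) + ((k : smoothAlg m) * T.eul S + T.eul V))) := by
    intro t
    have h1 := T.div_mem (sphereNull_sph 0 (by simp) t) fun i => l * eval (T.shear n) (pderiv i h)
    have h1' := LinearMap.mem_ker.mp ((Submodule.mem_toAddSubgroup _).mp h1)
    have h2 : ∑ i, T.x i * (l * eval (T.shear n) (pderiv i h)) = V := by
      rw [hV, Finset.mul_sum]; exact Finset.sum_congr rfl fun i _ => by ring
    have h3 := T.sum_d_shear hdn hc hharm
    rw [hdir, map_add, Derivation.leibniz, Derivation.map_natCast, smul_zero, add_zero,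
      smul_eq_mul] at h3
    rw [h2] at h1'
    rw [← h3]
    have h4 := congrArg (fun z => (2 : ℂ) * z) h1'
    simp only [mul_zero] at h4
    rw [← sph_const_mul, a2] at h4
    rw [← sub_eq_zero, ← neg_eq_zero, ← map_sub, ← map_neg, ← h4]
    congr 1
    ring
  have hcons := radial_conservation (s := fun t => sph t S) (v := fun t => sph t V)
    (c := (m : ℂ) - 2) (K := (k : ℂ)) (contDiff_sph S) (contDiff_sph V)
    (fun t => by
      rw [theta_sph_eul 0 (by simp)]
      change sph t (T.eul S) = _
      rw [hSE, ← am2, sph_const_mul])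
    (fun t => by
      rw [theta_sph_eul 0 (by simp), theta_sph_eul 0 (by simp)]
      have h1 := hdiv t
      rw [← ak, ← am, ← a2] at h1
      rw [sph_const_mul, map_add, sph_const_mul] at h1
      rw [hT, coordFrame, sph_rsq_mul, map_add, map_add, sph_const_mul, map_add, sph_const_mul,
        sph_const_mul] at h1
      exact h1)
    (Real.sqrt 2)
  have hS_apply : ∀ x : Evec m, S.1 x
      = eval (fun j => ν j - (∑ i, ν i * ((x i : ℝ) : ℂ)) * ((x j : ℝ) : ℂ)) p := by
    intro x
    have hl' : l.1 x = ∑ i, ν i * ((x i : ℝ) : ℂ) := by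
      rw [hl, smoothAlg_sum_apply]; rfl
    rw [← evalPt_apply, hS, hh', MvPolynomial.eval, coe_eval₂Hom, eval₂_comp_left, eval₂_map]
    rw [MvPolynomial.eval, coe_eval₂Hom]
    have e1 : ((evalPt x).comp (RingHom.id _)).comp (algebraMap ℂ (smoothAlg m))
        = RingHom.id ℂ := by
      ext z; rfl
    rw [e1]
    congr 1
    funext j
    rw [← hl']
    rfl
  have hs0 : sph 0 S = omegaS m * eval ν p := by
    rw [sph_apply]
    simp only [zero_smul, hS_apply]
    simp [omegaS, Measure.real]
  have hv0 : sph 0 V = 0 := by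
    rw [sph_apply]
    have : ∀ ζ : Evec m, V.1 ((0 : ℝ) • ζ) = 0 := by
      intro ζ
      rw [hV, smoothAlg_mul_apply, hl, smoothAlg_sum_apply]
      have : ∀ i, (n i * T.x i).1 ((0 : ℝ) • ζ) = 0 := by
        intro i
        change ν i * ((((0 : ℝ) • ζ) i : ℝ) : ℂ) = 0
        simp
      rw [Finset.sum_eq_zero fun i _ => this i, zero_mul]
    simp only [this, integral_zero]
  have hs2 : sph (Real.sqrt 2) S = ∫ ζ, eval (creflv ζ ν) p ∂(sphereM m) := by
    rw [sph_apply]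
    refine integral_congr_ae (Eventually.of_forall fun ζ => ?_)
    change S.1 _ = _
    rw [hS_apply]
    congr 2
    funext j
    have h2 : ((Real.sqrt 2 : ℝ) : ℂ) * ((Real.sqrt 2 : ℝ) : ℂ) = 2 := by
      rw [← Complex.ofReal_mul, Real.mul_self_sqrt (by norm_num)]; norm_num
    have h3 : ∑ i, ν i * ((((Real.sqrt 2) • ζ) i : ℝ) : ℂ)
        = ((Real.sqrt 2 : ℝ) : ℂ) * ∑ i, ν i * ((ζ i : ℝ) : ℂ) := by
      rw [Finset.mul_sum]
      exact Finset.sum_congr rfl fun i _ => by simp; ring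
    rw [h3, creflv, ← h2]
    simp; ring
  have hq : (((Real.sqrt 2 : ℝ) : ℂ)) ^ 2 = 2 := by
    rw [← Complex.ofReal_pow, Real.sq_sqrt (by norm_num)]; norm_num
  simp only [hq, hs0, hv0, hs2] at hcons
  linear_combination hcons

end ReflectionIntegral

section HarmonicBasis

open MvPolynomial

/-- Real homogeneous harmonic polynomials of degree `k`. -/
def harmPoly (m k : ℕ) : Submodule ℝ (MvPolynomial (Fin m) ℝ) where
  carrier := {p | p.IsHomogeneous k ∧ ∑ i, pderiv i (pderiv i p) = 0}
  add_mem' := fun {p q} hp hq => by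
    rw [Set.mem_ofPred_eq] at hp hq ⊢
    refine ⟨hp.1.add hq.1, ?_⟩
    simp only [map_add, Finset.sum_add_distrib, hp.2, hq.2, add_zero]
  zero_mem' := by
    rw [Set.mem_ofPred_eq]
    exact ⟨isHomogeneous_zero _ _ _, by simp⟩
  smul_mem' := fun c p hp => by
    rw [Set.mem_ofPred_eq] at hp ⊢
    refine ⟨(homogeneousSubmodule (Fin m) ℝ k).smul_mem c hp.1, ?_⟩
    simp only [Derivation.map_smul, ← Finset.smul_sum, hp.2, smul_zero]

lemma mem_harmPoly {m k : ℕ} {p : MvPolynomial (Fin m) ℝ} :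
    p ∈ harmPoly m k ↔ p.IsHomogeneous k ∧ ∑ i, pderiv i (pderiv i p) = 0 := by
  change p ∈ {p | p.IsHomogeneous k ∧ ∑ i, pderiv i (pderiv i p) = 0} ↔ _
  rw [Set.mem_ofPred_eq]

instance finite_harmPoly (m k : ℕ) : Module.Finite ℝ (harmPoly m k) := by
  have hle : harmPoly m k ≤ restrictTotalDegree (Fin m) ℝ k := fun p hp =>
    (mem_restrictTotalDegree _ _ _).mpr (mem_harmPoly.mp hp).1.totalDegree_le
  exact Submodule.finiteDimensional_of_le hle

/-- Two polynomials agreeing on the open unit ball are equal. -/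
lemma eq_of_eval_ball {m : ℕ} {p q : MvPolynomial (Fin m) ℝ}
    (h : ∀ u : Evec m, ‖u‖ < 1 → eval (fun i => u i) p = eval (fun i => u i) q) : p = q := by
  refine funext_set (fun _ => Set.Ioo (0 : ℝ) (1 / (m + 1))) (fun _ => Set.Ioo_infinite (by positivity))
    fun x hx => ?_
  refine h (WithLp.toLp 2 x) ?_
  rw [← sq_lt_one_iff₀ (norm_nonneg _), EuclideanSpace.real_norm_sq_eq]
  have hb : ∀ i, x i ^ 2 ≤ 1 / (m + 1) := by
    intro i
    have h1 := hx i (Set.mem_univ i)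
    have h2 : (1 : ℝ) / (m + 1) ≤ 1 := by
      rw [div_le_one (by positivity)]; linarith [(Nat.cast_nonneg m : (0 : ℝ) ≤ m)]
    nlinarith [h1.1, h1.2]
  calc ∑ i, x i ^ 2 ≤ ∑ _i : Fin m, (1 : ℝ) / (m + 1) := Finset.sum_le_sum fun i _ => hb i
    _ = m / (m + 1) := by simp [div_eq_mul_inv]
    _ < 1 := by rw [div_lt_one (by positivity)]; linarith

/-- A basis of the harmonic polynomials whose coordinate functionals are combinations of point
evaluations in the open unit ball. -/
structure HarmBasis (m k : ℕ) where
  n : ℕ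
  q : Fin n → MvPolynomial (Fin m) ℝ
  q_mem : ∀ b, q b ∈ harmPoly m k
  c : Fin n → (ball (0 : Evec m) 1 →₀ ℝ)
  expand : ∀ p ∈ harmPoly m k,
    p = ∑ b, (∑ u ∈ (c b).support, c b u * eval (fun i => u.1 i) p) • q b
  biorth : ∀ b b', ∑ u ∈ (c b).support, c b u * eval (fun i => u.1 i) (q b')
    = if b = b' then 1 else 0

theorem nonempty_harmBasis (m k : ℕ) : Nonempty (HarmBasis m k) := by
  classical
  set V := harmPoly m k
  let B := Module.finBasis ℝ V
  let ev : ball (0 : Evec m) 1 → Module.Dual ℝ V := fun u =>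
    (aeval (R := ℝ) (fun i => u.1 i)).toLinearMap.comp V.subtype
  have hev : ∀ u p, ev u p = eval (fun i => u.1 i) p.1 := fun u p => by
    change aeval _ _ = _
    rw [← coe_aeval_eq_eval]
    rfl
  have hspan : Submodule.span ℝ (Set.range ev) = ⊤ := by
    rw [← Subspace.dualCoannihilator_dualAnnihilator_eq (W := Submodule.span ℝ (Set.range ev))]
    have : (Submodule.span ℝ (Set.range ev)).dualCoannihilator = ⊥ := by
      rw [eq_bot_iff]
      intro p hp
      rw [Submodule.mem_dualCoannihilator] at hp
      rw [Submodule.mem_bot]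
      refine Subtype.ext (eq_of_eval_ball fun u hu => ?_)
      have h1 := hp (ev ⟨u, by simpa using hu⟩) (Submodule.subset_span ⟨_, rfl⟩)
      rw [hev] at h1
      rw [h1, Submodule.coe_zero, map_zero]
    rw [this, Submodule.dualAnnihilator_bot]
  have hc : ∀ b, ∃ c : ball (0 : Evec m) 1 →₀ ℝ, (c.sum fun u α => α • ev u) = B.coord b := by
    intro b
    rw [← Finsupp.mem_span_range_iff_exists_finsupp, hspan]
    trivial
  choose c hc using hc
  have hcoord : ∀ b (p : V), ∑ u ∈ (c b).support, c b u * eval (fun i => u.1 i) p.1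
      = B.coord b p := by
    intro b p
    rw [← hc b, Finsupp.sum, LinearMap.sum_apply]
    exact Finset.sum_congr rfl fun u _ => by rw [LinearMap.smul_apply, hev, smul_eq_mul]
  refine ⟨⟨_, fun b => (B b).1, fun b => (B b).2, c, ?_, ?_⟩⟩
  · intro p hp
    have h1 := congrArg Subtype.val (B.sum_repr ⟨p, hp⟩)
    simp only [Submodule.coe_sum, Submodule.coe_smul] at h1
    conv_lhs => rw [← h1]
    refine Finset.sum_congr rfl fun b _ => ?_
    rw [hcoord b ⟨p, hp⟩]
    rfl
  · intro b b'
    rw [hcoord b (B b'), Module.Basis.coord_apply, Module.Basis.repr_self, Finsupp.single_apply]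
    simp only [eq_comm]

lemma hasFDerivAt_eval {m : ℕ} (p : MvPolynomial (Fin m) ℝ) (u : Evec m) :
    HasFDerivAt (fun u : Evec m => eval (fun i => u i) p)
      (∑ i, eval (fun i => u i) (pderiv i p) • EuclideanSpace.proj (𝕜 := ℝ) i) u := by
  induction p using MvPolynomial.induction_on with
  | C a => simpa using hasFDerivAt_const a u
  | add p q hp hq =>
    simp only [map_add, add_smul, Finset.sum_add_distrib]
    exact hp.add hq
  | mul_X p i hp =>
    simp only [map_mul, eval_X]
    have hi : HasFDerivAt (fun u : Evec m => u i) (EuclideanSpace.proj (𝕜 := ℝ) i) u :=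
      (EuclideanSpace.proj (𝕜 := ℝ) (ι := Fin m) i).hasFDerivAt
    have h := hp.mul hi
    refine h.congr_fderiv ?_
    ext v
    simp [Derivation.leibniz, pderiv_X, Pi.single_apply, add_mul, Finset.sum_add_distrib,
      Finset.mul_sum, apply_ite (eval fun i => u i), mul_assoc]

lemma fderiv_eval_single {m : ℕ} (p : MvPolynomial (Fin m) ℝ) (u : Evec m) (j : Fin m) :
    fderiv ℝ (fun u : Evec m => eval (fun i => u i) p) u (EuclideanSpace.single j 1)
      = eval (fun i => u i) (pderiv j p) := by
  rw [(hasFDerivAt_eval p u).fderiv]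
  simp

/-- Elements of `ℋ_k` are given by homogeneous harmonic polynomials. -/
lemma exists_harmPoly {m k : ℕ} {p : Evec m → ℝ} (hp : IsHk m k p) :
    ∃ P ∈ harmPoly m k, ∀ u, p u = eval (fun i => u i) P := by
  obtain ⟨⟨P, hP⟩, hhom, hlap⟩ := hp
  have hcomp : ∀ u : Evec m, p u = eval (fun i => u i) (homogeneousComponent k P) := by
    intro u
    have hpoly : ∑ j ∈ Finset.range (P.totalDegree + 1),
        Polynomial.C (eval (fun i => u i) (homogeneousComponent j P)) * Polynomial.X ^ j
        = Polynomial.C (p u) * Polynomial.X ^ k := by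
      refine Polynomial.funext fun t => ?_
      simp only [Polynomial.eval_finsetSum, Polynomial.eval_mul, Polynomial.eval_C,
        Polynomial.eval_pow, Polynomial.eval_X]
      rw [mul_comm (p u), ← hhom, hP]
      conv_rhs => rw [← sum_homogeneousComponent P, map_sum]
      refine Finset.sum_congr rfl fun j _ => ?_
      have h1 := eval₂_const_mul (RingHom.id ℝ) (fun i => u i) t
        (homogeneousComponent_isHomogeneous j P)
      rw [mul_comm]
      exact h1.symm
    have hk := congrArg (fun Q => Polynomial.coeff Q k) hpoly
    simp only [Polynomial.finsetSum_coeff, Polynomial.coeff_C_mul, Polynomial.coeff_X_pow,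
      mul_ite, mul_one, mul_zero, Finset.sum_ite_eq, Finset.mem_range, if_true] at hk
    rw [← hk]
    split_ifs with h
    · rfl
    · rw [homogeneousComponent_eq_zero _ _ (by omega), map_zero]
  refine ⟨_, mem_harmPoly.mpr ⟨homogeneousComponent_isHomogeneous k P, ?_⟩, hcomp⟩
  refine eq_of_eval_ball fun u _ => ?_
  rw [map_zero, ← hlap u, lapl, map_sum]
  refine Finset.sum_congr rfl fun i _ => ?_
  have h1 : p = fun u => eval (fun i => u i) (homogeneousComponent k P) := funext hcomp
  have h2 : pdv i p = fun u => eval (fun i => u i) (pderiv i (homogeneousComponent k P)) := by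
    funext v
    rw [pdv, h1, fderiv_eval_single]
  rw [h2, pdv, fderiv_eval_single]

end HarmonicBasis

section Extraction

open MvPolynomial

lemma pd1_of_expand {m n : ℕ} {U W : Set (Evec m)} (hU : IsOpen U) {F : Evec m → Evec m → ℝ}
    {α : Fin n → Evec m → ℝ} {β : Fin n → Evec m → ℝ} (hα : ∀ b, DifferentiableOn ℝ (α b) U)
    (h : ∀ x ∈ U, ∀ u ∈ W, F x u = ∑ b, α b x * β b u) (i : Fin m) :
    ∀ x ∈ U, ∀ u ∈ W, pd1 i F x u = ∑ b, pdv i (α b) x * β b u := by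
  intro x hx u hu
  have hnb := hU.mem_nhds hx
  have h1 : (fun x₁ => F x₁ u) =ᶠ[𝓝 x] fun x₁ => ∑ b, α b x₁ * β b u := by
    filter_upwards [hnb] with y hy using h y hy u hu
  have h2 : HasFDerivAt (fun x₁ => ∑ b, α b x₁ * β b u) (∑ b, β b u • fderiv ℝ (α b) x) x :=
    HasFDerivAt.fun_sum fun b _ => ((hα b).differentiableAt hnb).hasFDerivAt.mul_const (β b u)
  rw [pd1, h1.fderiv_eq, h2.fderiv]
  simp [pdv, mul_comm]

lemma pd2_of_expand {m n : ℕ} {U W : Set (Evec m)} (hW : IsOpen W) {F : Evec m → Evec m → ℝ}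
    {α : Fin n → Evec m → ℝ} {Q : Fin n → MvPolynomial (Fin m) ℝ}
    (h : ∀ x ∈ U, ∀ u ∈ W, F x u = ∑ b, α b x * eval (fun i => u i) (Q b)) (i : Fin m) :
    ∀ x ∈ U, ∀ u ∈ W, pd2 i F x u = ∑ b, α b x * eval (fun i => u i) (pderiv i (Q b)) := by
  intro x hx u hu
  have h1 : (fun u₁ => F x u₁) =ᶠ[𝓝 u] fun u₁ => ∑ b, α b x * eval (fun i => u₁ i) (Q b) := by
    filter_upwards [hW.mem_nhds hu] with y hy using h x hx y hy
  have h2 : HasFDerivAt (fun u₁ : Evec m => ∑ b, α b x * eval (fun i => u₁ i) (Q b))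
      (∑ b, α b x • fderiv ℝ (fun u₁ : Evec m => eval (fun i => u₁ i) (Q b)) u) u :=
    HasFDerivAt.fun_sum fun b _ =>
      ((hasFDerivAt_eval (Q b) u).differentiableAt.hasFDerivAt).const_mul (α b x)
  rw [pd2, h1.fderiv_eq, h2.fderiv]
  simp [fderiv_eval_single]

lemma contDiffOn_pdv {m : ℕ} {U : Set (Evec m)} (hU : IsOpen U) {g : Evec m → ℝ}
    {n n' : WithTop ℕ∞} (hn : n' + 1 ≤ n) (hg : ContDiffOn ℝ n g U) (i : Fin m) :
    ContDiffOn ℝ n' (pdv i g) U :=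
  (hg.fderiv_of_isOpen hU hn).clm_apply contDiffOn_const

/-- The symbol of the bosonic Laplacian in the second variable. -/
def bosSym {m : ℕ} {R : Type*} [CommRing R] (P : ℤ) (i j : Fin m) (q : MvPolynomial (Fin m) R) :
    MvPolynomial (Fin m) R :=
  ((P * (P - 2) : ℤ) : MvPolynomial (Fin m) R) * (if i = j then q else 0)
    - ((4 * (P - 2) : ℤ) : MvPolynomial (Fin m) R) * (X i * pderiv j q)
    + 4 * (NullFrame.usq * pderiv i (pderiv j q))

namespace HarmBasis

variable {m k : ℕ} (B : HarmBasis m k)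

/-- The coordinate functionals of a harmonic basis, as combinations of point evaluations. -/
def coef (b : Fin B.n) (g : Evec m → ℝ) : ℝ := ∑ u ∈ (B.c b).support, B.c b u * g u.1

lemma expand_isHk {g q : Evec m → ℝ} (hq : IsHk m k q)
    (hg : ∀ u ∈ closedBall (0 : Evec m) 1, g u = q u) {u : Evec m}
    (hu : u ∈ closedBall (0 : Evec m) 1) :
    g u = ∑ b, B.coef b g * eval (fun i => u i) (B.q b) := by
  obtain ⟨P, hP, hPe⟩ := exists_harmPoly hq
  rw [hg u hu, hPe u]
  conv_lhs => rw [B.expand P hP]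
  rw [map_sum]
  refine Finset.sum_congr rfl fun b _ => ?_
  rw [smul_eval]
  congr 1
  refine Finset.sum_congr rfl fun v _ => ?_
  rw [hg v.1 (ball_subset_closedBall v.2), hPe]

variable {a : Evec m} {r : ℝ} {f : Evec m → Evec m → ℝ}

lemma contDiffOn_coef (hreg : C2Hk m k (ball a r) f) (b : Fin B.n) :
    ContDiffOn ℝ 2 (fun x => B.coef b (f x)) (ball a r) := by
  refine ContDiffOn.sum fun u _ => contDiffOn_const.mul ?_
  exact hreg.1.comp (f := fun x => (x, u.1)) (contDiff_id.prodMk contDiff_const).contDiffOn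
    fun x hx => ⟨hx, u.2⟩

lemma continuousOn_coef (hc : ContinuousOn (fun q : Evec m × Evec m => f q.1 q.2)
      (closedBall a r ×ˢ closedBall (0 : Evec m) 1)) (b : Fin B.n) :
    ContinuousOn (fun x => B.coef b (f x)) (closedBall a r) := by
  refine continuousOn_finsetSum _ fun u _ => continuousOn_const.mul ?_
  exact hc.comp (f := fun x => (x, u.1)) (by fun_prop)
    fun x hx => ⟨hx, ball_subset_closedBall u.2⟩

lemma expand_closedBall (hr : 0 < r) (hreg : C2Hk m k (ball a r) f)
    (hc : ContinuousOn (fun q : Evec m × Evec m => f q.1 q.2)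
      (closedBall a r ×ˢ closedBall (0 : Evec m) 1)) {x u : Evec m} (hx : x ∈ closedBall a r)
    (hu : u ∈ closedBall (0 : Evec m) 1) :
    f x u = ∑ b, B.coef b (f x) * eval (fun i => u i) (B.q b) := by
  have h1 : Set.EqOn (fun x => f x u) (fun x => ∑ b, B.coef b (f x) * eval (fun i => u i) (B.q b))
      (ball a r) := by
    intro y hy
    obtain ⟨q, hq, hq'⟩ := hreg.2 y hy
    exact B.expand_isHk hq hq' hu
  have hcl := closure_ball a hr.ne'
  refine h1.of_subset_closure (t := closedBall a r) ?_ ?_ ball_subset_closedBall hcl.ge hx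
  · exact hc.comp (f := fun x => (x, u)) (by fun_prop) fun x hx => ⟨hx, hu⟩
  · exact continuousOn_finsetSum _ fun b _ => (B.continuousOn_coef hc b).mul continuousOn_const

theorem sum_bosSym_eq_zero (hm : 4 < m) (hreg : C2Hk m k (ball a r) f)
    (hD : ∀ x ∈ ball a r, ∀ u ∈ ball (0 : Evec m) 1, Dk m k f x u = 0) {x : Evec m}
    (hx : x ∈ ball a r) :
    ∑ b, ∑ i, ∑ j, C (pdv i (pdv j fun x => B.coef b (f x)) x)
      * bosSym ((m : ℤ) + 2 * k - 2) i j (B.q b) = 0 := by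
  set φ : Fin B.n → Evec m → ℝ := fun b x => B.coef b (f x) with hφ
  have hφ2 : ∀ b, ContDiffOn ℝ 2 (φ b) (ball a r) := B.contDiffOn_coef hreg
  have hφd : ∀ b, DifferentiableOn ℝ (φ b) (ball a r) := fun b =>
    (hφ2 b).differentiableOn (by norm_num)
  have hφd1 : ∀ j b, DifferentiableOn ℝ (pdv j (φ b)) (ball a r) := fun j b =>
    (contDiffOn_pdv isOpen_ball (n' := 1) (by norm_num) (hφ2 b) j).differentiableOn (by norm_num)
  have e0 : ∀ x ∈ ball a r, ∀ u ∈ ball (0 : Evec m) 1,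
      f x u = ∑ b, φ b x * eval (fun i => u i) (B.q b) := by
    intro y hy u hu
    obtain ⟨q, hq, hq'⟩ := hreg.2 y hy
    exact B.expand_isHk hq hq' (ball_subset_closedBall hu)
  have e1 := fun j => pd1_of_expand isOpen_ball hφd e0 j
  have e11 := fun i j => pd1_of_expand isOpen_ball (hφd1 j) (e1 j) i
  have e21 := fun j => pd2_of_expand isOpen_ball (e1 j) j
  have e121 := fun i j => pd1_of_expand isOpen_ball (hφd1 j) (e21 j) i
  have e2121 := fun i j => pd2_of_expand isOpen_ball (e121 i j) i
  refine eq_of_eval_ball fun u hu => ?_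
  have hu' : u ∈ ball (0 : Evec m) 1 := by simpa using hu
  have h := hD x hx u hu'
  rw [Dk] at h
  simp only [fun i => e11 i i x hx u hu', fun i j => e121 i j x hx u hu',
    fun i j => e2121 i j x hx u hu'] at h
  have hP : (0 : ℝ) < (m : ℝ) + 2 * k - 2 := by
    have : (4 : ℝ) < m := by exact_mod_cast hm
    have : (0 : ℝ) ≤ k := Nat.cast_nonneg k
    linarith
  have hP2 : (0 : ℝ) < (m : ℝ) + 2 * k - 4 := by
    have : (4 : ℝ) < m := by exact_mod_cast hm
    have : (0 : ℝ) ≤ k := Nat.cast_nonneg k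
    linarith
  set P : ℝ := (m : ℝ) + 2 * k - 2 with hPdef
  have hP2' : (m : ℝ) + 2 * k - 4 = P - 2 := by rw [hPdef]; ring
  rw [hP2'] at h hP2
  have hN : eval (fun i => u i) (NullFrame.usq : MvPolynomial (Fin m) ℝ) = ‖u‖ ^ 2 := by
    rw [EuclideanSpace.real_norm_sq_eq, NullFrame.usq, map_sum]
    exact Finset.sum_congr rfl fun i _ => by rw [map_mul, eval_X, sq]
  have hcast : (((m : ℤ) + 2 * k - 2 : ℤ) : ℝ) = P := by push_cast; rfl
  have h4 : eval (fun i => u i) (4 : MvPolynomial (Fin m) ℝ) = 4 := map_ofNat _ 4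
  have key : ∀ b i j, eval (fun i => u i) (bosSym ((m : ℤ) + 2 * k - 2) i j (B.q b))
      = P * (P - 2) * (if i = j then eval (fun i => u i) (B.q b) else 0)
        - 4 * (P - 2) * (u i * eval (fun i => u i) (pderiv j (B.q b)))
        + 4 * (‖u‖ ^ 2 * eval (fun i => u i) (pderiv i (pderiv j (B.q b)))) := by
    intro b i j
    rw [bosSym, map_add, map_sub, map_mul, map_mul, map_mul, map_mul, map_mul, map_intCast,
      map_intCast, h4, hN, eval_X, apply_ite (eval fun i => u i), map_zero]
    push_cast [← hcast]
    ring
  simp only [map_sum, map_mul, eval_C, key, map_zero]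
  have hc3 : ∀ g : Fin B.n → Fin m → Fin m → ℝ,
      ∑ b, ∑ i, ∑ j, g b i j = ∑ i, ∑ j, ∑ b, g b i j := by
    intro g
    rw [Finset.sum_comm]
    exact Finset.sum_congr rfl fun i _ => Finset.sum_comm
  rw [hc3]
  have hclear : ∀ S₁ S₂ S₃ : ℝ, S₁ - 4 / P * S₂ + 4 * ‖u‖ ^ 2 / (P * (P - 2)) * S₃ = 0 →
      P * (P - 2) * S₁ - 4 * (P - 2) * S₂ + 4 * ‖u‖ ^ 2 * S₃ = 0 := by
    intro S₁ S₂ S₃ hS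
    field_simp at hS
    linear_combination hS
  refine Eq.trans ?_ (hclear _ _ _ h)
  simp only [Finset.mul_sum, ← Finset.sum_sub_distrib, ← Finset.sum_add_distrib]
  refine Finset.sum_congr rfl fun i _ => ?_
  have hd : ∑ b, P * (P - 2) * (pdv i (pdv i (φ b)) x * eval (fun i => u i) (B.q b))
      = ∑ j, ∑ b, pdv i (pdv j (φ b)) x
        * (P * (P - 2) * (if i = j then eval (fun i => u i) (B.q b) else 0)) := by
    rw [Finset.sum_comm]
    refine Finset.sum_congr rfl fun b _ => ?_
    simp only [mul_ite, mul_zero, Finset.sum_ite_eq, Finset.mem_univ, if_true]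
    ring
  rw [hd, ← Finset.sum_sub_distrib, ← Finset.sum_add_distrib]
  refine Finset.sum_congr rfl fun j _ => ?_
  rw [← Finset.sum_sub_distrib, ← Finset.sum_add_distrib]
  exact Finset.sum_congr rfl fun b _ => by ring

end HarmBasis

end Extraction

section Mollification

open scoped Convolution ContDiff

lemma contDiff_pdv {m : ℕ} {g : Evec m → ℝ} {n n' : WithTop ℕ∞} (hn : n' + 1 ≤ n)
    (hg : ContDiff ℝ n g) (i : Fin m) : ContDiff ℝ n' (pdv i g) :=
  (hg.fderiv_right hn).clm_apply contDiff_const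

lemma hasCompactSupport_pdv {m : ℕ} {g : Evec m → ℝ} (hg : HasCompactSupport g) (i : Fin m) :
    HasCompactSupport (pdv i g) :=
  hg.fderiv_apply (𝕜 := ℝ) (EuclideanSpace.single i 1)

lemma pdv_eq_of_eqOn {m : ℕ} {g h : Evec m → ℝ} {U : Set (Evec m)} (hU : IsOpen U)
    (hgh : Set.EqOn g h U) (i : Fin m) : Set.EqOn (pdv i g) (pdv i h) U := fun x hx => by
  have : g =ᶠ[𝓝 x] h := by filter_upwards [hU.mem_nhds hx] with y hy using hgh hy
  rw [pdv, pdv, this.fderiv_eq]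

lemma pdv_comp_add_left {m : ℕ} (g : Evec m → ℝ) (a : Evec m) (i : Fin m) :
    pdv i (fun x => g (a + x)) = fun x => pdv i g (a + x) := by
  funext x
  rw [pdv, fderiv_comp_add_left, pdv]

/-- A function of class `C²` on a ball agrees on smaller balls with a compactly supported one. -/
lemma exists_compactSupport_extension {m : ℕ} {φ : Evec m → ℝ} {r ρ : ℝ} (hρ0 : 0 < ρ)
    (hρ : ρ < r) (hφ : ContDiffOn ℝ 2 φ (ball 0 r)) :
    ∃ g : Evec m → ℝ, ContDiff ℝ 2 g ∧ HasCompactSupport g ∧ Set.EqOn g φ (ball 0 ρ) := by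
  let χ : ContDiffBump (0 : Evec m) := ⟨ρ, (ρ + r) / 2, hρ0, by linarith⟩
  refine ⟨fun x => χ x * φ x, ?_, χ.hasCompactSupport.mul_right, fun x hx => ?_⟩
  · rw [contDiff_iff_contDiffAt]
    intro x
    by_cases hx : x ∈ ball (0 : Evec m) r
    · exact χ.contDiff.contDiffAt.mul (hφ.contDiffAt (isOpen_ball.mem_nhds hx))
    · have hx' : x ∉ tsupport χ := by
        rw [χ.tsupport_eq]
        intro h
        refine hx (closedBall_subset_ball ?_ h)
        change (ρ + r) / 2 < r
        linarith
      have : (fun x => χ x * φ x) =ᶠ[𝓝 x] fun _ => 0 := by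
        filter_upwards [(isClosed_tsupport χ).isOpen_compl.mem_nhds hx'] with y hy
        rw [image_eq_zero_of_notMem_tsupport hy, zero_mul]
      exact contDiffAt_const.congr_of_eventuallyEq this
  · change χ x * φ x = φ x
    rw [χ.one_of_mem_closedBall (ball_subset_closedBall hx), one_mul]

/-- Derivatives pass to the smooth factor of a convolution. -/
lemma pdv_convolution {m : ℕ} {η g : Evec m → ℝ} (hη : Continuous η) (hg : ContDiff ℝ 1 g)
    (hcg : HasCompactSupport g) (i : Fin m) :
    pdv i (η ⋆ g) = η ⋆ pdv i g := by
  funext x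
  rw [pdv, (hcg.hasFDerivAt_convolution_right (ContinuousLinearMap.lsmul ℝ ℝ)
    hη.locallyIntegrable hg x).fderiv,
    convolution_precompR_apply _ hη.locallyIntegrable (hcg.fderiv ℝ)
      (hg.continuous_fderiv (by norm_num))]
  rfl

/-- Local mollification, preserving constant-coefficient second order linear relations. -/
theorem exists_smooth_approx {m n : ℕ} {φ : Fin n → Evec m → ℝ} {a : Evec m} {r ρ ε : ℝ}
    (hφ : ∀ b, ContDiffOn ℝ 2 (φ b) (ball a r)) (hρ0 : 0 < ρ) (hρ : ρ < r) (hε : 0 < ε) :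
    ∃ ψ : Fin n → Evec m → ℝ, (∀ b, ContDiff ℝ ∞ (ψ b)) ∧
      (∀ b, ∀ x ∈ ball 0 ρ, |ψ b x - φ b (a + x)| ≤ ε) ∧
      ∀ w : Fin n → Fin m → Fin m → ℝ,
        (∀ x ∈ ball a r, ∑ b, ∑ i, ∑ j, pdv i (pdv j (φ b)) x * w b i j = 0) →
        ∀ x ∈ ball 0 ρ, ∑ b, ∑ i, ∑ j, pdv i (pdv j (ψ b)) x * w b i j = 0 := by
  obtain ⟨ρ', hρ1, hρ2⟩ := exists_between hρ
  have hφa : ∀ b, ContDiffOn ℝ 2 (fun x => φ b (a + x)) (ball 0 r) := fun b =>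
    (hφ b).comp (by fun_prop) fun x hx => by
      rw [mem_ball_iff_norm, add_sub_cancel_left]
      simpa using hx
  choose g hg hcg hge using fun b =>
    exists_compactSupport_extension (hρ0.trans hρ1) hρ2 (hφa b)
  have hunif : ∀ b, ∃ δ > 0, ∀ x y, dist x y < δ → dist (g b x) (g b y) < ε := fun b =>
    Metric.uniformContinuous_iff.mp
      ((hcg b).uniformContinuous_of_continuous (hg b).continuous) ε hε |>.imp
        fun δ h => ⟨h.1, fun x y hxy => h.2 hxy⟩
  choose δ hδ0 hδ using hunif
  obtain ⟨δ', hδ'0, hδ'⟩ : ∃ δ' > 0, ∀ b, δ' ≤ δ b := by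
    rcases isEmpty_or_nonempty (Fin n) with he | he
    · exact ⟨1, one_pos, fun b => he.elim b⟩
    · obtain ⟨b₀, hb₀⟩ := Finite.exists_min δ
      exact ⟨δ b₀, hδ0 b₀, hb₀⟩
  let τ := min δ' (ρ' - ρ)
  have hτ : 0 < τ := lt_min hδ'0 (by linarith)
  let χ : ContDiffBump (0 : Evec m) := ⟨τ / 2, τ, by linarith, by linarith⟩
  set η : Evec m → ℝ := χ.normed volume with hη
  have hηc : Continuous η := χ.continuous_normed
  have hηs : HasCompactSupport η := χ.hasCompactSupport_normed
  refine ⟨fun b => η ⋆ g b, fun b => ?_, fun b x hx => ?_, fun w hw x hx => ?_⟩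
  · exact hηs.contDiff_convolution_left _ χ.contDiff_normed (hg b).continuous.locallyIntegrable
  · have hx' : x ∈ ball (0 : Evec m) ρ' := ball_subset_ball hρ1.le hx
    have hgx : g b x = φ b (a + x) := hge b hx'
    rw [← hgx, ← Real.dist_eq]
    refine χ.dist_normed_convolution_le (hg b).continuous.aestronglyMeasurable fun y hy => ?_
    exact (hδ b y x (lt_of_lt_of_le hy ((min_le_left _ _).trans (hδ' b)))).le
  · have h2 : ∀ b i j, pdv i (pdv j (η ⋆ g b)) = η ⋆ pdv i (pdv j (g b)) := fun b i j => by
      rw [pdv_convolution hηc ((hg b).of_le (by norm_num)) (hcg b),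
        pdv_convolution hηc (contDiff_pdv (by norm_num) (hg b) j)
          (hasCompactSupport_pdv (hcg b) j)]
    have hcont : ∀ b i j, Continuous (pdv i (pdv j (g b))) := fun b i j =>
      (contDiff_pdv (n' := 0) (by norm_num)
        (contDiff_pdv (n' := 1) (by norm_num) (hg b) j) i).continuous
    have h_int : ∀ b i j, Integrable fun t => η t * pdv i (pdv j (g b)) (x - t) := fun b i j =>
      (hηc.mul ((hcont b i j).comp (by fun_prop))).integrable_of_hasCompactSupport hηs.mul_right
    have h3 : ∀ b i j, pdv i (pdv j (η ⋆ g b)) x * w b i j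
        = ∫ t, η t * pdv i (pdv j (g b)) (x - t) * w b i j := fun b i j => by
      rw [h2, integral_mul_const]
      rfl
    simp only [h3]
    have hi3 : ∀ b i j, Integrable fun t => η t * pdv i (pdv j (g b)) (x - t) * w b i j :=
      fun b i j => (h_int b i j).mul_const _
    simp_rw [← integral_finsetSum _ fun j _ => hi3 _ _ j]
    simp_rw [← integral_finsetSum _ fun i _ => integrable_finsetSum _ fun j _ => hi3 _ i j]
    rw [← integral_finsetSum _ fun b _ => integrable_finsetSum _ fun i _ =>
      integrable_finsetSum _ fun j _ => hi3 b i j]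
    refine integral_eq_zero_of_ae (Eventually.of_forall fun t => ?_)
    by_cases ht : t ∈ ball (0 : Evec m) τ
    · have hxt : x - t ∈ ball (0 : Evec m) ρ' := by
        rw [mem_ball_zero_iff] at hx ht ⊢
        have : τ ≤ ρ' - ρ := min_le_right _ _
        linarith [norm_sub_le x t]
      have hE : ∀ b i j, pdv i (pdv j (g b)) (x - t) = pdv i (pdv j (φ b)) (a + (x - t)) := by
        intro b i j
        rw [pdv_eq_of_eqOn isOpen_ball (pdv_eq_of_eqOn isOpen_ball (hge b) j) i hxt,
          pdv_comp_add_left, pdv_comp_add_left]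
      have hz := hw (a + (x - t)) (by
        rw [mem_ball_iff_norm, add_sub_cancel_left]
        exact (mem_ball_zero_iff.mp hxt).trans hρ2)
      simp only [hE, mul_assoc, ← Finset.mul_sum, hz, mul_zero, Pi.zero_apply]
    · have : η t = 0 := by
        rw [← Function.notMem_support, hη, χ.support_normed_eq]
        exact ht
      simp [this]

end Mollification

section SmoothPolynomial

open MvPolynomial
open scoped ContDiff

lemma coeffMap_C_mul {σ R : Type*} [CommRing R] (d : Derivation ℤ R R) (w : R)
    {q : MvPolynomial σ R} (hq : ∀ s, d (coeff s q) = 0) :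
    coeffMap (d : R →+ R) (C w * q) = C (d w) * q := by
  ext s
  rw [coeff_coeffMap, coeff_C_mul, coeff_C_mul]
  change d (w * coeff s q) = _
  rw [Derivation.leibniz, hq, smul_zero, zero_add, smul_eq_mul, mul_comm]

lemma map_bosSym {m : ℕ} {R S : Type*} [CommRing R] [CommRing S] (κ : R →+* S) (P : ℤ)
    (i j : Fin m) (q : MvPolynomial (Fin m) R) :
    MvPolynomial.map κ (bosSym P i j q) = bosSym P i j (MvPolynomial.map κ q) := by
  have hu : MvPolynomial.map κ (NullFrame.usq : MvPolynomial (Fin m) R) = NullFrame.usq := by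
    simp [NullFrame.usq]
  rw [bosSym, bosSym, map_add, map_sub, map_mul, map_mul, map_mul, map_mul, map_mul, map_intCast,
    map_intCast, hu, map_X, pderiv_map, pderiv_map, apply_ite (MvPolynomial.map κ),
    map_zero, map_ofNat]

namespace NullFrame

variable {m : ℕ} {R : Type*} [CommRing R] (T : NullFrame m R)

lemma bos_add (P : ℤ) (p q : MvPolynomial (Fin m) R) :
    T.bos P (p + q) = T.bos P p + T.bos P q := by
  simp only [bos, dvg_add, lap, grd, map_add, mul_add, Finset.sum_add_distrib]
  ring

lemma bos_sum {ι : Type*} (P : ℤ) (s : Finset ι) (F : ι → MvPolynomial (Fin m) R) :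
    T.bos P (∑ b ∈ s, F b) = ∑ b ∈ s, T.bos P (F b) :=
  map_sum (AddMonoidHom.mk' (T.bos P) (T.bos_add P)) F s

/-- The bosonic Laplacian of a variable coefficient times a polynomial with constant
coefficients. -/
lemma bos_C_mul (P : ℤ) (w : R) {q : MvPolynomial (Fin m) R}
    (hq : ∀ i s, T.d i (coeff s q) = 0) :
    T.bos P (C w * q) = ∑ i, ∑ j, C (T.d i (T.d j w)) * bosSym P i j q := by
  have hpd : ∀ i j s, T.d i (coeff s (pderiv j q)) = 0 := by
    intro i j s
    have := congrArg (coeff s) (coeffMap_pderiv (T.d i : R →+ R) j q)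
    rw [coeff_coeffMap] at this
    refine this.trans ?_
    have h0 : coeffMap (T.d i : R →+ R) q = 0 := by
      ext s
      exact hq i s
    rw [h0, map_zero, coeff_zero]
  have h1 : ∀ i v, T.pd i (C v * q) = C (T.d i v) * q := fun i v =>
    coeffMap_C_mul (T.d i) v (hq i)
  have h2 : ∀ i j v, T.pd i (C v * pderiv j q) = C (T.d i v) * pderiv j q := fun i j v =>
    coeffMap_C_mul (T.d i) v (hpd i j)
  have hdv : T.dvg (C w * q) = ∑ j, C (T.d j w) * pderiv j q := by
    simp only [dvg, pderiv_C_mul, h2]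
  have hdd : T.dvg (T.dvg (C w * q))
      = ∑ i, ∑ j, C (T.d i (T.d j w)) * pderiv i (pderiv j q) := by
    rw [hdv, dvg]
    simp only [T.pd_pderiv, map_sum]
    simp only [h2, pderiv_C_mul]
  have hgd : T.grd (T.dvg (C w * q))
      = ∑ i, ∑ j, C (T.d i (T.d j w)) * (X i * pderiv j q) := by
    rw [hdv, grd]
    simp only [map_sum, h2, Finset.mul_sum]
    exact Finset.sum_congr rfl fun i _ => Finset.sum_congr rfl fun j _ => by ring
  have hl : T.lap (C w * q) = ∑ i, ∑ j, C (T.d i (T.d j w)) * (if i = j then q else 0) := by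
    simp only [lap, h1, mul_ite, mul_zero, Finset.sum_ite_eq, Finset.mem_univ, if_true]
  rw [bos, hl, hgd, hdd]
  simp only [Finset.mul_sum, ← Finset.sum_sub_distrib, ← Finset.sum_add_distrib]
  refine Finset.sum_congr rfl fun i _ => Finset.sum_congr rfl fun j _ => ?_
  rw [bosSym, Int.cast_ofNat]
  ring

end NullFrame

/-- A real smooth function as an element of the algebra of complex smooth functions. -/
def ofRealSmooth {m : ℕ} (ψ : Evec m → ℝ) (hψ : ContDiff ℝ ∞ ψ) : smoothAlg m :=
  ⟨fun x => (ψ x : ℂ), Complex.ofRealCLM.contDiff.comp hψ⟩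

lemma smoothD_ofRealSmooth {m : ℕ} (i : Fin m) (ψ : Evec m → ℝ) (hψ : ContDiff ℝ ∞ ψ) :
    smoothD i (ofRealSmooth ψ hψ) = ofRealSmooth (pdv i ψ) (contDiff_pdv (by simp) hψ i) := by
  ext x
  rw [smoothD_apply]
  have h : HasFDerivAt (ofRealSmooth ψ hψ).1 (Complex.ofRealCLM.comp (fderiv ℝ ψ x)) x :=
    Complex.ofRealCLM.hasFDerivAt.comp x (hψ.differentiable (by simp) x).hasFDerivAt
  rw [h.fderiv]
  rfl

/-- Real constants in the algebra of smooth functions. -/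
def constHom (m : ℕ) : ℝ →+* smoothAlg m :=
  (algebraMap ℂ (smoothAlg m)).comp (algebraMap ℝ ℂ)

/-- The polynomial with smooth coefficients attached to a finite family of real smooth functions
and a finite family of real polynomials. -/
def smoothPoly {m n : ℕ} (ψ : Fin n → Evec m → ℝ) (hψ : ∀ b, ContDiff ℝ ∞ (ψ b))
    (q : Fin n → MvPolynomial (Fin m) ℝ) : MvPolynomial (Fin m) (smoothAlg m) :=
  ∑ b, C (ofRealSmooth (ψ b) (hψ b)) * MvPolynomial.map (constHom m) (q b)

variable {m n k : ℕ} {ψ : Fin n → Evec m → ℝ} (hψ : ∀ b, ContDiff ℝ ∞ (ψ b))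
  {q : Fin n → MvPolynomial (Fin m) ℝ}

lemma isHomogeneous_smoothPoly (hq : ∀ b, q b ∈ harmPoly m k) :
    (smoothPoly ψ hψ q).IsHomogeneous k :=
  IsHomogeneous.sum _ _ _ fun b _ => by
    simpa using (isHomogeneous_C (Fin m) (ofRealSmooth (ψ b) (hψ b))).mul
      ((mem_harmPoly.mp (hq b)).1.map (constHom m))

lemma harmonic_smoothPoly (hq : ∀ b, q b ∈ harmPoly m k) :
    ∑ i, pderiv i (pderiv i (smoothPoly ψ hψ q)) = 0 := by
  simp only [smoothPoly, map_sum, pderiv_C_mul, pderiv_map]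
  rw [Finset.sum_comm]
  refine Finset.sum_eq_zero fun b _ => ?_
  rw [← Finset.mul_sum, ← map_sum, (mem_harmPoly.mp (hq b)).2, map_zero, mul_zero]

lemma coeff_bos_smoothPoly_mem (ν : Fin m → ℂ) (hν : ∑ i, ν i * ν i = 0) (P : ℤ) {ρ : ℝ}
    (h : ∀ s, ∀ x ∈ ball (0 : Evec m) ρ,
      ∑ b, ∑ i, ∑ j, pdv i (pdv j (ψ b)) x * coeff s (bosSym P i j (q b)) = 0)
    (s : Fin m →₀ ℕ) :
    coeff s ((smoothFrame ν hν).bos P (smoothPoly ψ hψ q)) ∈ vanishIdeal m ρ := by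
  have hc : ∀ b i s, (smoothFrame ν hν).d i (coeff s (MvPolynomial.map (constHom m) (q b))) = 0 := by
    intro b i s
    rw [coeff_map]
    exact smoothD_const i _
  rw [mem_vanishIdeal]
  intro x hx
  rw [smoothPoly, NullFrame.bos_sum]
  simp only [fun b => (smoothFrame ν hν).bos_C_mul P (ofRealSmooth (ψ b) (hψ b)) (hc b),
    coeff_sum, coeff_C_mul, ← map_bosSym, coeff_map]
  have hd : ∀ b i j, (smoothFrame ν hν).d i ((smoothFrame ν hν).d j (ofRealSmooth (ψ b) (hψ b)))
      = smoothD i (smoothD j (ofRealSmooth (ψ b) (hψ b))) := fun _ _ _ => rfl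
  simp only [hd, smoothD_ofRealSmooth, smoothAlg_sum_apply, smoothAlg_mul_apply]
  have := congrArg (fun y : ℝ => (y : ℂ)) (h s x hx)
  simp only [Complex.ofReal_sum, Complex.ofReal_mul, Complex.ofReal_zero] at this
  exact this

lemma eval₂_smoothPoly (x : Evec m) (y : Fin m → ℂ) :
    eval₂ (evalPt x) y (smoothPoly ψ hψ q)
      = ∑ b, (ψ b x : ℂ) * eval y (MvPolynomial.map (algebraMap ℝ ℂ) (q b)) := by
  rw [smoothPoly, ← coe_eval₂Hom, map_sum]
  refine Finset.sum_congr rfl fun b _ => ?_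
  rw [map_mul, coe_eval₂Hom, eval₂_C, eval₂_map, eval_map]
  rfl

end SmoothPolynomial

section ReflectionExpansion

open MvPolynomial
open scoped ContDiff

/-- Substitution of linear forms with matrix `A`. -/
def linSubst {m : ℕ} (A : Fin m → Fin m → ℝ) :
    MvPolynomial (Fin m) ℝ →ₐ[ℝ] MvPolynomial (Fin m) ℝ :=
  aeval fun j => ∑ i, C (A j i) * X i

lemma pderiv_linSubst {m : ℕ} (A : Fin m → Fin m → ℝ) (i : Fin m) (q : MvPolynomial (Fin m) ℝ) :
    pderiv i (linSubst A q) = ∑ j, C (A j i) * linSubst A (pderiv j q) := by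
  classical
  induction q using MvPolynomial.induction_on with
  | C a => simp [linSubst]
  | add p q hp hq => simp only [map_add, hp, hq, mul_add, Finset.sum_add_distrib]
  | mul_X p l hp =>
    have hX : linSubst A (X l) = ∑ i, C (A l i) * X i := aeval_X _ l
    have hdX : pderiv i (∑ i, C (A l i) * X i) = C (A l i) := by
      rw [map_sum, Finset.sum_eq_single i]
      · rw [pderiv_C_mul, pderiv_X_self, mul_one]
      · intro j _ hj
        rw [pderiv_C_mul, pderiv_X_of_ne hj, mul_zero]
      · simp
    have hs : ∑ j, C (A j i) * (linSubst A p * linSubst A (pderiv j (X l)))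
        = linSubst A p * C (A l i) := by
      rw [Finset.sum_eq_single l]
      · rw [pderiv_X_self, map_one]; ring
      · intro j _ hj
        rw [pderiv_X_of_ne hj.symm, map_zero, mul_zero, mul_zero]
      · simp
    have hr : ∀ j, C (A j i) * linSubst A (pderiv j (p * X l))
        = C (A j i) * (linSubst A p * linSubst A (pderiv j (X l)))
          + linSubst A (X l) * (C (A j i) * linSubst A (pderiv j p)) := fun j => by
      rw [Derivation.leibniz, smul_eq_mul, smul_eq_mul, map_add, map_mul, map_mul]
      ring
    rw [Finset.sum_congr rfl fun j _ => hr j, Finset.sum_add_distrib, hs, ← Finset.mul_sum, ← hp,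
      map_mul, Derivation.leibniz, smul_eq_mul, smul_eq_mul, hX, hdX]

lemma linSubst_mem_harmPoly {m k : ℕ} {A : Fin m → Fin m → ℝ}
    (hA : ∀ j l, ∑ i, A j i * A l i = if j = l then 1 else 0) {q : MvPolynomial (Fin m) ℝ}
    (hq : q ∈ harmPoly m k) : linSubst A q ∈ harmPoly m k := by
  obtain ⟨h1, h2⟩ := mem_harmPoly.mp hq
  refine mem_harmPoly.mpr ⟨?_, ?_⟩
  · have := h1.aeval (fun j => ∑ i, C (A j i) * X i) (n := 1) fun j =>
      IsHomogeneous.sum _ _ _ fun i _ => by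
        simpa using (isHomogeneous_C (Fin m) (A j i)).mul (isHomogeneous_X ℝ i)
    simpa [linSubst] using this
  · simp only [pderiv_linSubst, map_sum, pderiv_C_mul]
    have : ∀ i j, C (A j i) * ∑ l, C (A l i) * linSubst A (pderiv l (pderiv j q))
        = ∑ l, C (A j i * A l i) * linSubst A (pderiv l (pderiv j q)) := fun i j => by
      rw [Finset.mul_sum]
      exact Finset.sum_congr rfl fun l _ => by rw [C_mul]; ring
    simp only [this]
    rw [Finset.sum_comm]
    have h3 : ∀ j, ∑ i, ∑ l, C (A j i * A l i) * linSubst A (pderiv l (pderiv j q))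
        = linSubst A (pderiv j (pderiv j q)) := fun j => by
      rw [Finset.sum_comm]
      simp only [← Finset.sum_mul, ← map_sum, hA]
      simp [Finset.sum_ite_eq, apply_ite, ite_mul]
    simp only [h3, ← map_sum, h2, map_zero]

lemma eval_map_linSubst {m : ℕ} {S : Type*} [CommRing S] (κ : ℝ →+* S) (A : Fin m → Fin m → ℝ)
    (q : MvPolynomial (Fin m) ℝ) (ν : Fin m → S) :
    eval ν (MvPolynomial.map κ (linSubst A q))
      = eval (fun j => ∑ i, κ (A j i) * ν i) (MvPolynomial.map κ q) := by
  induction q using MvPolynomial.induction_on with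
  | C a => simp [linSubst]
  | add p q hp hq => simp only [map_add, hp, hq]
  | mul_X p l hp =>
    have hX : linSubst A (X l) = ∑ i, C (A l i) * X i := aeval_X _ l
    rw [map_mul, map_mul, map_mul, map_mul, map_mul, hp, hX, map_X, eval_X, map_sum, map_sum]
    simp only [map_mul, map_C, map_X, eval_C, eval_X]

/-- The matrix of the reflection in `ζ`. -/
def reflMat {m : ℕ} (ζ : Evec m) (j i : Fin m) : ℝ := (if j = i then 1 else 0) - 2 * ζ j * ζ i

lemma reflMat_orthogonal {m : ℕ} {ζ : Evec m} (hζ : ‖ζ‖ = 1) (j l : Fin m) :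
    ∑ i, reflMat ζ j i * reflMat ζ l i = if j = l then 1 else 0 := by
  have h1 : ∑ i, ζ i * ζ i = 1 := by
    have := EuclideanSpace.real_norm_sq_eq ζ
    rw [hζ, one_pow] at this
    rw [this]
    exact Finset.sum_congr rfl fun i _ => (sq _).symm
  have h2 : ∀ i, reflMat ζ j i * reflMat ζ l i
      = (if j = i then (if l = i then 1 else 0) else 0) - (if j = i then 2 * ζ l * ζ i else 0)
        - (if l = i then 2 * ζ j * ζ i else 0) + 4 * ζ j * ζ l * (ζ i * ζ i) := fun i => by
    unfold reflMat
    split_ifs <;> ring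
  simp only [h2, Finset.sum_add_distrib, Finset.sum_sub_distrib, Finset.sum_ite_eq,
    Finset.mem_univ, if_true, ← Finset.mul_sum, h1]
  simp only [eq_comm (a := l)]
  ring

lemma sum_reflMat_mul {m : ℕ} (ζ : Evec m) (ν : Fin m → ℂ) (j : Fin m) :
    ∑ i, algebraMap ℝ ℂ (reflMat ζ j i) * ν i = creflv ζ ν j := by
  have h : ∀ i, algebraMap ℝ ℂ (reflMat ζ j i) * ν i
      = (if j = i then ν i else 0) - 2 * (ζ j : ℂ) * (ν i * (ζ i : ℂ)) := fun i => by
    unfold reflMat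
    split_ifs <;> simp <;> ring
  simp only [h, Finset.sum_sub_distrib, Finset.sum_ite_eq, Finset.mem_univ, if_true,
    ← Finset.mul_sum, creflv]
  ring

lemma sum_reflMat_mul_real {m : ℕ} {ζ : Evec m} (hζ : ‖ζ‖ = 1) (ν : Evec m) (j : Fin m) :
    ∑ i, reflMat ζ j i * ν i = reflv ζ ν j := by
  have h : ∀ i, reflMat ζ j i * ν i
      = (if j = i then ν i else 0) - 2 * ζ j * (ν i * ζ i) := fun i => by
    unfold reflMat
    split_ifs <;> ring
  have hin : ⟪ζ, ν⟫ = ∑ i, ν i * ζ i := by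
    simp [PiLp.inner_apply]
  simp only [h, Finset.sum_sub_distrib, Finset.sum_ite_eq, Finset.mem_univ, if_true,
    ← Finset.mul_sum, reflv, hζ, hin]
  simp
  ring

namespace HarmBasis

variable {m k : ℕ} (B : HarmBasis m k)

/-- The matrix coefficients of the reflections acting on harmonic polynomials. -/
def reflCoef (b c : Fin B.n) (ζ : Evec m) : ℝ :=
  B.coef c fun v => eval (fun i => v i) (linSubst (reflMat ζ) (B.q b))

lemma continuous_reflCoef (b c : Fin B.n) : Continuous (B.reflCoef b c) := by
  refine continuous_finsetSum _ fun u _ => continuous_const.mul ?_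
  have h : ∀ ζ : Evec m, eval (fun i => u.1 i) (linSubst (reflMat ζ) (B.q b))
      = eval (fun j => ∑ i, reflMat ζ j i * u.1 i) (B.q b) := fun ζ => by
    have := eval_map_linSubst (RingHom.id ℝ) (reflMat ζ) (B.q b) fun i => u.1 i
    simpa only [MvPolynomial.map_id, RingHom.id_apply] using this
  simp only [h]
  refine (MvPolynomial.continuous_eval (B.q b)).comp (continuous_pi fun j => ?_)
  unfold reflMat
  fun_prop

lemma linSubst_reflMat {ζ : Evec m} (hζ : ‖ζ‖ = 1) (b : Fin B.n) :
    linSubst (reflMat ζ) (B.q b) = ∑ c, B.reflCoef b c ζ • B.q c :=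
  B.expand _ (linSubst_mem_harmPoly (reflMat_orthogonal hζ) (B.q_mem b))

lemma eval_creflv {ζ : Evec m} (hζ : ‖ζ‖ = 1) (b : Fin B.n) (ν : Fin m → ℂ) :
    eval (creflv ζ ν) (MvPolynomial.map (algebraMap ℝ ℂ) (B.q b))
      = ∑ c, (B.reflCoef b c ζ : ℂ) * eval ν (MvPolynomial.map (algebraMap ℝ ℂ) (B.q c)) := by
  have h := eval_map_linSubst (algebraMap ℝ ℂ) (reflMat ζ) (B.q b) ν
  simp only [sum_reflMat_mul] at h
  change eval (fun j => creflv ζ ν j) _ = _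
  rw [← h, B.linSubst_reflMat hζ, map_sum, map_sum]
  refine Finset.sum_congr rfl fun c _ => ?_
  rw [smul_eq_C_mul, map_mul, map_mul, map_C, eval_C]
  rfl

lemma eval_reflv {ζ : Evec m} (hζ : ‖ζ‖ = 1) (b : Fin B.n) (ν : Evec m) :
    eval (fun i => reflv ζ ν i) (B.q b)
      = ∑ c, B.reflCoef b c ζ * eval (fun i => ν i) (B.q c) := by
  have h := eval_map_linSubst (RingHom.id ℝ) (reflMat ζ) (B.q b) fun i => ν i
  simp only [MvPolynomial.map_id, RingHom.id_apply, sum_reflMat_mul_real hζ] at h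
  rw [← h, B.linSubst_reflMat hζ, map_sum]
  exact Finset.sum_congr rfl fun c _ => by rw [smul_eval]

/-- The coefficients of the reflected spherical mean. -/
def meanCoef (ψ : Fin B.n → Evec m → ℝ) (t : ℝ) (c : Fin B.n) : ℝ :=
  ∫ ζ, ∑ b, ψ b (t • ζ) * B.reflCoef b c ζ ∂(sphereM m)

lemma moment_smoothPoly {ψ : Fin B.n → Evec m → ℝ} (hψ : ∀ b, ContDiff ℝ ∞ (ψ b)) (t : ℝ)
    (ν : Fin m → ℂ) : moment ν (smoothPoly ψ hψ B.q) t
      = ∑ c, (B.meanCoef ψ t c : ℂ) * eval ν (MvPolynomial.map (algebraMap ℝ ℂ) (B.q c)) := by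
  have hi : ∀ c, Integrable (fun ζ => ∑ b, ψ b (t • ζ) * B.reflCoef b c ζ) (sphereM m) := fun c =>
    integrable_sphereM (continuous_finsetSum _ fun b _ =>
      ((hψ b).continuous.comp (continuous_const_smul t)).mul (B.continuous_reflCoef b c))
  simp only [meanCoef, ← integral_complex_ofReal, ← integral_mul_const]
  rw [← integral_finsetSum _ fun c _ => ((hi c).ofReal.mul_const _)]
  refine integral_sphereM_congr fun ζ hζ => ?_
  rw [eval₂_smoothPoly]
  simp only [B.eval_creflv hζ, Finset.mul_sum, Complex.ofReal_sum, Complex.ofReal_mul,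
    Finset.sum_mul]
  rw [Finset.sum_comm]
  exact Finset.sum_congr rfl fun c _ => Finset.sum_congr rfl fun b _ => by ring

/-- Constancy of the coefficients of the reflected spherical mean, for smooth solutions. -/
theorem meanCoef_eq (hm : 4 < m) {ψ : Fin B.n → Evec m → ℝ} (hψ : ∀ b, ContDiff ℝ ∞ (ψ b))
    {ρ : ℝ} (h : ∀ s, ∀ x ∈ ball (0 : Evec m) ρ, ∑ b, ∑ i, ∑ j,
      pdv i (pdv j (ψ b)) x * coeff s (bosSym ((m : ℤ) + 2 * k - 2) i j (B.q b)) = 0)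
    {t : ℝ} (ht : t ∈ Set.Ioo (-ρ) ρ) (u : Evec m) :
    ∑ c, B.meanCoef ψ t c * eval (fun i => u i) (B.q c)
      = ∑ c, B.meanCoef ψ 0 c * eval (fun i => u i) (B.q c) := by
  set Q : MvPolynomial (Fin m) ℝ := ∑ c, (B.meanCoef ψ t c - B.meanCoef ψ 0 c) • B.q c with hQ
  have hQm : Q ∈ harmPoly m k :=
    Submodule.sum_mem _ fun c _ => Submodule.smul_mem _ _ (B.q_mem c)
  obtain ⟨hQh, hQl⟩ := mem_harmPoly.mp hQm
  have hz : MvPolynomial.map (algebraMap ℝ ℂ) Q = 0 := by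
    refine eq_zero_of_null_cone (k := k) (by omega) (hQh.map _) ?_ fun ν hν => ?_
    · rw [plap]
      simp only [pderiv_map, ← map_sum, hQl, map_zero]
    · have hmom := moment_eq hm ν hν (isHomogeneous_smoothPoly hψ B.q_mem)
        (harmonic_smoothPoly hψ B.q_mem) (coeff_bos_smoothPoly_mem hψ ν hν _ h) ht
      rw [B.moment_smoothPoly, B.moment_smoothPoly, ← sub_eq_zero, ← Finset.sum_sub_distrib]
        at hmom
      rw [hQ, map_sum, map_sum]
      refine Eq.trans (Finset.sum_congr rfl fun c _ => ?_) hmom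
      rw [smul_eq_C_mul, map_mul, map_mul, map_C, eval_C, ← sub_mul, map_sub]
      rfl
  have hQ0 : Q = 0 := map_injective _ (algebraMap ℝ ℂ).injective (by rw [hz, map_zero])
  have := congrArg (eval fun i => u i) hQ0
  rw [hQ, map_sum, map_zero] at this
  rw [← sub_eq_zero, ← Finset.sum_sub_distrib]
  refine Eq.trans ?_ this
  exact Finset.sum_congr rfl fun c _ => by rw [smul_eval]; ring

end HarmBasis

end ReflectionExpansion

section MeanValue

open MvPolynomial
open scoped ContDiff

lemma norm_reflv {m : ℕ} {ζ : Evec m} (hζ : ‖ζ‖ = 1) (ν : Evec m) : ‖reflv ζ ν‖ = ‖ν‖ := by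
  rw [← sq_eq_sq₀ (norm_nonneg _) (norm_nonneg _), reflv, norm_sub_sq_real, inner_smul_right,
    norm_smul, hζ, real_inner_comm ζ ν, mul_one, Real.norm_eq_abs, sq_abs]
  ring

lemma exists_continuous_extension {m : ℕ} {g : Evec m → ℝ} {s : Set (Evec m)} (hs : IsClosed s)
    (hg : ContinuousOn g s) : ∃ G : Evec m → ℝ, Continuous G ∧ Set.EqOn G g s := by
  obtain ⟨G, hG⟩ := ContinuousMap.exists_restrict_eq hs ⟨s.domRestrict g, hg.domRestrict⟩
  exact ⟨G, G.continuous, fun x hx => congrArg (fun h : C(s, ℝ) => h ⟨x, hx⟩) hG⟩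

/-- The reflected spherical mean of a single harmonic polynomial. -/
lemma integral_eval_reflv {m k : ℕ} {F : MvPolynomial (Fin m) ℝ} (hF : F ∈ harmPoly m k)
    (ν : Evec m) : ((m : ℝ) + 2 * k - 2) * ∫ ζ, eval (fun i => reflv ζ ν i) F ∂(sphereM m)
      = ((m : ℝ) - 2) * (omegaS m * eval (fun i => ν i) F) := by
  obtain ⟨h1, h2⟩ := mem_harmPoly.mp hF
  have key : ∀ y : Fin m → ℝ, eval (fun i => (y i : ℂ)) (MvPolynomial.map (algebraMap ℝ ℂ) F)
      = ((eval y F : ℝ) : ℂ) := fun y => by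
    rw [eval_map]
    exact (eval₂_comp_left (algebraMap ℝ ℂ) (RingHom.id ℝ) y F).symm
  have h := integral_eval_creflv (fun i => ((ν i : ℝ) : ℂ)) (h1.map (algebraMap ℝ ℂ))
    (by simp only [pderiv_map, ← map_sum, h2, map_zero])
  have h_int : ∫ ζ, eval (creflv ζ fun i => ((ν i : ℝ) : ℂ)) (MvPolynomial.map (algebraMap ℝ ℂ) F)
      ∂(sphereM m) = ((∫ ζ, eval (fun i => reflv ζ ν i) F ∂(sphereM m) : ℝ) : ℂ) := by
    rw [← integral_complex_ofReal]
    refine integral_sphereM_congr fun ζ hζ => ?_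
    rw [← key]
    refine congrArg (fun z => eval z _) (_root_.funext fun j => ?_)
    rw [← sum_reflMat_mul, ← sum_reflMat_mul_real hζ]
    simp
  rw [h_int, key] at h
  exact_mod_cast h

namespace HarmBasis

variable {m k : ℕ} (B : HarmBasis m k)

lemma integrable_meanCoef {ψ : Fin B.n → Evec m → ℝ} (hψ : ∀ b, Continuous (ψ b)) (t : ℝ)
    (c : Fin B.n) :
    Integrable (fun ζ => ∑ b, ψ b (t • ζ) * B.reflCoef b c ζ) (sphereM m) :=
  integrable_sphereM (continuous_finsetSum _ fun b _ =>
    ((hψ b).comp (continuous_const_smul t)).mul (B.continuous_reflCoef b c))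

lemma sum_meanCoef_mul {ψ : Fin B.n → Evec m → ℝ} (hψ : ∀ b, Continuous (ψ b)) (t : ℝ)
    (u : Evec m) : ∑ c, B.meanCoef ψ t c * eval (fun i => u i) (B.q c)
      = ∫ ζ, ∑ b, ψ b (t • ζ) * eval (fun i => reflv ζ u i) (B.q b) ∂(sphereM m) := by
  simp only [meanCoef, ← integral_mul_const]
  rw [← integral_finsetSum _ fun c _ => ((B.integrable_meanCoef hψ t c).mul_const _)]
  refine integral_sphereM_congr fun ζ hζ => ?_
  simp only [B.eval_reflv hζ, Finset.mul_sum, Finset.sum_mul]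
  rw [Finset.sum_comm]
  exact Finset.sum_congr rfl fun b _ => Finset.sum_congr rfl fun c _ => by ring

lemma abs_meanCoef_sub_le {ψ χ : Fin B.n → Evec m → ℝ} (hψ : ∀ b, Continuous (ψ b))
    (hχ : ∀ b, Continuous (χ b)) {t s ε : ℝ}
    (h : ∀ b (ζ : Evec m), ‖ζ‖ = 1 → |ψ b (t • ζ) - χ b (s • ζ)| ≤ ε) (c : Fin B.n) :
    |B.meanCoef ψ t c - B.meanCoef χ s c| ≤ ε * ∫ ζ, ∑ b, |B.reflCoef b c ζ| ∂(sphereM m) := by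
  rw [meanCoef, meanCoef, ← integral_sub (B.integrable_meanCoef hψ t c)
    (B.integrable_meanCoef hχ s c), ← integral_const_mul]
  refine norm_integral_le_of_norm_le (f := fun ζ => ∑ b, ψ b (t • ζ) * B.reflCoef b c ζ
    - ∑ b, χ b (s • ζ) * B.reflCoef b c ζ) ?_ ?_
  · exact integrable_sphereM (continuous_const.mul (continuous_finsetSum _ fun b _ =>
      (B.continuous_reflCoef b c).abs))
  · filter_upwards [ae_norm_eq_one m] with ζ hζ
    rw [← Finset.sum_sub_distrib, Finset.mul_sum]
    refine (norm_sum_le _ _).trans (Finset.sum_le_sum fun b _ => ?_)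
    rw [← sub_mul, Real.norm_eq_abs, abs_mul]
    exact mul_le_mul_of_nonneg_right (h b ζ hζ) (abs_nonneg _)

/-- The reflected spherical mean over the boundary sphere equals the one at the centre. -/
theorem sum_meanCoef_boundary (hm : 4 < m) {φ Φ : Fin B.n → Evec m → ℝ} {a : Evec m} {r : ℝ}
    (hr : 0 < r) (hφ : ∀ b, ContDiffOn ℝ 2 (φ b) (ball a r))
    (hpde : ∀ s, ∀ x ∈ ball a r, ∑ b, ∑ i, ∑ j,
      pdv i (pdv j (φ b)) x * coeff s (bosSym ((m : ℤ) + 2 * k - 2) i j (B.q b)) = 0)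
    (hΦ : ∀ b, Continuous (Φ b)) (hΦφ : ∀ b, ∀ x ∈ closedBall 0 r, Φ b x = φ b (a + x))
    (u : Evec m) :
    ∑ c, B.meanCoef Φ r c * eval (fun i => u i) (B.q c)
      = ∑ c, B.meanCoef Φ 0 c * eval (fun i => u i) (B.q c) := by
  set K : ℝ := ∑ c, (∫ ζ, ∑ b, |B.reflCoef b c ζ| ∂(sphereM m))
    * |eval (fun i => u i) (B.q c)| with hK
  have hK0 : 0 ≤ K := Finset.sum_nonneg fun c _ => mul_nonneg
    (integral_nonneg fun ζ => Finset.sum_nonneg fun b _ => abs_nonneg _) (abs_nonneg _)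
  have hcomp : ∀ {ψ χ : Fin B.n → Evec m → ℝ} {t s ε : ℝ}, (∀ b, Continuous (ψ b)) →
      (∀ b, Continuous (χ b)) →
      (∀ b (ζ : Evec m), ‖ζ‖ = 1 → |ψ b (t • ζ) - χ b (s • ζ)| ≤ ε) →
      dist (∑ c, B.meanCoef ψ t c * eval (fun i => u i) (B.q c))
        (∑ c, B.meanCoef χ s c * eval (fun i => u i) (B.q c)) ≤ ε * K := by
    intro ψ χ t s ε hψ hχ h
    rw [Real.dist_eq, ← Finset.sum_sub_distrib, hK, Finset.mul_sum]
    refine (Finset.abs_sum_le_sum_abs _ _).trans (Finset.sum_le_sum fun c _ => ?_)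
    rw [← sub_mul, abs_mul, ← mul_assoc]
    exact mul_le_mul_of_nonneg_right (B.abs_meanCoef_sub_le hψ hχ h c) (abs_nonneg _)
  refine eq_of_forall_dist_le fun ε₀ hε₀ => ?_
  set ε : ℝ := ε₀ / (3 * K + 1) with hεdef
  have hε : 0 < ε := by positivity
  have hunif : ∀ b, ∃ δ > 0, ∀ x ∈ closedBall (0 : Evec m) r, ∀ y ∈ closedBall (0 : Evec m) r,
      dist x y < δ → dist (Φ b x) (Φ b y) < ε := fun b =>
    Metric.uniformContinuousOn_iff.mp ((isCompact_closedBall (0 : Evec m) r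
      ).uniformContinuousOn_of_continuous (hΦ b).continuousOn) ε hε
  choose δ hδ0 hδ using hunif
  obtain ⟨δ', hδ'0, hδ'⟩ : ∃ δ' > 0, ∀ b, δ' ≤ δ b := by
    rcases isEmpty_or_nonempty (Fin B.n) with he | he
    · exact ⟨1, one_pos, fun b => he.elim b⟩
    · obtain ⟨b₀, hb₀⟩ := Finite.exists_min δ
      exact ⟨δ b₀, hδ0 b₀, hb₀⟩
  obtain ⟨t, ht1, ht2⟩ : ∃ t, max 0 (r - δ') < t ∧ t < r :=
    exists_between (max_lt hr (by linarith))
  have ht0 : 0 < t := (le_max_left _ _).trans_lt ht1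
  have htδ : r - δ' < t := (le_max_right _ _).trans_lt ht1
  obtain ⟨ρ, hρ1, hρ2⟩ := exists_between ht2
  obtain ⟨ψ, hψs, hψa, hψr⟩ := exists_smooth_approx hφ (ht0.trans hρ1) hρ2 hε
  have hψΦ : ∀ b, ∀ x ∈ ball (0 : Evec m) ρ, |ψ b x - Φ b x| ≤ ε := fun b x hx => by
    rw [hΦφ b x ((ball_subset_ball hρ2.le).trans ball_subset_closedBall hx)]
    exact hψa b x hx
  have hmean := B.meanCoef_eq hm hψs (fun s x hx => hψr _ (hpde s) x hx)
    (t := t) ⟨by linarith, hρ1⟩ u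
  have d1 := hcomp (ψ := Φ) (χ := Φ) (t := r) (s := t) (ε := ε) hΦ hΦ fun b ζ hζ => by
    rw [← Real.dist_eq]
    refine (hδ b _ ?_ _ ?_ ?_).le
    · rw [mem_closedBall_zero_iff, norm_smul, hζ, mul_one, Real.norm_of_nonneg hr.le]
    · rw [mem_closedBall_zero_iff, norm_smul, hζ, mul_one, Real.norm_of_nonneg ht0.le]
      exact ht2.le
    · rw [dist_eq_norm, ← sub_smul, norm_smul, hζ, mul_one, Real.norm_of_nonneg (by linarith)]
      linarith [hδ' b]
  have d2 := hcomp (ψ := Φ) (χ := ψ) (t := t) (s := t) (ε := ε) hΦ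
    (fun b => (hψs b).continuous) fun b ζ hζ => by
      rw [abs_sub_comm]
      refine hψΦ b _ ?_
      rwa [mem_ball_zero_iff, norm_smul, hζ, mul_one, Real.norm_of_nonneg ht0.le]
  have d3 := hcomp (ψ := ψ) (χ := Φ) (t := 0) (s := 0) (ε := ε)
    (fun b => (hψs b).continuous) hΦ fun b ζ _ => by
      refine hψΦ b _ ?_
      rw [zero_smul]
      exact mem_ball_self (ht0.trans hρ1)
  rw [hmean] at d2
  have h3 : ε * K + ε * K + ε * K ≤ ε₀ := by
    have : ε₀ = ε * (3 * K + 1) := by rw [hεdef]; field_simp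
    rw [this]
    linarith
  exact ((dist_triangle4 _ _ _ _).trans (add_le_add (add_le_add d1 d2) d3)).trans h3

end HarmBasis

theorem mean_value_sphere {m k : ℕ} (hm : 4 < m) {a : Evec m} {r : ℝ} (hr : 0 < r)
    {f : Evec m → Evec m → ℝ} (hreg : C2Hk m k (ball a r) f)
    (hc : ContinuousOn (fun q : Evec m × Evec m => f q.1 q.2)
      (closedBall a r ×ˢ closedBall (0 : Evec m) 1))
    (hD : ∀ x ∈ ball a r, ∀ u ∈ ball (0 : Evec m) 1, Dk m k f x u = 0) {ν : Evec m}
    (hν : ‖ν‖ < 1) :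
    f a ν = cmk m k / 2 * ∫ ζ, f (a + r • ζ) (reflv ζ ν) ∂(sphereM m) := by
  obtain ⟨B⟩ := nonempty_harmBasis m k
  have hsub : ∀ x ∈ closedBall (0 : Evec m) r, a + x ∈ closedBall a r := fun x hx => by
    rw [mem_closedBall_iff_norm, add_sub_cancel_left]
    simpa using hx
  choose Φ hΦ hΦφ using fun b => exists_continuous_extension isClosed_closedBall
    ((B.continuousOn_coef hc b).comp (f := fun x => a + x) (by fun_prop) hsub)
  have hpde : ∀ s, ∀ x ∈ ball a r, ∑ b, ∑ i, ∑ j, pdv i (pdv j fun x => B.coef b (f x)) x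
      * coeff s (bosSym ((m : ℤ) + 2 * k - 2) i j (B.q b)) = 0 := fun s x hx => by
    have := congrArg (coeff s) (B.sum_bosSym_eq_zero hm hreg hD hx)
    simpa only [coeff_sum, coeff_C_mul, coeff_zero] using this
  have h := B.sum_meanCoef_boundary hm hr (B.contDiffOn_coef hreg) hpde hΦ
    (fun b x hx => hΦφ b hx) ν
  rw [B.sum_meanCoef_mul hΦ, B.sum_meanCoef_mul hΦ] at h
  have hf : ∀ x ∈ closedBall (0 : Evec m) r, ∀ u ∈ closedBall (0 : Evec m) 1,
      f (a + x) u = ∑ b, Φ b x * eval (fun i => u i) (B.q b) := fun x hx u hu => by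
    rw [B.expand_closedBall hr hreg hc (hsub x hx) hu]
    exact Finset.sum_congr rfl fun b _ => by rw [hΦφ b hx]; rfl
  have hl : ∫ ζ, f (a + r • ζ) (reflv ζ ν) ∂(sphereM m)
      = ∫ ζ, ∑ b, Φ b (r • ζ) * eval (fun i => reflv ζ ν i) (B.q b) ∂(sphereM m) :=
    integral_sphereM_congr fun ζ hζ => hf _
      (by rw [mem_closedBall_zero_iff, norm_smul, hζ, mul_one, Real.norm_of_nonneg hr.le]) _
      (by rw [mem_closedBall_zero_iff, norm_reflv hζ]; exact hν.le)
  set F : MvPolynomial (Fin m) ℝ := ∑ b, Φ b 0 • B.q b with hF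
  have hFm : F ∈ harmPoly m k :=
    Submodule.sum_mem _ fun b _ => Submodule.smul_mem _ _ (B.q_mem b)
  have hFe : ∀ y : Fin m → ℝ, eval y F = ∑ b, Φ b 0 * eval y (B.q b) := fun y => by
    rw [hF, map_sum]
    exact Finset.sum_congr rfl fun b _ => by rw [smul_eval]
  have hfa : f a ν = eval (fun i => ν i) F := by
    have := hf 0 (mem_closedBall_self hr.le) ν (by rw [mem_closedBall_zero_iff]; exact hν.le)
    rwa [add_zero, ← hFe] at this
  have h0 := integral_eval_reflv hFm ν
  simp only [zero_smul, ← hFe] at h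
  have hm' : (4 : ℝ) < m := by exact_mod_cast hm
  have hk' : (0 : ℝ) ≤ k := Nat.cast_nonneg k
  have hω := omegaS_pos (m := m) (by omega)
  have hm2 : (0 : ℝ) < (m : ℝ) - 2 := by linarith
  rw [hl, h, hfa, cmk]
  field_simp
  linear_combination -h0

end MeanValue

end BosonicMV

/-- mean-value property, sphere version, for null solutions of the
bosonic Laplacian, `m > 4`. -/
theorem stmt_13 (m k : ℕ) (hm : 4 < m) (hk : 1 ≤ k)
    (a : Evec m) (r : ℝ) (hr : 0 < r) (f : Evec m → Evec m → ℝ)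
    (hreg : C2Hk m k (ball a r) f)
    (hc : ContinuousOn (fun q : Evec m × Evec m => f q.1 q.2)
      (closedBall a r ×ˢ closedBall (0 : Evec m) 1))
    (hD : ∀ x ∈ ball a r, ∀ u ∈ ball (0 : Evec m) 1, Dk m k f x u = 0) :
    ∀ ν : Evec m, ‖ν‖ < 1 →
      f a ν = (cmk m k / 2) * ∫ ζ, f (a + r • ζ) (reflv ζ ν) ∂(sphereM m) := by
  intro ν hν
  exact BosonicMV.mean_value_sphere hm hr hreg hc hD hν
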